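/- Let f ∈ BV(X). Then there exist Lipschitz functions f_i : X → ℝ and bounded Lipschitz functions v_i : X → [0,∞) such that v_i is an upper gradient of f_i for each i, f_i → f in L¹_loc(X), and the measures v_i·μ converge weakly* to the variation measure of f; in particular, for every open set U ⊆ X, V(f,U) ≤ liminf_{i→∞} ∫_U v_i dμ, and for every closed set F ⊆ X, limsup_{i→∞} ∫_F v_i dμ ≤ V(f,F). -/

import Mathlib

open MeasureTheory Metric Filter Set Topology
open scoped NNReal ENNReal

noncomputable section

universe u

/-- The measure `μ` is doubling with constant `Cd`:
`0 < μ(B(x,2r)) ≤ Cd·μ(B(x,r)) < ∞` for every `x` and every `r > 0`. -/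
def IsDoublingWith {X : Type u} [PseudoMetricSpace X] [MeasurableSpace X]
    (μ : Measure X) (Cd : ℝ≥0) : Prop :=
  ∀ (x : X) (r : ℝ), 0 < r →
    0 < μ (ball x (2 * r)) ∧
      μ (ball x (2 * r)) ≤ (Cd : ℝ≥0∞) * μ (ball x r) ∧
      (Cd : ℝ≥0∞) * μ (ball x r) < ⊤

/-- `X` is a geodesic space: any two points are joined by a unit-speed geodesic. -/
def IsGeodesic (X : Type u) [PseudoMetricSpace X] : Prop :=
  ∀ x y : X, ∃ γ : ℝ → X,
    LipschitzOnWith 1 γ (Icc 0 (dist x y)) ∧ γ 0 = x ∧ γ (dist x y) = y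

/-- `g` is an upper gradient of `u`: for every `L ≥ 0` and every `1`-Lipschitz curve
`γ : [0,L] → X`, `|u(γ 0) − u(γ L)| ≤ ∫₀^L g(γ t) dt`. -/
def IsUpperGradientOf {X : Type u} [PseudoMetricSpace X] (g u : X → ℝ) : Prop :=
  ∀ L : ℝ, 0 ≤ L → ∀ γ : ℝ → X, LipschitzOnWith 1 γ (Icc 0 L) →
    |u (γ 0) - u (γ L)| ≤ ∫ t in (0:ℝ)..L, g (γ t)

/-- The lower pointwise Lipschitz constant
`lip u (x) = liminf_{r→0} r⁻¹ sup_{y ∈ B(x,r)} |u y − u x|`. -/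
def lipConst {X : Type u} [PseudoMetricSpace X] (u : X → ℝ) (x : X) : ℝ≥0∞ :=
  Filter.liminf
    (fun r : ℝ => ⨆ y ∈ ball x r, ENNReal.ofReal (|u y - u x| / r)) (𝓝[>] (0:ℝ))

/-- `u` is locally Lipschitz on `W`: Lipschitz on every closed bounded subset of `W`. -/
def LocallyLipschitzOnSet {X : Type u} [PseudoMetricSpace X] (u : X → ℝ) (W : Set X) : Prop :=
  ∀ K : Set X, IsClosed K → Bornology.IsBounded K → K ⊆ W →
    ∃ L : ℝ≥0, LipschitzOnWith L u K

/-- `u i → f` in `L¹_loc(W)`. -/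
def TendstoL1loc {X : Type u} [PseudoMetricSpace X] [MeasurableSpace X]
    (μ : Measure X) (u : ℕ → X → ℝ) (f : X → ℝ) (W : Set X) : Prop :=
  ∀ K : Set X, IsClosed K → Bornology.IsBounded K → K ⊆ W →
    Tendsto (fun i => ∫⁻ x in K, ENNReal.ofReal |u i x - f x| ∂μ) atTop (𝓝 0)

/-- Total variation `V(f,W)` of `f` on an open set `W`:
the infimum over sequences of locally Lipschitz functions converging to `f` in `L¹_loc(W)`
of the liminf of `∫_W lip u_i dμ`. -/
def totVarOn {X : Type u} [PseudoMetricSpace X] [MeasurableSpace X]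
    (μ : Measure X) (f : X → ℝ) (W : Set X) : ℝ≥0∞ :=
  ⨅ (us : ℕ → X → ℝ) (_ : ∀ i, LocallyLipschitzOnSet (us i) W)
    (_ : TendstoL1loc μ us f W),
    Filter.liminf (fun i => ∫⁻ x in W, lipConst (us i) x ∂μ) atTop

/-- Total variation `V(f,A)` of `f` on an arbitrary set `A`:
infimum of `V(f,W)` over open `W ⊇ A`. -/
def totVarSet {X : Type u} [PseudoMetricSpace X] [MeasurableSpace X]
    (μ : Measure X) (f : X → ℝ) (A : Set X) : ℝ≥0∞ :=
  ⨅ (W : Set X) (_ : IsOpen W) (_ : A ⊆ W), totVarOn μ f W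

/-- `f` is of bounded variation: locally integrable and `V(f,X) < ∞`. -/
def IsBV {X : Type u} [MetricSpace X] [MeasurableSpace X]
    (μ : Measure X) (f : X → ℝ) : Prop :=
  LocallyIntegrable f μ ∧ totVarOn μ f Set.univ < ⊤

/-- `(X,d,μ)` supports a `1`-Poincaré inequality with constant `CP`. -/
def SupportsPoincare {X : Type u} [MetricSpace X] [MeasurableSpace X]
    (μ : Measure X) (CP : ℝ) : Prop :=
  ∀ u : X → ℝ, LocallyLipschitzOnSet u Set.univ →
    ∀ g : X → ℝ, (∀ x, 0 ≤ g x) → Measurable g → IsUpperGradientOf g u →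
      ∀ (x : X) (r : ℝ), 0 < r →
        (⨍ y in ball x r, |u y - (⨍ z in ball x r, u z ∂μ)| ∂μ) ≤
          CP * r * (⨍ y in ball x r, g y ∂μ)

/-- Standing assumptions: a complete geodesic metric measure space with at least two
points, whose measure is doubling and supports a 1-Poincaré inequality. -/
def GoodSpace (X : Type u) [MetricSpace X] [MeasurableSpace X]
    (μ : Measure X) (Cd : ℝ≥0) (CP : ℝ) : Prop :=
  Nontrivial X ∧ CompleteSpace X ∧ IsGeodesic X ∧
    IsDoublingWith μ Cd ∧ SupportsPoincare μ CP

/-- The codimension-1 Hausdorff measure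
`𝓗(A) = sup_{δ>0} inf { Σ μ(B_i)/r_i : 0 < r_i ≤ δ, A ⊆ ⋃ B_i }`,
the infimum over countable coverings of `A` by balls (balls of nonpositive radius
are empty and contribute `0`). -/
def codimOneH {X : Type u} [PseudoMetricSpace X] [MeasurableSpace X]
    (μ : Measure X) (A : Set X) : ℝ≥0∞ :=
  ⨆ (δ : ℝ) (_ : 0 < δ),
    ⨅ (c : ℕ → X) (r : ℕ → ℝ) (_ : ∀ i, r i ≤ δ)
      (_ : A ⊆ ⋃ i, ball (c i) (r i)),
      ∑' i, if 0 < r i then μ (ball (c i) (r i)) / ENNReal.ofReal (r i) else 0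

/-- The measure theoretic boundary `∂*E`. -/
def measBdry {X : Type u} [PseudoMetricSpace X] [MeasurableSpace X]
    (μ : Measure X) (E : Set X) : Set X :=
  {x : X |
    0 < Filter.limsup (fun r : ℝ => μ (E ∩ ball x r) / μ (ball x r)) (𝓝[>] (0:ℝ)) ∧
    0 < Filter.limsup (fun r : ℝ => μ (Eᶜ ∩ ball x r) / μ (ball x r)) (𝓝[>] (0:ℝ))}

/-- `A` has density `0` at `x`. -/
def DensityZeroAt {X : Type u} [PseudoMetricSpace X] [MeasurableSpace X]
    (μ : Measure X) (A : Set X) (x : X) : Prop :=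
  Tendsto (fun r : ℝ => μ (A ∩ ball x r) / μ (ball x r)) (𝓝[>] (0:ℝ)) (𝓝 0)

/-- `A` has density `1` at `x`. -/
def DensityOneAt {X : Type u} [PseudoMetricSpace X] [MeasurableSpace X]
    (μ : Measure X) (A : Set X) (x : X) : Prop :=
  Tendsto (fun r : ℝ => μ (A ∩ ball x r) / μ (ball x r)) (𝓝[>] (0:ℝ)) (𝓝 1)

/-- `x` is a Lebesgue point of `u`. -/
def LebesguePointOf {X : Type u} [MetricSpace X] [MeasurableSpace X]
    (μ : Measure X) (u : X → ℝ) (x : X) : Prop :=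
  Tendsto (fun r : ℝ => ⨍ y in ball x r, |u y - u x| ∂μ) (𝓝[>] (0:ℝ)) (𝓝 0)

/-- `u` is a Borel representative whose value at each Lebesgue point equals the limit
of its ball averages. -/
def PreciseRep {X : Type u} [MetricSpace X] [MeasurableSpace X]
    (μ : Measure X) (u : X → ℝ) : Prop :=
  Measurable u ∧ ∀ (x : X) (c : ℝ),
    Tendsto (fun r : ℝ => ⨍ y in ball x r, u y ∂μ) (𝓝[>] (0:ℝ)) (𝓝 c) → u x = c

/-- The restricted maximal function `M_R ν (x) = sup_{0<r≤R} ν(B(x,r))/μ(B(x,r))`. -/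
def restrMaximal {X : Type u} [PseudoMetricSpace X] [MeasurableSpace X]
    (μ ν : Measure X) (R : ℝ) (x : X) : ℝ≥0∞ :=
  ⨆ (r : ℝ) (_ : 0 < r) (_ : r ≤ R), ν (ball x r) / μ (ball x r)

/-- `F_g(x,y)`: the infimum of `∫_γ g ds` over 1-Lipschitz curves `γ : [0,L] → Z`
joining `x` to `y` (the infimum over the empty set is `∞`). -/
def curveInf {Z : Type u} [PseudoMetricSpace Z] (g : Z → ℝ) (x y : Z) : ℝ≥0∞ :=
  ⨅ (L : ℝ) (_ : 0 ≤ L) (γ : ℝ → Z) (_ : LipschitzOnWith 1 γ (Icc 0 L))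
    (_ : γ 0 = x) (_ : γ L = y),
    ∫⁻ t in Icc (0:ℝ) L, ENNReal.ofReal (g (γ t))

/-- Weak-star convergence of measures: test against continuous, compactly
supported functions. -/
def WeakStar {Z : Type u} [MetricSpace Z] [MeasurableSpace Z]
    (ν : ℕ → Measure Z) (m : Measure Z) : Prop :=
  ∀ φ : Z → ℝ, Continuous φ → HasCompactSupport φ →
    Tendsto (fun n => ∫ x, φ x ∂(ν n)) atTop (𝓝 (∫ x, φ x ∂m))

/-- `φ ∈ BV_c(U)`: a BV function whose support is compact and contained in `U`. -/
def MemBVc {X : Type u} [MetricSpace X] [MeasurableSpace X]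
    (μ : Measure X) (φ : X → ℝ) (U : Set X) : Prop :=
  IsBV μ φ ∧ IsCompact (tsupport φ) ∧ tsupport φ ⊆ U

/-!
The liminf inequality holds for every sequence of pairs converging to `f` in `L¹_loc`, because
`lip f_i ≤ v_i`. Everything else follows from pairs with total mass `∫ v_i ≤ V(f, X) + o(1)`: mass
lost from the complement of a closed set `F` is excluded by the liminf inequality on `Fᶜ`, so at
most `V(f, W)` is left on `F`, for each open `W ⊇ F`, once `V(f, X) ≤ V(f, W) + V(f, Fᶜ)`.

Near a compact set `K`, the function `lip u` of a competitor `u` is only measurable. It is replaced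
by a lower semicontinuous majorant `g`, equal to `∞` off `K`, and `g` by an increasing sequence of
bounded Lipschitz functions `G n`. The infimum over `y ∈ K` of `u y` plus the `G n`-length of a
curve from `y` to `x` has pointwise Lipschitz constant at most `G n x`, and by Arzelà–Ascoli it
converges to `u x` on `K`, since `g` is an upper gradient of `u` on curves inside `K`.

Near infinity almost optimal gradients are not needed: averages of a truncation of `f` over balls
of a fixed radius have integrable gradients by the Poincaré inequality. Two approximations of `f`
are glued with a Lipschitz cutoff, at a cost controlled by their `L¹` distance on the transition
region. Gluing over an open cover `X = A ∪ B` gives total mass at most `V(f, A) + V(f, B) + ε`,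
hence both the required sequence and the subadditivity used above.
-/

section Doubling

variable {X : Type u} [PseudoMetricSpace X] [MeasurableSpace X] {μ : Measure X} {Cd : ℝ≥0}

theorem IsDoublingWith.measure_ball_pos (h : IsDoublingWith μ Cd) (x : X) {r : ℝ} (hr : 0 < r) :
    0 < μ (ball x r) := by
  simpa [mul_div_cancel₀] using (h x (r / 2) (half_pos hr)).1

theorem IsDoublingWith.const_ne_zero (h : IsDoublingWith μ Cd) (x : X) :
    (Cd : ℝ≥0∞) ≠ 0 := by
  have hball := h x 1 one_pos
  exact left_ne_zero_of_mul (hball.1.trans_le hball.2.1).ne'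

theorem IsDoublingWith.measure_ball_lt_top (h : IsDoublingWith μ Cd) (x : X) (r : ℝ) :
    μ (ball x r) < ⊤ := by
  rcases le_or_gt r 0 with hr | hr
  · simp [ball_eq_empty.2 hr]
  · exact ENNReal.lt_top_of_mul_ne_top_right (h x r hr).2.2.ne (h.const_ne_zero x)

theorem IsDoublingWith.isLocallyFiniteMeasure (h : IsDoublingWith μ Cd) :
    IsLocallyFiniteMeasure μ :=
  ⟨fun x ↦ ⟨ball x 1, ball_mem_nhds x one_pos, h.measure_ball_lt_top x 1⟩⟩

theorem IsDoublingWith.measure_ball_two_pow_mul_le (h : IsDoublingWith μ Cd) (x : X) {r : ℝ}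
    (hr : 0 < r) (n : ℕ) : μ (ball x (2 ^ n * r)) ≤ (Cd : ℝ≥0∞) ^ n * μ (ball x r) := by
  induction n with
  | zero => simp
  | succ n ih =>
    calc μ (ball x (2 ^ (n + 1) * r)) = μ (ball x (2 * (2 ^ n * r))) := by rw [pow_succ', mul_assoc]
      _ ≤ Cd * μ (ball x (2 ^ n * r)) := (h x (2 ^ n * r) (by positivity)).2.1
      _ ≤ Cd * (Cd ^ n * μ (ball x r)) := by gcongr
      _ = Cd ^ (n + 1) * μ (ball x r) := by rw [pow_succ', mul_assoc]

theorem IsDoublingWith.measure_ball_le_of_add_dist_le (h : IsDoublingWith μ Cd) {x y : X}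
    {r s : ℝ} (hr : 0 < r) (n : ℕ) (hs : s + dist x y ≤ 2 ^ n * r) :
    μ (ball x s) ≤ (Cd : ℝ≥0∞) ^ n * μ (ball y r) :=
  (measure_mono (ball_subset_ball' hs)).trans (h.measure_ball_two_pow_mul_le y hr n)

theorem IsDoublingWith.encard_le_of_isSeparated [OpensMeasurableSpace X]
    (h : IsDoublingWith μ Cd) {x : X} {R : ℝ} {δ : ℝ≥0} (hδ : 0 < δ) {C : Set X}
    (hC : C ⊆ closedBall x R) (hsep : IsSeparated δ C) {n : ℕ}
    (hn : 2 * R + δ ≤ 2 ^ n * (δ / 2)) : (C.encard : ℝ≥0∞) ≤ (Cd : ℝ≥0∞) ^ n := by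
  rcases C.eq_empty_or_nonempty with rfl | ⟨y₀, hy₀⟩
  · simp
  have hR : 0 ≤ R := dist_nonneg.trans (hC hy₀)
  have hδ' : (0 : ℝ) < δ := hδ
  have hdisj : Pairwise (Function.onFun Disjoint fun y : C ↦ ball (y : X) (δ / 2)) := by
    intro y z hyz
    have hlt : (δ : ℝ≥0∞) < edist (y : X) z := hsep y.2 z.2 (Subtype.coe_injective.ne hyz)
    rw [edist_nndist, ENNReal.coe_lt_coe, ← NNReal.coe_lt_coe, coe_nndist] at hlt
    exact ball_disjoint_ball (by linarith)
  have hsub : ⋃ y : C, ball (y : X) (δ / 2) ⊆ ball x (R + δ) :=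
    iUnion_subset fun y ↦ ball_subset_ball' (by linarith [mem_closedBall.1 (hC y.2)])
  have hmul : (C.encard : ℝ≥0∞) * μ (ball x (R + δ)) ≤ Cd ^ n * μ (ball x (R + δ)) :=
    calc (C.encard : ℝ≥0∞) * μ (ball x (R + δ)) = ∑' _ : C, μ (ball x (R + δ)) :=
          by rw [ENNReal.tsum_set_const]
      _ ≤ ∑' y : C, Cd ^ n * μ (ball (y : X) (δ / 2)) :=
          ENNReal.tsum_le_tsum fun y ↦ h.measure_ball_le_of_add_dist_le (half_pos hδ') n
            (by linarith [mem_closedBall'.1 (hC y.2)])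
      _ = Cd ^ n * ∑' y : C, μ (ball (y : X) (δ / 2)) := ENNReal.tsum_mul_left
      _ ≤ Cd ^ n * μ (ball x (R + δ)) := by
          gcongr
          exact (tsum_meas_le_meas_iUnion_of_disjoint μ (fun _ ↦ measurableSet_ball) hdisj).trans
            (measure_mono hsub)
  exact (ENNReal.mul_le_mul_iff_left (h.measure_ball_pos x (by positivity)).ne'
    (h.measure_ball_lt_top x _).ne).1 hmul

theorem IsDoublingWith.packingNumber_closedBall_ne_top [OpensMeasurableSpace X]
    (h : IsDoublingWith μ Cd) (x : X) (R : ℝ) {δ : ℝ≥0} (hδ : 0 < δ) :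
    packingNumber δ (closedBall x R) ≠ ⊤ := by
  obtain ⟨n, hn⟩ : ∃ n : ℕ, (2 * R + δ) / (δ / 2) < 2 ^ n :=
    pow_unbounded_of_one_lt _ one_lt_two
  rw [div_lt_iff₀ (by positivity)] at hn
  have hle : (packingNumber δ (closedBall x R) : ℝ≥0∞) ≤ (Cd : ℝ≥0∞) ^ n := by
    simp only [packingNumber, ENat.toENNReal_iSup, iSup_le_iff]
    exact fun C hC hsep ↦ h.encard_le_of_isSeparated hδ hC hsep hn.le
  rw [← ENat.toENNReal_ne_top]
  exact ne_top_of_le_ne_top (ENNReal.pow_ne_top ENNReal.coe_ne_top) hle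

theorem IsDoublingWith.totallyBounded_closedBall [OpensMeasurableSpace X]
    (h : IsDoublingWith μ Cd) (x : X) (R : ℝ) : TotallyBounded (closedBall x R) := by
  refine Metric.totallyBounded_iff.2 fun ε hε ↦ ?_
  lift ε to ℝ≥0 using hε.le
  have hcov : coveringNumber (ε / 2) (closedBall x R) ≠ ⊤ :=
    ne_top_of_le_ne_top (h.packingNumber_closedBall_ne_top x R (half_pos hε))
      (coveringNumber_le_packingNumber _ _)
  refine ⟨minimalCover (ε / 2) (closedBall x R), finite_minimalCover,
    (isCover_iff_subset_iUnion_closedBall.1 (isCover_minimalCover hcov)).trans ?_⟩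
  exact iUnion₂_mono fun y _ ↦ closedBall_subset_ball (by simpa using half_lt_self hε)

theorem IsDoublingWith.properSpace [OpensMeasurableSpace X] [CompleteSpace X]
    (h : IsDoublingWith μ Cd) : ProperSpace X :=
  ⟨fun x R ↦ isCompact_iff_totallyBounded_isComplete.2
    ⟨h.totallyBounded_closedBall x R, isClosed_closedBall.isComplete⟩⟩

end Doubling

section BddLipschitz

variable {X : Type u} [PseudoMetricSpace X] {u v : X → ℝ}

/-- Bounded Lipschitz functions, the class in which all approximations are constructed. -/
structure IsBddLipschitz (u : X → ℝ) : Prop where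
  lipschitz : ∃ L : ℝ≥0, LipschitzWith L u
  bdd : ∃ M : ℝ, ∀ x, |u x| ≤ M

namespace IsBddLipschitz

theorem continuous (hu : IsBddLipschitz u) : Continuous u :=
  hu.lipschitz.choose_spec.continuous

theorem const (c : ℝ) : IsBddLipschitz fun _ : X ↦ c :=
  ⟨⟨0, LipschitzWith.const c⟩, |c|, fun _ ↦ le_rfl⟩

theorem abs (hu : IsBddLipschitz u) : IsBddLipschitz fun x ↦ |u x| := by
  obtain ⟨⟨L, hL⟩, M, hM⟩ := hu
  exact ⟨⟨_, lipschitzWith_one_norm.comp hL⟩, M, fun x ↦ by rw [abs_abs]; exact hM x⟩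

theorem add (hu : IsBddLipschitz u) (hv : IsBddLipschitz v) :
    IsBddLipschitz fun x ↦ u x + v x := by
  obtain ⟨⟨L, hL⟩, M, hM⟩ := hu
  obtain ⟨⟨L', hL'⟩, M', hM'⟩ := hv
  exact ⟨⟨_, hL.add hL'⟩, M + M', fun x ↦ (abs_add_le _ _).trans (add_le_add (hM x) (hM' x))⟩

theorem sub (hu : IsBddLipschitz u) (hv : IsBddLipschitz v) :
    IsBddLipschitz fun x ↦ u x - v x := by
  obtain ⟨⟨L, hL⟩, M, hM⟩ := hu
  obtain ⟨⟨L', hL'⟩, M', hM'⟩ := hv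
  exact ⟨⟨_, hL.sub hL'⟩, M + M', fun x ↦ (abs_sub _ _).trans (add_le_add (hM x) (hM' x))⟩

theorem mul (hu : IsBddLipschitz u) (hv : IsBddLipschitz v) :
    IsBddLipschitz fun x ↦ u x * v x := by
  obtain ⟨⟨L, hL⟩, M, hM⟩ := hu
  obtain ⟨⟨L', hL'⟩, M', hM'⟩ := hv
  refine ⟨⟨M.toNNReal * L' + M'.toNNReal * L, LipschitzWith.of_dist_le_mul fun x y ↦ ?_⟩,
    M * M', fun x ↦ ?_⟩
  · have hM0 : 0 ≤ M := (abs_nonneg _).trans (hM x)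
    have hM'0 : 0 ≤ M' := (abs_nonneg _).trans (hM' x)
    have hLxy := hL.dist_le_mul x y
    have hL'xy := hL'.dist_le_mul x y
    push_cast
    rw [Real.coe_toNNReal _ hM0, Real.coe_toNNReal _ hM'0]
    rw [Real.dist_eq] at hLxy hL'xy ⊢
    calc |u x * v x - u y * v y| = |u x * (v x - v y) + v y * (u x - u y)| := by ring_nf
      _ ≤ |u x| * |v x - v y| + |v y| * |u x - u y| := by
          rw [← abs_mul, ← abs_mul]; exact abs_add_le _ _
      _ ≤ M * (L' * dist x y) + M' * (L * dist x y) := by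
          gcongr
          exacts [hM x, hM' y]
      _ = (M * L' + M' * L) * dist x y := by ring
  · rw [abs_mul]
    exact mul_le_mul (hM x) (hM' x) (abs_nonneg _) ((abs_nonneg _).trans (hM x))

end IsBddLipschitz

end BddLipschitz

section PointwiseLipschitz

variable {X : Type u} [PseudoMetricSpace X] {u v : X → ℝ} {x : X} {a b : ℝ}

/-- The upper pointwise Lipschitz constant `limsup_{y → x} |u y - u x| / dist y x` is at most `c`;
the quantifier over `ε` avoids dividing by `dist y x = 0`. -/
def PtLipLE (u : X → ℝ) (x : X) (c : ℝ) : Prop :=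
  ∀ ε > 0, ∀ᶠ y in 𝓝 x, |u y - u x| ≤ (c + ε) * dist y x

namespace PtLipLE

theorem continuousAt (h : PtLipLE u x a) : ContinuousAt u x := by
  have hlim : Tendsto (fun y ↦ (a + 1) * dist y x) (𝓝 x) (𝓝 0) := by
    have hcont : Continuous fun y ↦ (a + 1) * dist y x := by fun_prop
    simpa using hcont.tendsto x
  exact tendsto_iff_dist_tendsto_zero.2
    (squeeze_zero' (Eventually.of_forall fun _ ↦ dist_nonneg) (h 1 one_pos) hlim)

theorem add (hu : PtLipLE u x a) (hv : PtLipLE v x b) :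
    PtLipLE (fun y ↦ u y + v y) x (a + b) := by
  intro ε hε
  filter_upwards [hu (ε / 2) (half_pos hε), hv (ε / 2) (half_pos hε)] with y hy hy'
  calc |u y + v y - (u x + v x)| = |(u y - u x) + (v y - v x)| := by ring_nf
    _ ≤ |u y - u x| + |v y - v x| := abs_add_le _ _
    _ ≤ (a + b + ε) * dist y x := by linarith

theorem add_const (hu : PtLipLE u x a) (k : ℝ) : PtLipLE (fun y ↦ u y + k) x a := by
  simpa only [PtLipLE, add_sub_add_right_eq_sub] using hu

theorem sub_const (hu : PtLipLE u x a) (k : ℝ) : PtLipLE (fun y ↦ u y - k) x a := by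
  simpa only [PtLipLE, sub_sub_sub_cancel_right] using hu

theorem const_sub (hu : PtLipLE u x a) (k : ℝ) : PtLipLE (fun y ↦ k - u y) x a := by
  simpa only [PtLipLE, sub_sub_sub_cancel_left, abs_sub_comm (u x)] using hu

theorem mul (hu : PtLipLE u x a) (hv : PtLipLE v x b) :
    PtLipLE (fun y ↦ u y * v y) x (|u x| * b + a * |v x|) := by
  intro ε hε
  have hlim : Tendsto (fun δ : ℝ ↦ |u x| * (b + δ) + (a + δ) * (|v x| + δ)) (𝓝[>] 0)
      (𝓝 (|u x| * b + a * |v x|)) := by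
    have hcont : Continuous fun δ : ℝ ↦ |u x| * (b + δ) + (a + δ) * (|v x| + δ) := by fun_prop
    simpa using (hcont.tendsto 0).mono_left nhdsWithin_le_nhds
  obtain ⟨δ, hδε, hδ : 0 < δ⟩ := ((hlim.eventually_lt_const (lt_add_of_pos_right _ hε)).and
    self_mem_nhdsWithin).exists
  filter_upwards [hu δ hδ, hv δ hδ,
    hv.continuousAt.abs.eventually (gt_mem_nhds (lt_add_of_pos_right _ hδ))] with y hy hy' hvy
  calc |u y * v y - u x * v x| = |u x * (v y - v x) + (u y - u x) * v y| := by ring_nf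
    _ ≤ |u x| * |v y - v x| + |u y - u x| * |v y| := by
        rw [← abs_mul, ← abs_mul]; exact abs_add_le _ _
    _ ≤ |u x| * ((b + δ) * dist y x) + ((a + δ) * dist y x) * (|v x| + δ) :=
        add_le_add (mul_le_mul_of_nonneg_left hy' (abs_nonneg _))
          (mul_le_mul hy hvy.le (abs_nonneg _) ((abs_nonneg _).trans hy))
    _ = (|u x| * (b + δ) + (a + δ) * (|v x| + δ)) * dist y x := by ring
    _ ≤ (|u x| * b + a * |v x| + ε) * dist y x := by gcongr

theorem lipConst_le (h : PtLipLE u x a) (ha : 0 ≤ a) : lipConst u x ≤ ENNReal.ofReal a := by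
  refine ENNReal.le_of_forall_pos_le_add fun ε hε _ ↦ ?_
  obtain ⟨δ, hδ, hball⟩ := Metric.eventually_nhds_iff_ball.1 (h ε hε)
  rw [← ENNReal.ofReal_coe_nnreal, ← ENNReal.ofReal_add ha (NNReal.coe_nonneg ε)]
  refine Filter.liminf_le_of_frequently_le' (Eventually.frequently ?_)
  filter_upwards [Ioo_mem_nhdsGT hδ] with r hr
  refine iSup₂_le fun y hy ↦ ENNReal.ofReal_le_ofReal ((div_le_iff₀ hr.1).2 ?_)
  exact (hball y (ball_subset_ball hr.2.le hy)).trans (by gcongr; exact (mem_ball.1 hy).le)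

end PtLipLE

end PointwiseLipschitz

section GradPair

variable {X : Type u} [PseudoMetricSpace X]

/-- `u` and `v` are bounded Lipschitz functions, and `v ≥ 0` bounds the pointwise Lipschitz
constant of `u` everywhere; this makes `v` an upper gradient of `u`. -/
structure GradPair (u v : X → ℝ) : Prop where
  bddLipschitz_fun : IsBddLipschitz u
  bddLipschitz_grad : IsBddLipschitz v
  grad_nonneg : ∀ x, 0 ≤ v x
  ptLip : ∀ x, PtLipLE u x (v x)

theorem GradPair.continuous_fun {u v : X → ℝ} (h : GradPair u v) : Continuous u :=
  h.bddLipschitz_fun.continuous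

theorem GradPair.continuous_grad {u v : X → ℝ} (h : GradPair u v) : Continuous v :=
  h.bddLipschitz_grad.continuous

theorem GradPair.locallyLipschitzOnSet {u v : X → ℝ} (h : GradPair u v) (W : Set X) :
    LocallyLipschitzOnSet u W := fun _ _ _ _ ↦
  let ⟨L, hL⟩ := h.bddLipschitz_fun.lipschitz
  ⟨L, hL.lipschitzOnWith⟩

theorem PtLipLE.blend {φ u₁ u₂ : X → ℝ} {x : X} {c c₁ c₂ : ℝ} (hφ0 : 0 ≤ φ x) (hφ1 : φ x ≤ 1)
    (hφ : PtLipLE φ x c) (h₁ : PtLipLE u₁ x c₁) (h₂ : PtLipLE u₂ x c₂) :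
    PtLipLE (fun y ↦ φ y * u₁ y + (1 - φ y) * u₂ y) x
      (φ x * c₁ + (1 - φ x) * c₂ + c * |u₁ x - u₂ x|) := by
  -- Subtracting `u₂ x` from both functions makes the second product contribute no `c`-term.
  have hsum := ((hφ.mul (h₁.sub_const (u₂ x))).add
    ((hφ.const_sub 1).mul (h₂.sub_const (u₂ x)))).add_const (u₂ x)
  rw [abs_of_nonneg hφ0, abs_of_nonneg (sub_nonneg.2 hφ1), sub_self, abs_zero, mul_zero,
    add_zero] at hsum
  convert hsum using 1
  · ext y; ring
  · ring

theorem GradPair.blend {φ ψ u₁ v₁ u₂ v₂ : X → ℝ} (hφ : GradPair φ ψ) (hφ0 : ∀ x, 0 ≤ φ x)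
    (hφ1 : ∀ x, φ x ≤ 1) (h₁ : GradPair u₁ v₁) (h₂ : GradPair u₂ v₂) :
    GradPair (fun x ↦ φ x * u₁ x + (1 - φ x) * u₂ x)
      (fun x ↦ φ x * v₁ x + (1 - φ x) * v₂ x + ψ x * |u₁ x - u₂ x|) where
  bddLipschitz_fun := (hφ.bddLipschitz_fun.mul h₁.bddLipschitz_fun).add
    (((IsBddLipschitz.const 1).sub hφ.bddLipschitz_fun).mul h₂.bddLipschitz_fun)
  bddLipschitz_grad := ((hφ.bddLipschitz_fun.mul h₁.bddLipschitz_grad).add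
    (((IsBddLipschitz.const 1).sub hφ.bddLipschitz_fun).mul h₂.bddLipschitz_grad)).add
      (hφ.bddLipschitz_grad.mul (h₁.bddLipschitz_fun.sub h₂.bddLipschitz_fun).abs)
  grad_nonneg x := by
    have := sub_nonneg.2 (hφ1 x)
    have := hφ0 x
    have := h₁.grad_nonneg x
    have := h₂.grad_nonneg x
    have := hφ.grad_nonneg x
    positivity
  ptLip x := (hφ.ptLip x).blend (hφ0 x) (hφ1 x) (h₁.ptLip x) (h₂.ptLip x)

end GradPair

section Cutoff

/-- Truncation of the real line to `[0, 1]`. -/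
def unitClamp (t : ℝ) : ℝ := max 0 (min 1 t)

theorem unitClamp_nonneg (t : ℝ) : 0 ≤ unitClamp t := le_max_left _ _

theorem unitClamp_le_one (t : ℝ) : unitClamp t ≤ 1 := max_le zero_le_one (min_le_left _ _)

theorem unitClamp_of_nonpos {t : ℝ} (ht : t ≤ 0) : unitClamp t = 0 :=
  max_eq_left ((min_le_right _ _).trans ht)

theorem unitClamp_of_one_le {t : ℝ} (ht : 1 ≤ t) : unitClamp t = 1 := by
  rw [unitClamp, min_eq_left ht, max_eq_right zero_le_one]

/-- A piecewise linear function equal to `1` on `[0, 1]`, where `unitClamp` has slope `1`, and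
to `0` outside `(-1, 2)`. -/
def transitionWeight (t : ℝ) : ℝ := unitClamp (2 - |2 * t - 1|)

theorem transitionWeight_of_mem_Icc {t : ℝ} (ht : t ∈ Icc (0 : ℝ) 1) : transitionWeight t = 1 := by
  refine unitClamp_of_one_le ?_
  have : |2 * t - 1| ≤ 1 := abs_le.2 ⟨by linarith [ht.1], by linarith [ht.2]⟩
  linarith

theorem transitionWeight_of_le {t : ℝ} (ht : t ≤ -1) : transitionWeight t = 0 :=
  unitClamp_of_nonpos (by linarith [neg_abs_le (2 * t - 1)])

theorem transitionWeight_of_ge {t : ℝ} (ht : 2 ≤ t) : transitionWeight t = 0 :=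
  unitClamp_of_nonpos (by linarith [le_abs_self (2 * t - 1)])

variable {X : Type u} [PseudoMetricSpace X] {θ : X → ℝ} {L : ℝ≥0}

theorem IsBddLipschitz.unitClamp_comp (hθ : LipschitzWith L θ) :
    IsBddLipschitz fun x ↦ unitClamp (θ x) :=
  ⟨⟨L, (hθ.const_min 1).const_max 0⟩, 1, fun x ↦ by
    rw [abs_of_nonneg (unitClamp_nonneg _)]; exact unitClamp_le_one _⟩

theorem IsBddLipschitz.transitionWeight_comp (hθ : LipschitzWith L θ) :
    IsBddLipschitz fun x ↦ transitionWeight (θ x) := by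
  have hscale : LipschitzWith (2 * L) fun x ↦ 2 * θ x :=
    LipschitzWith.of_dist_le_mul fun x y ↦ by
      have := hθ.dist_le_mul x y
      simp only [Real.dist_eq, ← mul_sub, abs_mul, Nat.abs_ofNat, NNReal.coe_mul,
        NNReal.coe_ofNat] at this ⊢
      linarith
  exact .unitClamp_comp ((LipschitzWith.const 2).sub
    (lipschitzWith_one_norm.comp (hscale.sub (LipschitzWith.const 1))))

theorem eventually_unitClamp_comp_eq {x : X} (hθ : ContinuousAt θ x) (hx : θ x ∉ Icc (0 : ℝ) 1) :
    ∀ᶠ y in 𝓝 x, unitClamp (θ y) = unitClamp (θ x) := by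
  rw [mem_Icc, not_and_or, not_le, not_le] at hx
  rcases hx with hx | hx
  · filter_upwards [hθ.eventually_lt_const hx] with y hy
    rw [unitClamp_of_nonpos hx.le, unitClamp_of_nonpos hy.le]
  · filter_upwards [hθ.eventually_const_lt hx] with y hy
    rw [unitClamp_of_one_le hx.le, unitClamp_of_one_le hy.le]

theorem GradPair.unitClamp_comp (hθ : LipschitzWith L θ) :
    GradPair (fun x ↦ unitClamp (θ x)) (fun x ↦ L * transitionWeight (θ x)) where
  bddLipschitz_fun := .unitClamp_comp hθ
  bddLipschitz_grad := (IsBddLipschitz.const (L : ℝ)).mul (.transitionWeight_comp hθ)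
  grad_nonneg x := mul_nonneg L.2 (unitClamp_nonneg _)
  ptLip x ε hε := by
    by_cases hx : θ x ∈ Icc (0 : ℝ) 1
    · have hlip : LipschitzWith L fun x ↦ unitClamp (θ x) := (hθ.const_min 1).const_max 0
      rw [transitionWeight_of_mem_Icc hx, mul_one]
      exact Eventually.of_forall fun y ↦ (hlip.dist_le_mul y x).trans (by gcongr; linarith)
    · filter_upwards [eventually_unitClamp_comp_eq hθ.continuous.continuousAt hx] with y hy
      rw [hy, sub_self, abs_zero]
      exact mul_nonneg (add_nonneg (mul_nonneg L.2 (unitClamp_nonneg _)) hε.le) dist_nonneg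

end Cutoff

section UpperGradient

variable {X : Type u} [PseudoMetricSpace X] {u : X → ℝ} {γ : ℝ → X}

theorem ofReal_mul_abs_deriv_comp_le_lipConst {a b t θ : ℝ} (hγ : LipschitzOnWith 1 γ (Icc a b))
    (ht : t ∈ Ioo a b) (hd : DifferentiableAt ℝ (u ∘ γ) t) (hθ : θ ∈ Ioo (0 : ℝ) 1) :
    ENNReal.ofReal (θ * |deriv (u ∘ γ) t|) ≤ lipConst u (γ t) := by
  have hscale : Tendsto (fun r : ℝ ↦ θ * r) (𝓝[>] 0) (𝓝[>] 0) := by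
    refine tendsto_nhdsWithin_iff.2 ⟨?_, ?_⟩
    · simpa using ((continuous_const_mul θ).tendsto 0).mono_left nhdsWithin_le_nhds
    · filter_upwards [self_mem_nhdsWithin] with r hr using mul_pos hθ.1 hr
  have hlim : Tendsto (fun r ↦ ENNReal.ofReal (|u (γ (t + θ * r)) - u (γ t)| / r)) (𝓝[>] 0)
      (𝓝 (ENNReal.ofReal (θ * |deriv (u ∘ γ) t|))) := by
    refine ENNReal.tendsto_ofReal
      (((hd.hasDerivAt.tendsto_slope_zero_right.comp hscale).abs.const_mul θ).congr' ?_)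
    filter_upwards [self_mem_nhdsWithin] with r (hr : 0 < r)
    have hθ0 := hθ.1
    simp only [Function.comp_apply, smul_eq_mul, abs_mul, abs_inv, abs_of_pos hθ0, abs_of_pos hr]
    field_simp
  rw [← hlim.liminf_eq]
  refine liminf_le_liminf ?_
  filter_upwards [Ioo_mem_nhdsGT (sub_pos.2 ht.2)] with r hr
  have hpos : 0 < θ * r := mul_pos hθ.1 hr.1
  have hlt : θ * r < r := mul_lt_of_lt_one_left hr.1 hθ.2
  have hmem : γ (t + θ * r) ∈ ball (γ t) r := by
    have hdist := hγ.dist_le_mul (t + θ * r) ⟨by linarith [ht.1], by linarith [hr.2]⟩ t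
      (Ioo_subset_Icc_self ht)
    rw [Real.dist_eq, add_sub_cancel_left, abs_of_pos hpos, NNReal.coe_one, one_mul] at hdist
    exact hdist.trans_lt hlt
  exact le_iSup₂ (f := fun y (_ : y ∈ ball (γ t) r) ↦ ENNReal.ofReal (|u y - u (γ t)| / r)) _ hmem

theorem ofReal_abs_deriv_comp_le_lipConst {a b t : ℝ} (hγ : LipschitzOnWith 1 γ (Icc a b))
    (ht : t ∈ Ioo a b) (hd : DifferentiableAt ℝ (u ∘ γ) t) :
    ENNReal.ofReal |deriv (u ∘ γ) t| ≤ lipConst u (γ t) := by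
  have hlim : Tendsto (fun θ : ℝ ↦ ENNReal.ofReal (θ * |deriv (u ∘ γ) t|)) (𝓝[<] 1)
      (𝓝 (ENNReal.ofReal |deriv (u ∘ γ) t|)) := by
    have hcont : Continuous fun θ : ℝ ↦ ENNReal.ofReal (θ * |deriv (u ∘ γ) t|) :=
      ENNReal.continuous_ofReal.comp (continuous_mul_const _)
    simpa using (hcont.tendsto 1).mono_left nhdsWithin_le_nhds
  refine le_of_tendsto hlim ?_
  filter_upwards [Ioo_mem_nhdsLT one_pos] with θ hθ
  exact ofReal_mul_abs_deriv_comp_le_lipConst hγ ht hd hθ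

theorem ofReal_abs_sub_le_lintegral_lipConst {L : ℝ} {K : ℝ≥0} (hL : 0 ≤ L)
    (hγ : LipschitzOnWith 1 γ (Icc 0 L)) (hu : LipschitzOnWith K u (γ '' Icc 0 L)) :
    ENNReal.ofReal |u (γ 0) - u (γ L)| ≤ ∫⁻ t in Ioc 0 L, lipConst u (γ t) := by
  have hlip : LipschitzOnWith (K * 1) (u ∘ γ) (uIcc 0 L) := by
    rw [uIcc_of_le hL]
    exact hu.comp hγ (mapsTo_image _ _)
  have hac := hlip.absolutelyContinuousOnInterval
  have hftc : u (γ L) - u (γ 0) = ∫ t in Ioc 0 L, deriv (u ∘ γ) t := by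
    rw [← intervalIntegral.integral_of_le hL]
    exact hac.integral_deriv_eq_sub.symm
  have hdiff := hac.ae_differentiableAt
  rw [uIcc_of_le hL] at hdiff
  rw [abs_sub_comm, hftc, ← Real.norm_eq_abs, ofReal_norm]
  refine (enorm_integral_le_lintegral_enorm _).trans (lintegral_mono_ae ?_)
  rw [ae_restrict_iff' measurableSet_Ioc]
  filter_upwards [hdiff, Measure.ae_ne volume L] with t ht htL htm
  rw [Real.enorm_eq_ofReal_abs]
  exact ofReal_abs_deriv_comp_le_lipConst hγ ⟨htm.1, htm.2.lt_of_ne htL⟩ (ht ⟨htm.1.le, htm.2⟩)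

theorem GradPair.isUpperGradientOf {v : X → ℝ} (h : GradPair u v) : IsUpperGradientOf v u := by
  intro L hL γ hγ
  obtain ⟨K, hK⟩ := h.bddLipschitz_fun.lipschitz
  have hint : IntegrableOn (fun t ↦ v (γ t)) (Ioc 0 L) :=
    (h.continuous_grad.comp_continuousOn hγ.continuousOn).integrableOn_Icc.mono_set
      Ioc_subset_Icc_self
  have hnonneg : ∀ t, 0 ≤ v (γ t) := fun t ↦ h.grad_nonneg _
  rw [intervalIntegral.integral_of_le hL, ← ENNReal.ofReal_le_ofReal_iff (integral_nonneg hnonneg),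
    ofReal_integral_eq_lintegral_ofReal hint (Eventually.of_forall hnonneg)]
  exact (ofReal_abs_sub_le_lintegral_lipConst hL hγ hK.lipschitzOnWith).trans
    (lintegral_mono fun t ↦ (h.ptLip _).lipConst_le (hnonneg t))

end UpperGradient

section Curves

theorem isCompact_setOf_lipschitzWith_one_apply_eq {Y : Type*} [PseudoMetricSpace Y]
    [CompactSpace Y] {X : Type u} [MetricSpace X] [ProperSpace X] (z : Y) (x : X) :
    IsCompact {h : C(Y, X) | LipschitzWith 1 h ∧ h z = x} := by
  apply ArzelaAscoli.isCompact_of_equicontinuous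
  · have himage : ContinuousMap.toFun '' {h : C(Y, X) | LipschitzWith 1 h ∧ h z = x} =
        {f : Y → X | LipschitzWith 1 f} ∩ {f | f z = x} := by
      ext f
      exact ⟨fun ⟨_, hh, hhf⟩ ↦ hhf ▸ hh, fun hf ↦ ⟨⟨f, hf.1.continuous⟩, hf, rfl⟩⟩
    rw [himage]
    have hpi : IsCompact (Set.pi univ fun y : Y ↦ closedBall x (dist y z)) :=
      isCompact_univ_pi fun _ ↦ isCompact_closedBall x _
    refine hpi.of_isClosed_subset ((isClosed_setOfPred_lipschitzWith 1).inter
      (isClosed_eq (continuous_apply z) continuous_const)) ?_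
    rintro f ⟨hf, rfl⟩ y -
    simpa using hf.dist_le_mul y z
  · refine Metric.equicontinuous_of_continuity_modulus id tendsto_id _ ?_
    rintro s t ⟨h, hh⟩
    simpa using hh.1.dist_le_mul s t

theorem exists_subseq_tendsto_curves {X : Type u} [MetricSpace X] [ProperSpace X] {x : X} {Λ : ℝ}
    (hΛ : 0 ≤ Λ) {σ : ℕ → ℝ → X} (hσ : ∀ n, LipschitzWith 1 (σ n)) (h0 : ∀ n, σ n 0 = x)
    {L : ℕ → ℝ} (hL : ∀ n, L n ∈ Icc 0 Λ) :
    ∃ ℓ ∈ Icc 0 Λ, ∃ τ : ℝ → X, LipschitzWith 1 τ ∧ ∃ φ : ℕ → ℕ, StrictMono φ ∧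
      Tendsto (fun n ↦ L (φ n)) atTop (𝓝 ℓ) ∧
      ∀ t ∈ Icc 0 Λ, Tendsto (fun n ↦ σ (φ n) t) atTop (𝓝 (τ t)) := by
  let I := Icc (0 : ℝ) Λ
  let z : I := ⟨0, left_mem_Icc.2 hΛ⟩
  let F : ℕ → ℝ × C(I, X) := fun n ↦
    (L n, ⟨fun t ↦ σ n t, (hσ n).continuous.comp continuous_subtype_val⟩)
  have hF (n) : F n ∈ Icc (0 : ℝ) Λ ×ˢ {h : C(I, X) | LipschitzWith 1 h ∧ h z = x} :=
    ⟨hL n, ((hσ n).comp (LipschitzWith.subtype_val I)).weaken (mul_one 1).le, h0 n⟩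
  obtain ⟨⟨ℓ, h⟩, ⟨hℓ, hh, -⟩, φ, hφ, hlim⟩ :=
    (isCompact_Icc.prod (isCompact_setOf_lipschitzWith_one_apply_eq z x)).tendsto_subseq hF
  rw [nhds_prod_eq, tendsto_prod_iff'] at hlim
  refine ⟨ℓ, hℓ, fun t ↦ h (projIcc 0 Λ hΛ t),
    (hh.comp (LipschitzWith.projIcc hΛ)).weaken (mul_one 1).le, φ, hφ, hlim.1, fun t ht ↦ ?_⟩
  simp only [projIcc_of_mem hΛ ht]
  exact ((continuous_eval_const (F := C(I, X)) (⟨t, ht⟩ : I)).tendsto h).comp hlim.2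

theorem IsGeodesic.exists_lipschitzWith {X : Type u} [PseudoMetricSpace X] (hG : IsGeodesic X)
    (x y : X) : ∃ γ : ℝ → X, LipschitzWith 1 γ ∧ γ 0 = x ∧ γ (dist x y) = y := by
  obtain ⟨γ, hγ, h0, h1⟩ := hG x y
  exact ⟨fun t ↦ γ (projIcc 0 (dist x y) dist_nonneg t),
    (hγ.to_restrict.comp (LipschitzWith.projIcc dist_nonneg)).weaken (mul_one 1).le,
    by simp [h0], by simp [h1]⟩

/-- The curve that follows `η` up to time `d` and then `γ`, started afresh. -/
def concatCurve {X : Type u} (d : ℝ) (η γ : ℝ → X) (t : ℝ) : X := if t ≤ d then η t else γ (t - d)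

variable {X : Type u} {d : ℝ} {η γ : ℝ → X}

theorem concatCurve_of_le {t : ℝ} (ht : t ≤ d) : concatCurve d η γ t = η t := if_pos ht

theorem concatCurve_add (h : η d = γ 0) {t : ℝ} (ht : 0 ≤ t) :
    concatCurve d η γ (t + d) = γ t := by
  rcases ht.eq_or_lt with rfl | ht
  · rw [zero_add, concatCurve_of_le le_rfl, h]
  · rw [concatCurve, if_neg (by linarith), add_sub_cancel_right]

variable [PseudoMetricSpace X]

theorem lipschitzWith_concatCurve (hη : LipschitzWith 1 η) (hγ : LipschitzWith 1 γ)
    (h : η d = γ 0) : LipschitzWith 1 (concatCurve d η γ) := by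
  refine LipschitzWith.of_dist_le_mul fun s t ↦ ?_
  wlog hst : s ≤ t generalizing s t
  · rw [dist_comm, dist_comm s]
    exact this t s (le_of_not_ge hst)
  have hdist {f : ℝ → X} (hf : LipschitzWith 1 f) {a b : ℝ} (hab : a ≤ b) :
      dist (f a) (f b) ≤ b - a := by
    simpa [Real.dist_eq, abs_sub_comm a, abs_of_nonneg (sub_nonneg.2 hab)] using
      hf.dist_le_mul a b
  rw [NNReal.coe_one, one_mul, Real.dist_eq, abs_sub_comm, abs_of_nonneg (sub_nonneg.2 hst)]
  rcases le_or_gt t d with htd | htd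
  · rw [concatCurve_of_le (hst.trans htd), concatCurve_of_le htd]
    exact hdist hη hst
  rw [concatCurve.eq_def d η γ t, if_neg htd.not_ge]
  rcases le_or_gt s d with hsd | hsd
  · rw [concatCurve_of_le hsd]
    have hηd := hdist hη hsd
    have hγd := hdist hγ (sub_nonneg.2 htd.le)
    rw [← h] at hγd
    linarith [dist_triangle (η s) (η d) (γ (t - d))]
  · rw [concatCurve, if_neg hsd.not_ge]
    linarith [hdist hγ (sub_le_sub_right hst d)]

theorem integral_concatCurve {g : X → ℝ} (hg : Continuous g) (hη : LipschitzWith 1 η)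
    (hγ : LipschitzWith 1 γ) (h : η d = γ 0) (hd : 0 ≤ d) {L : ℝ} (hL : 0 ≤ L) :
    ∫ t in (0 : ℝ)..(L + d), g (concatCurve d η γ t) =
      (∫ t in (0 : ℝ)..d, g (η t)) + ∫ t in (0 : ℝ)..L, g (γ t) := by
  have hint (a b : ℝ) : IntervalIntegrable (fun t ↦ g (concatCurve d η γ t)) volume a b :=
    (hg.comp (lipschitzWith_concatCurve hη hγ h).continuous).intervalIntegrable a b
  rw [← intervalIntegral.integral_add_adjacent_intervals (hint 0 d) (hint d (L + d))]
  congr 1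
  · refine intervalIntegral.integral_congr fun t ht ↦ ?_
    rw [uIcc_of_le hd] at ht
    simp only [concatCurve_of_le ht.2]
  · have hshift := intervalIntegral.integral_comp_add_right (a := 0) (b := L)
      (fun t ↦ g (concatCurve d η γ t)) d
    rw [zero_add] at hshift
    rw [← hshift]
    refine intervalIntegral.integral_congr fun t ht ↦ ?_
    rw [uIcc_of_le hL] at ht
    simp only [concatCurve_add h ht.1]

end Curves

section TravelCost

variable {X : Type u} [PseudoMetricSpace X]

/-- The values `u (γ L) + ∫ g` over the `1`-Lipschitz curves `γ` that start at `x` and are in `N`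
at time `L`. -/
def curveCosts (g u : X → ℝ) (N : Set X) (x : X) : Set ℝ :=
  {c | ∃ L : ℝ, 0 ≤ L ∧ ∃ γ : ℝ → X, LipschitzWith 1 γ ∧ γ 0 = x ∧ γ L ∈ N ∧
    c = u (γ L) + ∫ t in (0 : ℝ)..L, g (γ t)}

/-- The least cost of travelling from `x` to `N`, when `g` is paid along the way and `u` on
arrival. For continuous `g ≥ 0` it has `g` as an upper gradient. -/
def travelCost (g u : X → ℝ) (N : Set X) (x : X) : ℝ := sInf (curveCosts g u N x)

variable {g g' u : X → ℝ} {N : Set X} {T : ℝ}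

theorem mem_lowerBounds_curveCosts (hg : ∀ x, 0 ≤ g x) (hT : ∀ y ∈ N, -T ≤ u y) (x : X) :
    -T ∈ lowerBounds (curveCosts g u N x) := by
  rintro c ⟨L, hL, γ, -, -, hγL, rfl⟩
  have := intervalIntegral.integral_nonneg (μ := volume) hL fun t _ ↦ hg (γ t)
  linarith [hT _ hγL]

theorem curveCosts_nonempty (hG : IsGeodesic X) (hN : N.Nonempty) (x : X) :
    (curveCosts g u N x).Nonempty := by
  obtain ⟨y, hy⟩ := hN
  obtain ⟨γ, hγ, h0, h1⟩ := hG.exists_lipschitzWith x y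
  exact ⟨_, dist x y, dist_nonneg, γ, hγ, h0, by rwa [h1], rfl⟩

theorem neg_le_travelCost (hG : IsGeodesic X) (hN : N.Nonempty) (hg : ∀ x, 0 ≤ g x)
    (hT : ∀ y ∈ N, -T ≤ u y) (x : X) : -T ≤ travelCost g u N x :=
  le_csInf (curveCosts_nonempty hG hN x) (mem_lowerBounds_curveCosts hg hT x)

theorem travelCost_le (hg : ∀ x, 0 ≤ g x) (hT : ∀ y ∈ N, -T ≤ u y) {L : ℝ} (hL : 0 ≤ L)
    {γ : ℝ → X} (hγ : LipschitzWith 1 γ) (hγL : γ L ∈ N) :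
    travelCost g u N (γ 0) ≤ u (γ L) + ∫ t in (0 : ℝ)..L, g (γ t) :=
  csInf_le ⟨_, mem_lowerBounds_curveCosts hg hT _⟩ ⟨L, hL, γ, hγ, rfl, hγL, rfl⟩

theorem travelCost_le_of_mem (hg : ∀ x, 0 ≤ g x) (hT : ∀ y ∈ N, -T ≤ u y) {x : X} (hx : x ∈ N) :
    travelCost g u N x ≤ u x := by
  simpa using travelCost_le hg hT le_rfl ((LipschitzWith.const' x).weaken zero_le_one) hx

theorem travelCost_mono (hG : IsGeodesic X) (hN : N.Nonempty) (hgc : Continuous g)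
    (hg : ∀ x, 0 ≤ g x) (hgc' : Continuous g') (hgg' : ∀ x, g x ≤ g' x)
    (hT : ∀ y ∈ N, -T ≤ u y) (x : X) : travelCost g u N x ≤ travelCost g' u N x := by
  refine le_csInf (curveCosts_nonempty hG hN x) ?_
  rintro c ⟨L, hL, γ, hγ, rfl, hγL, rfl⟩
  refine (travelCost_le hg hT hL hγ hγL).trans ?_
  gcongr
  exact intervalIntegral.integral_mono_on hL ((hgc.comp hγ.continuous).intervalIntegrable _ _)
    ((hgc'.comp hγ.continuous).intervalIntegrable _ _) fun t _ ↦ hgg' (γ t)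

theorem travelCost_le_add (hG : IsGeodesic X) (hN : N.Nonempty) (hgc : Continuous g)
    (hg : ∀ x, 0 ≤ g x) (hT : ∀ y ∈ N, -T ≤ u y) {x y : X} {c : ℝ}
    (hc : ∀ z ∈ closedBall x (dist y x), g z ≤ c) :
    travelCost g u N y ≤ travelCost g u N x + c * dist y x := by
  rw [← sub_le_iff_le_add]
  refine le_csInf (curveCosts_nonempty hG hN x) ?_
  rintro b ⟨L, hL, γ, hγ, rfl, hγL, rfl⟩
  obtain ⟨η, hη, hη0, hη1⟩ := hG.exists_lipschitzWith y (γ 0)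
  have hd : 0 ≤ dist y (γ 0) := dist_nonneg
  have hconcat := travelCost_le hg hT (add_nonneg hL hd) (lipschitzWith_concatCurve hη hγ hη1)
    (by rwa [concatCurve_add hη1 hL])
  rw [concatCurve_of_le hd, hη0, concatCurve_add hη1 hL,
    integral_concatCurve hgc hη hγ hη1 hd hL] at hconcat
  have hgeod : ∫ t in (0 : ℝ)..dist y (γ 0), g (η t) ≤ c * dist y (γ 0) := by
    have hle : ∫ t in (0 : ℝ)..dist y (γ 0), g (η t) ≤ ∫ _ in (0 : ℝ)..dist y (γ 0), c := by
      refine intervalIntegral.integral_mono_on hd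
        ((hgc.comp hη.continuous).intervalIntegrable _ _) (by simp) fun t ht ↦ hc _ ?_
      have hdist := hη.dist_le_mul t (dist y (γ 0))
      rw [hη1, Real.dist_eq, abs_sub_comm, abs_of_nonneg (sub_nonneg.2 ht.2), NNReal.coe_one,
        one_mul] at hdist
      exact mem_closedBall.2 (hdist.trans (sub_le_self _ ht.1))
    simpa [mul_comm] using hle
  linarith

theorem ptLipLE_travelCost (hG : IsGeodesic X) (hN : N.Nonempty) (hgc : Continuous g)
    (hg : ∀ x, 0 ≤ g x) (hT : ∀ y ∈ N, -T ≤ u y) (x : X) :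
    PtLipLE (travelCost g u N) x (g x) := by
  intro ε hε
  obtain ⟨δ, hδ, hball⟩ := Metric.eventually_nhds_iff_ball.1
    (hgc.continuousAt.eventually_lt_const (lt_add_of_pos_right (g x) hε))
  filter_upwards [ball_mem_nhds x (half_pos hδ)] with y hy
  rw [mem_ball] at hy
  have hyx : travelCost g u N y ≤ travelCost g u N x + (g x + ε) * dist y x :=
    travelCost_le_add hG hN hgc hg hT fun z hz ↦
      (hball z (mem_ball.2 (by linarith [mem_closedBall.1 hz]))).le
  have hxy : travelCost g u N x ≤ travelCost g u N y + (g x + ε) * dist x y :=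
    travelCost_le_add hG hN hgc hg hT fun z hz ↦ (hball z (mem_ball.2 (by
      rw [mem_closedBall, dist_comm x y] at hz
      linarith [dist_triangle z y x]))).le
  rw [dist_comm x y] at hxy
  exact abs_le.2 ⟨by linarith, by linarith⟩

theorem PtLipLE.const_min {f : X → ℝ} {x : X} {c : ℝ} (h : PtLipLE f x c) (T : ℝ) :
    PtLipLE (fun y ↦ min T (f y)) x c := fun ε hε ↦ by
  filter_upwards [h ε hε] with y hy
  refine (abs_min_sub_min_le_max T (f y) T (f x)).trans ?_
  rwa [sub_self, abs_zero, max_eq_right (abs_nonneg _)]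

theorem gradPair_min_travelCost (hG : IsGeodesic X) (hN : N.Nonempty) (hgb : IsBddLipschitz g)
    (hg : ∀ x, 0 ≤ g x) (hT : ∀ y ∈ N, -T ≤ u y) :
    GradPair (fun x ↦ min T (travelCost g u N x)) g where
  bddLipschitz_fun := by
    obtain ⟨M, hM⟩ := hgb.bdd
    have hM0 : 0 ≤ M := (abs_nonneg _).trans (hM hN.some)
    have hlip : LipschitzWith M.toNNReal (travelCost g u N) := by
      refine LipschitzWith.of_le_add_mul _ fun x y ↦ ?_
      rw [Real.coe_toNNReal _ hM0]
      exact travelCost_le_add hG hN hgb.continuous hg hT fun z _ ↦ (le_abs_self _).trans (hM z)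
    refine ⟨⟨_, hlip.const_min T⟩, |T|, fun x ↦ abs_le.2 ⟨le_min (neg_abs_le T) ?_,
      (min_le_left _ _).trans (le_abs_self T)⟩⟩
    exact (neg_le_neg (le_abs_self T)).trans (neg_le_travelCost hG hN hg hT x)
  bddLipschitz_grad := hgb
  grad_nonneg := hg
  ptLip x := (ptLipLE_travelCost hG hN hgb.continuous hg hT x).const_min T

end TravelCost

section LipConstMeasurable

variable {X : Type u} [PseudoMetricSpace X] {u : X → ℝ} {W : Set X} {x : X}

/-- The difference quotient of `u` at scale `r`, taken within `W`: its lower limit as `r → 0`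
is `lipConst` at interior points of `W`. -/
def supDiffQuot (u : X → ℝ) (W : Set X) (r : ℝ) (x : X) : ℝ≥0∞ :=
  ⨆ y ∈ ball x r ∩ W, ENNReal.ofReal (|u y - u x| / r)

theorem lipConst_eq_liminf_supDiffQuot (hW : W ∈ 𝓝 x) :
    lipConst u x = liminf (fun r ↦ supDiffQuot u W r x) (𝓝[>] 0) := by
  obtain ⟨δ, hδ, hball⟩ := Metric.mem_nhds_iff.1 hW
  refine liminf_congr ?_
  filter_upwards [Ioo_mem_nhdsGT hδ] with r hr
  rw [supDiffQuot, inter_eq_left.2 ((ball_subset_ball hr.2.le).trans hball)]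

theorem lowerSemicontinuous_indicator_supDiffQuot (hW : IsOpen W) (hu : ContinuousOn u W) (r : ℝ) :
    LowerSemicontinuous (W.indicator (supDiffQuot u W r)) := by
  intro x c hc
  by_cases hx : x ∈ W
  · rw [indicator_of_mem hx] at hc
    simp only [supDiffQuot, lt_iSup_iff] at hc
    obtain ⟨y, ⟨hyx, hyW⟩, hcy⟩ := hc
    have hquot : ContinuousAt (fun x' ↦ ENNReal.ofReal (|u y - u x'| / r)) x :=
      ENNReal.continuous_ofReal.continuousAt.comp
        ((continuousAt_const.sub (hu.continuousAt (hW.mem_nhds hx))).abs.div_const r)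
    have hdist : ContinuousAt (fun x' ↦ dist y x') x := by fun_prop
    filter_upwards [hW.mem_nhds hx, hquot.eventually_const_lt hcy,
      hdist.eventually_lt_const (mem_ball.1 hyx)] with x' hx'W hcx' hx'y
    rw [indicator_of_mem hx'W]
    exact hcx'.trans_le (le_iSup₂_of_le y ⟨hx'y, hyW⟩ le_rfl)
  · simp [indicator_of_notMem hx] at hc

theorem supDiffQuot_le_mul {q r : ℝ} (hq : 0 < q) (hqr : q ≤ r) :
    supDiffQuot u W q x ≤ supDiffQuot u W r x * ENNReal.ofReal (r / q) := by
  have hr : 0 < r := hq.trans_le hqr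
  refine iSup₂_le fun y hy ↦ ?_
  calc ENNReal.ofReal (|u y - u x| / q)
      = ENNReal.ofReal (|u y - u x| / r) * ENNReal.ofReal (r / q) := by
        rw [← ENNReal.ofReal_mul (by positivity), div_mul_div_cancel₀ hr.ne']
    _ ≤ supDiffQuot u W r x * ENNReal.ofReal (r / q) := by
        gcongr
        exact le_iSup₂_of_le y ⟨ball_subset_ball hqr hy.1, hy.2⟩ le_rfl

theorem iInf_rat_supDiffQuot_le {δ r : ℝ} (hr : r ∈ Ioo 0 δ) :
    ⨅ q : {q : ℚ // (q : ℝ) ∈ Ioo 0 δ}, supDiffQuot u W q x ≤ supDiffQuot u W r x := by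
  have hlim : Tendsto (fun s ↦ supDiffQuot u W r x * ENNReal.ofReal (r / s)) (𝓝[<] r)
      (𝓝 (supDiffQuot u W r x)) := by
    have hdiv : Tendsto (fun s ↦ ENNReal.ofReal (r / s)) (𝓝[<] r) (𝓝 1) := by
      rw [← ENNReal.ofReal_one, ← div_self hr.1.ne']
      exact ENNReal.tendsto_ofReal
        ((tendsto_const_nhds.div tendsto_id hr.1.ne').mono_left nhdsWithin_le_nhds)
    simpa using ENNReal.Tendsto.const_mul hdiv (Or.inl one_ne_zero)
  refine ge_of_tendsto hlim ?_
  filter_upwards [Ioo_mem_nhdsLT hr.1] with s hs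
  obtain ⟨q, hsq, hqr⟩ := exists_rat_btwn hs.2
  have hq : (0 : ℝ) < q := hs.1.trans hsq
  calc ⨅ q : {q : ℚ // (q : ℝ) ∈ Ioo 0 δ}, supDiffQuot u W q x
      ≤ supDiffQuot u W q x := iInf_le_of_le ⟨q, hq, hqr.trans hr.2⟩ le_rfl
    _ ≤ supDiffQuot u W r x * ENNReal.ofReal (r / q) := supDiffQuot_le_mul hq hqr.le
    _ ≤ supDiffQuot u W r x * ENNReal.ofReal (r / s) := by
        have := hs.1
        have := hr.1.le
        gcongr

theorem lipConst_eq_iSup_iInf_rat (hW : W ∈ 𝓝 x) :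
    lipConst u x =
      ⨆ n : ℕ, ⨅ q : {q : ℚ // (q : ℝ) ∈ Ioo 0 (1 / (n + 1 : ℝ))}, supDiffQuot u W q x := by
  rw [lipConst_eq_liminf_supDiffQuot hW]
  refine le_antisymm (le_of_forall_lt fun c hc ↦ ?_) (iSup_le fun n ↦ ?_)
  · obtain ⟨c', hcc', hc'⟩ := exists_between hc
    obtain ⟨δ, hδ, hlt⟩ := mem_nhdsGT_iff_exists_Ioo_subset.1 (eventually_lt_of_lt_liminf hc')
    obtain ⟨n, hn⟩ := exists_nat_one_div_lt (mem_Ioi.1 hδ)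
    refine hcc'.trans_le (le_iSup_of_le n (le_iInf fun q ↦ ?_))
    exact (hlt ⟨q.2.1, q.2.2.trans hn⟩ : c' < supDiffQuot u W q x).le
  · refine le_liminf_of_le (by isBoundedDefault) ?_
    filter_upwards [Ioo_mem_nhdsGT (show (0 : ℝ) < 1 / (n + 1) by positivity)] with r hr
    exact iInf_rat_supDiffQuot_le hr

theorem exists_measurable_eqOn_lipConst [MeasurableSpace X] [BorelSpace X] (hW : IsOpen W)
    (hu : ContinuousOn u W) : ∃ m : X → ℝ≥0∞, Measurable m ∧ EqOn m (lipConst u) W := by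
  refine ⟨fun x ↦ ⨆ n : ℕ, ⨅ q : {q : ℚ // (q : ℝ) ∈ Ioo 0 (1 / (n + 1 : ℝ))},
    W.indicator (supDiffQuot u W q) x, ?_, fun x hx ↦ ?_⟩
  · exact .iSup fun n ↦ .iInf fun q ↦
      (lowerSemicontinuous_indicator_supDiffQuot hW hu q).measurable
  · simp only [indicator_of_mem hx, lipConst_eq_iSup_iInf_rat (hW.mem_nhds hx)]

end LipConstMeasurable

section LipschitzApprox

variable {X : Type u} [PseudoMetricSpace X]

/-- The bounded Lipschitz functions `G n ≥ η` increase to `g`. -/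
structure LipschitzApprox (η : ℝ) (g : X → ℝ≥0∞) (G : ℕ → X → ℝ) : Prop where
  bddLipschitz : ∀ n, IsBddLipschitz (G n)
  le_apply : ∀ n x, η ≤ G n x
  monotone : ∀ x, Monotone fun n ↦ G n x
  iSup_ofReal : ∀ x, ⨆ n, ENNReal.ofReal (G n x) = g x

theorem LipschitzApprox.continuous {η : ℝ} {g : X → ℝ≥0∞} {G : ℕ → X → ℝ}
    (h : LipschitzApprox η g G) (n : ℕ) : Continuous (G n) :=
  (h.bddLipschitz n).continuous

theorem LipschitzApprox.nonneg {η : ℝ} {g : X → ℝ≥0∞} {G : ℕ → X → ℝ}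
    (h : LipschitzApprox η g G) (hη : 0 ≤ η) (n : ℕ) (x : X) : 0 ≤ G n x :=
  hη.trans (h.le_apply n x)

theorem LipschitzApprox.ofReal_le {η : ℝ} {g : X → ℝ≥0∞} {G : ℕ → X → ℝ}
    (h : LipschitzApprox η g G) (n : ℕ) (x : X) : ENNReal.ofReal (G n x) ≤ g x :=
  h.iSup_ofReal x ▸ le_iSup (fun n ↦ ENNReal.ofReal (G n x)) n

/-- The largest `n`-Lipschitz function below `g` truncated at height `η + n`. -/
def lipschitzRegularization (g : X → ℝ≥0∞) (η : ℝ) (n : ℕ) (x : X) : ℝ≥0∞ :=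
  ⨅ y, (min (g y) (ENNReal.ofReal (η + n)) + n * edist x y)

variable {g : X → ℝ≥0∞} {η : ℝ}

theorem lipschitzRegularization_le (g : X → ℝ≥0∞) (η : ℝ) (n : ℕ) (x : X) :
    lipschitzRegularization g η n x ≤ min (g x) (ENNReal.ofReal (η + n)) :=
  (iInf_le _ x).trans (by simp)

theorem lipschitzRegularization_ne_top (g : X → ℝ≥0∞) (η : ℝ) (n : ℕ) (x : X) :
    lipschitzRegularization g η n x ≠ ⊤ :=
  ne_top_of_le_ne_top ENNReal.ofReal_ne_top
    ((lipschitzRegularization_le g η n x).trans (min_le_right _ _))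

theorem le_lipschitzRegularization (hgη : ∀ x, ENNReal.ofReal η ≤ g x) (n : ℕ) (x : X) :
    ENNReal.ofReal η ≤ lipschitzRegularization g η n x := le_iInf fun y ↦
  le_add_right (le_min (hgη y) (ENNReal.ofReal_le_ofReal (by simp)))

theorem lipschitzRegularization_mono (g : X → ℝ≥0∞) (η : ℝ) (x : X) :
    Monotone fun n ↦ lipschitzRegularization g η n x := by
  intro n m hnm
  refine iInf_mono fun y ↦ ?_
  have : (n : ℝ) ≤ m := mod_cast hnm
  gcongr

theorem lipschitzRegularization_le_add (g : X → ℝ≥0∞) (η : ℝ) (n : ℕ) (x x' : X) :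
    lipschitzRegularization g η n x ≤ lipschitzRegularization g η n x' + n * edist x x' := by
  rw [lipschitzRegularization, lipschitzRegularization, ENNReal.iInf_add]
  refine le_iInf fun y ↦ (iInf_le _ y).trans ?_
  rw [add_assoc, ← mul_add, add_comm (edist x' y)]
  gcongr
  exact edist_triangle _ _ _

theorem isBddLipschitz_toReal_lipschitzRegularization (g : X → ℝ≥0∞) (hη : 0 ≤ η) (n : ℕ) :
    IsBddLipschitz fun x ↦ (lipschitzRegularization g η n x).toReal := by
  have hfin := lipschitzRegularization_ne_top g η n
  refine ⟨⟨n, LipschitzWith.of_le_add_mul _ fun x y ↦ ?_⟩, η + n, fun x ↦ ?_⟩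
  · have hle := ENNReal.toReal_mono (by finiteness [hfin y, edist_ne_top x y])
      (lipschitzRegularization_le_add g η n x y)
    rwa [ENNReal.toReal_add (hfin y) (by finiteness), ENNReal.toReal_mul, edist_dist,
      ENNReal.toReal_ofReal dist_nonneg, ENNReal.toReal_natCast] at hle
  · rw [abs_of_nonneg ENNReal.toReal_nonneg]
    exact ENNReal.toReal_le_of_le_ofReal (by positivity)
      ((lipschitzRegularization_le g η n x).trans (min_le_right _ _))

theorem iSup_lipschitzRegularization (hg : LowerSemicontinuous g) (hη : 0 ≤ η) (x : X) :
    ⨆ n, lipschitzRegularization g η n x = g x := by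
  refine le_antisymm
    (iSup_le fun n ↦ (lipschitzRegularization_le g η n x).trans (min_le_left _ _)) ?_
  refine le_of_forall_lt fun c hc ↦ ?_
  obtain ⟨c', hcc', hc'⟩ := exists_between hc
  obtain ⟨δ, hδ, hball⟩ := Metric.eventually_nhds_iff_ball.1 (hg x c' hc')
  obtain ⟨n, hn⟩ := exists_nat_ge (max c'.toReal (c'.toReal / δ))
  rw [max_le_iff, div_le_iff₀ hδ] at hn
  refine hcc'.trans_le (le_iSup_of_le n (le_iInf fun y ↦ ?_))
  -- Near `x` both terms of the minimum exceed `c'`; far from `x` the distance penalty does.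
  by_cases hy : y ∈ ball x δ
  · refine le_add_right (le_min (hball y hy).le ?_)
    exact ENNReal.le_ofReal_iff_toReal_le hc'.ne_top (by positivity) |>.2 (by linarith [hn.1])
  · refine le_add_left ?_
    rw [mem_ball, not_lt, dist_comm] at hy
    rw [edist_dist, ← ENNReal.ofReal_natCast, ← ENNReal.ofReal_mul (by positivity),
      ENNReal.le_ofReal_iff_toReal_le hc'.ne_top (by positivity)]
    exact hn.2.trans (by gcongr)

theorem exists_lipschitzApprox (hg : LowerSemicontinuous g) (hη : 0 ≤ η)
    (hgη : ∀ x, ENNReal.ofReal η ≤ g x) : ∃ G : ℕ → X → ℝ, LipschitzApprox η g G := by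
  have hfin := lipschitzRegularization_ne_top g η
  refine ⟨fun n x ↦ (lipschitzRegularization g η n x).toReal,
    isBddLipschitz_toReal_lipschitzRegularization g hη, fun n x ↦ ?_, fun x n m hnm ↦ ?_,
    fun x ↦ ?_⟩
  · exact (ENNReal.ofReal_le_iff_le_toReal (hfin n x)).1 (le_lipschitzRegularization hgη n x)
  · exact ENNReal.toReal_mono (hfin m x) (lipschitzRegularization_mono g η x hnm)
  · simp only [ENNReal.ofReal_toReal (hfin _ x)]
    exact iSup_lipschitzRegularization hg hη x

end LipschitzApprox

section LimitCurve

theorem tendsto_integral_comp_curves {X : Type u} [TopologicalSpace X] {g : X → ℝ}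
    (hg : Continuous g) {M : ℝ} (hM : ∀ x, |g x| ≤ M) {γ : ℕ → ℝ → X} (hγ : ∀ n, Continuous (γ n))
    {τ : ℝ → X} {L : ℕ → ℝ} {ℓ : ℝ} (hℓ : 0 ≤ ℓ) (hL : Tendsto L atTop (𝓝 ℓ))
    (hlim : ∀ t ∈ Icc 0 ℓ, Tendsto (fun n ↦ γ n t) atTop (𝓝 (τ t))) :
    Tendsto (fun n ↦ ∫ t in (0 : ℝ)..L n, g (γ n t)) atTop (𝓝 (∫ t in (0 : ℝ)..ℓ, g (τ t))) := by
  have hint (n : ℕ) (a b : ℝ) : IntervalIntegrable (fun t ↦ g (γ n t)) volume a b :=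
    (hg.comp (hγ n)).intervalIntegrable a b
  have hfixed : Tendsto (fun n ↦ ∫ t in (0 : ℝ)..ℓ, g (γ n t)) atTop
      (𝓝 (∫ t in (0 : ℝ)..ℓ, g (τ t))) := by
    refine intervalIntegral.tendsto_integral_filter_of_dominated_convergence (fun _ ↦ M)
      (.of_forall fun n ↦ (hg.comp (hγ n)).aestronglyMeasurable)
      (.of_forall fun n ↦ ae_of_all _ fun t _ ↦ hM _) (by simp) (ae_of_all _ fun t ht ↦ ?_)
    rw [uIoc_of_le hℓ] at ht
    exact (hg.tendsto _).comp (hlim t ⟨ht.1.le, ht.2⟩)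
  have hrest : Tendsto (fun n ↦ ∫ t in ℓ..L n, g (γ n t)) atTop (𝓝 0) := by
    have hbound : Tendsto (fun n ↦ M * |L n - ℓ|) atTop (𝓝 0) := by
      simpa using (hL.sub_const ℓ).abs.const_mul M
    exact squeeze_zero_norm (fun n ↦ intervalIntegral.norm_integral_le_of_norm_le_const
      fun t _ ↦ hM _) hbound
  simpa only [add_zero, intervalIntegral.integral_add_adjacent_intervals (hint _ _ _)
    (hint _ _ _)] using hfixed.add hrest

theorem mapsTo_of_lintegral_comp_ne_top {X : Type u} [TopologicalSpace X] {g : X → ℝ≥0∞}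
    {N : Set X} (hN : IsClosed N) (hgN : ∀ x ∉ N, g x = ⊤) {τ : ℝ → X} (hτ : Continuous τ)
    (hgτ : Measurable fun t ↦ g (τ t)) {ℓ : ℝ} (h0 : τ 0 ∈ N) (h1 : τ ℓ ∈ N)
    (hint : ∫⁻ t in Ioc 0 ℓ, g (τ t) ≠ ⊤) : MapsTo τ (Icc 0 ℓ) N := by
  have hfin : ∀ᵐ t ∂volume.restrict (Ioc 0 ℓ), g (τ t) < ⊤ := ae_lt_top hgτ hint
  rw [ae_restrict_iff' measurableSet_Ioc] at hfin
  have hopen : IsOpen (Ioo 0 ℓ ∩ τ ⁻¹' Nᶜ) := isOpen_Ioo.inter (hN.isOpen_compl.preimage hτ)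
  have hnull : volume (Ioo 0 ℓ ∩ τ ⁻¹' Nᶜ) = 0 := by
    refine measure_mono_null (fun t ht ↦ ?_) (ae_iff.1 hfin)
    simp [hgN _ ht.2, ht.1.1, ht.1.2.le]
  have hempty := (hopen.measure_eq_zero_iff volume).1 hnull
  intro t ht
  rcases ht.1.eq_or_lt with rfl | ht0
  · exact h0
  rcases ht.2.eq_or_lt with rfl | htℓ
  · exact h1
  by_contra hn
  exact hempty.subset ⟨⟨ht0, htℓ⟩, hn⟩

variable {X : Type u} [PseudoMetricSpace X] {η : ℝ} {g : X → ℝ≥0∞} {G : ℕ → X → ℝ} {u : X → ℝ}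
  {N : Set X} {T : ℝ}

theorem tendsto_apply_of_lipschitzWith {γ : ℕ → ℝ → X}
    (hγ : ∀ n, LipschitzWith 1 (γ n)) {L : ℕ → ℝ} {ℓ : ℝ} (hL : Tendsto L atTop (𝓝 ℓ)) {p : X}
    (hp : Tendsto (fun n ↦ γ n ℓ) atTop (𝓝 p)) : Tendsto (fun n ↦ γ n (L n)) atTop (𝓝 p) := by
  rw [tendsto_iff_dist_tendsto_zero] at hL hp ⊢
  refine squeeze_zero (fun _ ↦ dist_nonneg) (fun n ↦ ?_) (by simpa using hL.add hp)
  have hlip := (hγ n).dist_le_mul (L n) ℓ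
  rw [NNReal.coe_one, one_mul] at hlip
  exact (dist_triangle _ (γ n ℓ) _).trans (by gcongr)

theorem exists_curve_of_travelCost_lt (hG : IsGeodesic X) (hN : N.Nonempty)
    (hA : LipschitzApprox η g G) (hη : 0 < η) (hT : ∀ y ∈ N, -T ≤ u y) {x : X} {c : ℝ} {n : ℕ}
    (hc : travelCost (G n) u N x < c) :
    ∃ L ∈ Icc 0 ((c + T) / η), ∃ γ : ℝ → X, LipschitzWith 1 γ ∧ γ 0 = x ∧ γ L ∈ N ∧
      u (γ L) + ∫ t in (0 : ℝ)..L, G n (γ t) < c := by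
  obtain ⟨_, ⟨L, hL, γ, hγ, h0, hγL, rfl⟩, hlt⟩ :=
    exists_lt_of_csInf_lt (curveCosts_nonempty hG hN x) hc
  refine ⟨L, ⟨hL, ?_⟩, γ, hγ, h0, hγL, hlt⟩
  have hlength : ∫ _ in (0 : ℝ)..L, η ≤ ∫ t in (0 : ℝ)..L, G n (γ t) :=
    intervalIntegral.integral_mono_on hL (by simp)
      (((hA.continuous n).comp hγ.continuous).intervalIntegrable _ _) fun t _ ↦ hA.le_apply _ _
  simp only [intervalIntegral.integral_const, sub_zero, smul_eq_mul] at hlength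
  rw [le_div_iff₀ hη]
  linarith [hT _ hγL]

theorem LipschitzApprox.measurable_comp (hA : LipschitzApprox η g G) {τ : ℝ → X}
    (hτ : Continuous τ) : Measurable fun t ↦ g (τ t) := by
  simp only [← hA.iSup_ofReal]
  exact .iSup fun n ↦ ((hA.continuous n).comp hτ).measurable.ennreal_ofReal

theorem LipschitzApprox.lintegral_comp_le (hA : LipschitzApprox η g G) (hη : 0 ≤ η) {τ : ℝ → X}
    (hτ : Continuous τ) {ℓ c : ℝ} (hℓ : 0 ≤ ℓ) (hc : ∀ m, ∫ t in (0 : ℝ)..ℓ, G m (τ t) ≤ c) :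
    ∫⁻ t in Ioc 0 ℓ, g (τ t) ≤ ENNReal.ofReal c := by
  have hmeas (m : ℕ) : Measurable fun t ↦ ENNReal.ofReal (G m (τ t)) :=
    ((hA.continuous m).comp hτ).measurable.ennreal_ofReal
  simp only [← hA.iSup_ofReal]
  rw [lintegral_iSup hmeas fun m n hmn t ↦ ENNReal.ofReal_le_ofReal (hA.monotone _ hmn)]
  refine iSup_le fun m ↦ ?_
  have hint : IntegrableOn (fun t ↦ G m (τ t)) (Ioc 0 ℓ) :=
    (((hA.continuous m).comp hτ).intervalIntegrable 0 ℓ).1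
  rw [← ofReal_integral_eq_lintegral_ofReal hint (ae_of_all _ fun t ↦ hA.nonneg hη _ _),
    ← intervalIntegral.integral_of_le hℓ]
  exact ENNReal.ofReal_le_ofReal (hc m)

end LimitCurve

section MinimizingCurves

variable {X : Type u} [MetricSpace X] {η : ℝ} {g : X → ℝ≥0∞} {G : ℕ → X → ℝ} {u : X → ℝ}
  {N : Set X} {T : ℝ}

/-- Along a sequence of almost optimal curves the lengths are bounded by `(c + T) / η`, so
Arzelà–Ascoli yields a limit curve, whose cost for each fixed `G m` is controlled by the costs for
the larger functions `G n`. -/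
theorem exists_curve_forall_cost_le [ProperSpace X] (hG : IsGeodesic X) (hN : IsClosed N)
    (hne : N.Nonempty) (hA : LipschitzApprox η g G) (hη : 0 < η) (hu : ContinuousOn u N)
    (hT : ∀ y ∈ N, -T ≤ u y) {x : X} {c : ℝ} (hc : ∀ n, travelCost (G n) u N x < c) :
    ∃ ℓ : ℝ, 0 ≤ ℓ ∧ ∃ τ : ℝ → X, LipschitzWith 1 τ ∧ τ 0 = x ∧ τ ℓ ∈ N ∧
      ∀ m, u (τ ℓ) + ∫ t in (0 : ℝ)..ℓ, G m (τ t) ≤ c := by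
  choose L hL γ hγ h0 hγL hcost using fun n ↦ exists_curve_of_travelCost_lt hG hne hA hη hT (hc n)
  obtain ⟨ℓ, hℓ, τ, hτ, φ, hφ, hLφ, hlim⟩ :=
    exists_subseq_tendsto_curves ((hL 0).1.trans (hL 0).2) hγ h0 hL
  have hτ0 : τ 0 = x :=
    tendsto_nhds_unique (hlim 0 (left_mem_Icc.2 (hℓ.1.trans hℓ.2))) (by simp [h0])
  have hend : Tendsto (fun n ↦ γ (φ n) (L (φ n))) atTop (𝓝 (τ ℓ)) :=
    tendsto_apply_of_lipschitzWith (fun n ↦ hγ (φ n)) hLφ (hlim ℓ hℓ)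
  have hτN : τ ℓ ∈ N := hN.mem_of_tendsto hend (.of_forall fun n ↦ hγL _)
  refine ⟨ℓ, hℓ.1, τ, hτ, hτ0, hτN, fun m ↦ ?_⟩
  have huend : Tendsto (fun n ↦ u (γ (φ n) (L (φ n)))) atTop (𝓝 (u (τ ℓ))) :=
    (hu _ hτN).tendsto.comp (tendsto_nhdsWithin_iff.2 ⟨hend, .of_forall fun n ↦ hγL _⟩)
  obtain ⟨M, hM⟩ := (hA.bddLipschitz m).bdd
  have hcostlim := huend.add (tendsto_integral_comp_curves (hA.continuous m) hM
    (fun n ↦ (hγ (φ n)).continuous) hℓ.1 hLφ fun t ht ↦ hlim t ⟨ht.1, ht.2.trans hℓ.2⟩)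
  refine le_of_tendsto hcostlim ?_
  filter_upwards [eventually_ge_atTop m] with n hn
  have hint (k : ℕ) : IntervalIntegrable (fun t ↦ G k (γ (φ n) t)) volume 0 (L (φ n)) :=
    ((hA.continuous k).comp (hγ _).continuous).intervalIntegrable _ _
  have hmono : ∫ t in (0 : ℝ)..L (φ n), G m (γ (φ n) t) ≤
      ∫ t in (0 : ℝ)..L (φ n), G (φ n) (γ (φ n) t) :=
    intervalIntegral.integral_mono_on (hL _).1 (hint m) (hint (φ n))
      fun t _ ↦ hA.monotone _ (hn.trans (hφ.id_le n))
  linarith [hcost (φ n)]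

theorem exists_sub_le_travelCost [ProperSpace X] (hG : IsGeodesic X) (hN : IsClosed N)
    (hA : LipschitzApprox η g G) (hη : 0 < η) (hgN : ∀ x ∉ N, g x = ⊤) {K : ℝ≥0}
    (hu : LipschitzOnWith K u N) (hug : ∀ x ∈ N, lipConst u x ≤ g x) (hT : ∀ y ∈ N, -T ≤ u y)
    {x : X} (hx : x ∈ N) {ε : ℝ} (hε : 0 < ε) : ∃ n, u x - ε ≤ travelCost (G n) u N x := by
  by_contra! hlt
  obtain ⟨ℓ, hℓ, τ, hτ, rfl, hτN, hcost⟩ :=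
    exists_curve_forall_cost_le hG hN ⟨x, hx⟩ hA hη hu.continuousOn hT hlt
  have hbound (m : ℕ) : ∫ t in (0 : ℝ)..ℓ, G m (τ t) ≤ u (τ 0) - ε - u (τ ℓ) := by
    linarith [hcost m]
  have hint := hA.lintegral_comp_le hη.le hτ.continuous hℓ hbound
  have hmaps : MapsTo τ (Icc 0 ℓ) N := mapsTo_of_lintegral_comp_ne_top hN hgN hτ.continuous
    (hA.measurable_comp hτ.continuous) hx hτN (ne_top_of_le_ne_top ENNReal.ofReal_ne_top hint)
  have hle : ENNReal.ofReal |u (τ 0) - u (τ ℓ)| ≤ ENNReal.ofReal (u (τ 0) - ε - u (τ ℓ)) := by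
    refine (ofReal_abs_sub_le_lintegral_lipConst hℓ hτ.lipschitzOnWith
      (hu.mono hmaps.image_subset)).trans ((setLIntegral_mono' measurableSet_Ioc fun t ht ↦
        hug _ (hmaps ⟨ht.1.le, ht.2⟩)).trans hint)
  have hpos : 0 ≤ ∫ t in (0 : ℝ)..ℓ, G 0 (τ t) :=
    intervalIntegral.integral_nonneg (μ := volume) hℓ fun t _ ↦ hA.nonneg hη.le _ _
  rw [ENNReal.ofReal_le_ofReal_iff (hpos.trans (hbound 0))] at hle
  linarith [le_abs_self (u (τ 0) - u (τ ℓ))]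

end MinimizingCurves

section LscMajorant

theorem lowerSemicontinuous_piecewise_top {X : Type u} [TopologicalSpace X] {K : Set X}
    [DecidablePred (· ∈ K)] (hK : IsClosed K) {g : X → ℝ≥0∞} (hg : LowerSemicontinuous g) :
    LowerSemicontinuous (K.piecewise g fun _ ↦ ⊤) := by
  intro x c hc
  by_cases hx : x ∈ K
  · rw [piecewise_eq_of_mem _ _ _ hx] at hc
    filter_upwards [hg x c hc] with y hy
    exact hy.trans_le (by by_cases hyK : y ∈ K <;> simp [hyK])
  · rw [piecewise_eq_of_notMem _ _ _ hx] at hc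
    filter_upwards [hK.isOpen_compl.mem_nhds hx] with y hy
    rwa [piecewise_eq_of_notMem _ _ _ hy]

theorem exists_lowerSemicontinuous_majorant {X : Type u} [PseudoMetricSpace X] [MeasurableSpace X]
    [BorelSpace X] {μ : Measure X} {K : Set X} (hK : IsClosed K) (hμK : μ K ≠ ⊤)
    {m : X → ℝ≥0∞} (hm : Measurable m) {ε : ℝ≥0∞} (hε : ε ≠ 0) :
    ∃ (η : ℝ) (g : X → ℝ≥0∞), 0 < η ∧ LowerSemicontinuous g ∧ (∀ x, ENNReal.ofReal η ≤ g x) ∧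
      (∀ x ∈ K, m x ≤ g x) ∧ (∀ x ∉ K, g x = ⊤) ∧
      ∫⁻ x in K, g x ∂μ ≤ (∫⁻ x in K, m x ∂μ) + ε := by
  classical
  have hε2 : ε / 2 ≠ 0 := by simpa using hε
  obtain ⟨η, hη, hηK⟩ := ENNReal.exists_nnreal_pos_mul_lt hμK hε2
  have : IsFiniteMeasure (μ.restrict K) := isFiniteMeasure_restrict.2 hμK
  obtain ⟨g, hmg, hg, hgint⟩ := exists_le_lowerSemicontinuous_lintegral_ge (μ.restrict K)
    (fun x ↦ m x + η) (hm.add_const _) hε2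
  refine ⟨η, K.piecewise g fun _ ↦ ⊤, hη, lowerSemicontinuous_piecewise_top hK hg,
    fun x ↦ ?_, fun x hx ↦ ?_, fun x hx ↦ piecewise_eq_of_notMem _ _ _ hx, ?_⟩
  · rw [ENNReal.ofReal_coe_nnreal]
    by_cases hx : x ∈ K
    · simpa [hx] using le_add_self.trans (hmg x)
    · simp [hx]
  · simpa [hx] using le_self_add.trans (hmg x)
  · calc ∫⁻ x in K, K.piecewise g (fun _ ↦ ⊤) x ∂μ = ∫⁻ x in K, g x ∂μ :=
          setLIntegral_congr_fun hK.measurableSet fun x hx ↦ piecewise_eq_of_mem _ _ _ hx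
      _ ≤ (∫⁻ x in K, m x + η ∂μ) + ε / 2 := hgint
      _ = (∫⁻ x in K, m x ∂μ) + η * μ K + ε / 2 := by
          rw [lintegral_add_left hm, setLIntegral_const]
      _ ≤ (∫⁻ x in K, m x ∂μ) + ε / 2 + ε / 2 := by gcongr
      _ = (∫⁻ x in K, m x ∂μ) + ε := by rw [add_assoc, ENNReal.add_halves]

theorem ptLipLE_const {X : Type u} [PseudoMetricSpace X] (c : ℝ) (x : X) :
    PtLipLE (fun _ ↦ c) x 0 := fun ε hε ↦ .of_forall fun y ↦ by
    simp only [sub_self, abs_zero, zero_add]; positivity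

theorem GradPair.zero {X : Type u} [PseudoMetricSpace X] :
    GradPair (fun _ : X ↦ (0 : ℝ)) fun _ ↦ 0 :=
  ⟨.const 0, .const 0, fun _ ↦ le_rfl, ptLipLE_const 0⟩

theorem LocallyLipschitzOnSet.continuousOn {X : Type u} [PseudoMetricSpace X] {u : X → ℝ}
    {W : Set X} (hu : LocallyLipschitzOnSet u W) (hW : IsOpen W) : ContinuousOn u W := by
  intro x hx
  obtain ⟨δ, hδ, hball⟩ := Metric.nhds_basis_closedBall.mem_iff.1 (hW.mem_nhds hx)
  obtain ⟨L, hL⟩ := hu _ isClosed_closedBall isBounded_closedBall hball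
  exact (hL.continuousOn.continuousAt (closedBall_mem_nhds x hδ)).continuousWithinAt

theorem lintegral_ofReal_abs_sub_le_add {α : Type*} [MeasurableSpace α] {μ : Measure α}
    {f g : α → ℝ} (hf : AEMeasurable f μ) (hg : AEMeasurable g μ) (h : α → ℝ) :
    ∫⁻ x, ENNReal.ofReal |f x - h x| ∂μ ≤
      (∫⁻ x, ENNReal.ofReal |f x - g x| ∂μ) + ∫⁻ x, ENNReal.ofReal |g x - h x| ∂μ := by
  have hmeas : AEMeasurable (fun x ↦ ENNReal.ofReal |f x - g x|) μ :=
    (hf.sub hg).abs.ennreal_ofReal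
  rw [← lintegral_add_left' hmeas]
  refine lintegral_mono fun x ↦ ?_
  rw [← ENNReal.ofReal_add (abs_nonneg _) (abs_nonneg _)]
  exact ENNReal.ofReal_le_ofReal (abs_sub_le _ _ _)

end LscMajorant

section LocalApproximation

variable {X : Type u} [MetricSpace X] [ProperSpace X] {η : ℝ} {g : X → ℝ≥0∞} {G : ℕ → X → ℝ}
  {u : X → ℝ} {K : Set X} {T : ℝ}

theorem tendsto_min_travelCost (hG : IsGeodesic X) (hK : IsClosed K) (hA : LipschitzApprox η g G)
    (hη : 0 < η) (hgK : ∀ x ∉ K, g x = ⊤) {L : ℝ≥0} (hu : LipschitzOnWith L u K)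
    (hug : ∀ x ∈ K, lipConst u x ≤ g x) (hT : ∀ x ∈ K, |u x| ≤ T) {x : X} (hx : x ∈ K) :
    Tendsto (fun n ↦ min T (travelCost (G n) u K x)) atTop (𝓝 (u x)) := by
  have hlow : ∀ y ∈ K, -T ≤ u y := fun y hy ↦ (abs_le.1 (hT y hy)).1
  refine tendsto_order.2 ⟨fun a ha ↦ ?_, fun a ha ↦ .of_forall fun n ↦ ((min_le_right _ _).trans
    (travelCost_le_of_mem (hA.nonneg hη.le n) hlow hx)).trans_lt ha⟩
  obtain ⟨n₀, hn₀⟩ := exists_sub_le_travelCost hG hK hA hη hgK hu hug hlow hx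
    (show 0 < (u x - a) / 2 by linarith)
  filter_upwards [eventually_ge_atTop n₀] with n hn
  have hmono := travelCost_mono hG ⟨x, hx⟩ (hA.continuous n₀) (hA.nonneg hη.le n₀)
    (hA.continuous n) (fun y ↦ hA.monotone y hn) hlow x
  exact lt_min (ha.trans_le (abs_le.1 (hT x hx)).2) (by linarith)

variable [MeasurableSpace X] [BorelSpace X] {μ : Measure X} [IsLocallyFiniteMeasure μ]

theorem tendsto_lintegral_min_travelCost_sub (hG : IsGeodesic X) (hK : IsCompact K)
    (hA : LipschitzApprox η g G) (hη : 0 < η) (hgK : ∀ x ∉ K, g x = ⊤) {L : ℝ≥0}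
    (hu : LipschitzOnWith L u K) (hug : ∀ x ∈ K, lipConst u x ≤ g x) (hT : ∀ x ∈ K, |u x| ≤ T) :
    Tendsto (fun n ↦ ∫⁻ x in K, ENNReal.ofReal |min T (travelCost (G n) u K x) - u x| ∂μ) atTop
      (𝓝 0) := by
  rcases K.eq_empty_or_nonempty with rfl | hne
  · simp
  have hKm := hK.isClosed.measurableSet
  have hlow : ∀ y ∈ K, -T ≤ u y := fun y hy ↦ (abs_le.1 (hT y hy)).1
  have hpair (n : ℕ) : GradPair (fun x ↦ min T (travelCost (G n) u K x)) (G n) :=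
    gradPair_min_travelCost hG hne (hA.bddLipschitz n) (hA.nonneg hη.le n) hlow
  rw [← lintegral_zero (μ := μ.restrict K)]
  refine tendsto_lintegral_of_dominated_convergence' (fun _ ↦ ENNReal.ofReal (2 * T))
    (fun n ↦ ((hpair n).continuous_fun.measurable.aemeasurable.sub
      (hu.continuousOn.aemeasurable hKm)).abs.ennreal_ofReal)
    (fun n ↦ (ae_restrict_iff' hKm).2 (ae_of_all _ fun x hx ↦ ENNReal.ofReal_le_ofReal ?_)) ?_
    ((ae_restrict_iff' hKm).2 (ae_of_all _ fun x hx ↦ ?_))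
  · have hle : min T (travelCost (G n) u K x) ≤ T := min_le_left _ _
    have hux := abs_le.1 (hT x hx)
    have hge : -T ≤ min T (travelCost (G n) u K x) :=
      le_min (by linarith) (neg_le_travelCost hG hne (hA.nonneg hη.le n) hlow x)
    exact abs_le.2 ⟨by linarith, by linarith⟩
  · rw [setLIntegral_const]
    exact ENNReal.mul_ne_top ENNReal.ofReal_ne_top hK.measure_lt_top.ne
  · simpa using ENNReal.tendsto_ofReal
      ((tendsto_min_travelCost hG hK.isClosed hA hη hgK hu hug hT hx).sub_const (u x)).abs

theorem exists_gradPair_of_locallyLipschitz (hG : IsGeodesic X) {W : Set X} (hW : IsOpen W)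
    (hK : IsCompact K) (hKW : K ⊆ W) (hu : LocallyLipschitzOnSet u W) {ε : ℝ≥0∞} (hε : ε ≠ 0) :
    ∃ w v : X → ℝ, GradPair w v ∧
      ∫⁻ x in K, ENNReal.ofReal (v x) ∂μ ≤ (∫⁻ x in W, lipConst u x ∂μ) + ε ∧
      ∫⁻ x in K, ENNReal.ofReal |w x - u x| ∂μ ≤ ε := by
  rcases K.eq_empty_or_nonempty with rfl | hne
  · exact ⟨_, _, .zero, by simp, by simp⟩
  have huc : ContinuousOn u W := hu.continuousOn hW
  obtain ⟨L, hL⟩ := hu K hK.isClosed hK.isBounded hKW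
  obtain ⟨T, hT⟩ := hK.exists_bound_of_continuousOn (huc.mono hKW)
  obtain ⟨m, hm, hmu⟩ := exists_measurable_eqOn_lipConst hW huc
  obtain ⟨η, g, hη, hg, hgη, hmg, hgK, hgint⟩ := exists_lowerSemicontinuous_majorant (μ := μ)
    hK.isClosed hK.measure_lt_top.ne hm hε
  obtain ⟨G, hA⟩ := exists_lipschitzApprox hg hη.le hgη
  have hug : ∀ x ∈ K, lipConst u x ≤ g x := fun x hx ↦ hmu (hKW hx) ▸ hmg x hx
  obtain ⟨n, hn⟩ := ((tendsto_lintegral_min_travelCost_sub (μ := μ) hG hK hA hη hgK hL hug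
    hT).eventually_lt_const (pos_iff_ne_zero.2 hε)).exists
  refine ⟨_, G n, gradPair_min_travelCost hG hne (hA.bddLipschitz n) (hA.nonneg hη.le n)
    fun y hy ↦ (abs_le.1 (hT y hy)).1, ?_, hn.le⟩
  calc ∫⁻ x in K, ENNReal.ofReal (G n x) ∂μ
      ≤ ∫⁻ x in K, g x ∂μ := lintegral_mono fun x ↦ hA.ofReal_le n x
    _ ≤ (∫⁻ x in K, m x ∂μ) + ε := hgint
    _ ≤ (∫⁻ x in W, lipConst u x ∂μ) + ε := by
        rw [setLIntegral_congr_fun hK.isClosed.measurableSet fun x hx ↦ hmu (hKW hx)]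
        gcongr

theorem exists_gradPair_of_totVarOn (hG : IsGeodesic X) {W : Set X} (hW : IsOpen W)
    (hK : IsCompact K) (hKW : K ⊆ W) {f : X → ℝ} (hfin : totVarOn μ f W ≠ ⊤) {ε : ℝ≥0∞}
    (hε : ε ≠ 0) :
    ∃ w v : X → ℝ, GradPair w v ∧
      ∫⁻ x in K, ENNReal.ofReal (v x) ∂μ ≤ totVarOn μ f W + ε ∧
      ∫⁻ x in K, ENNReal.ofReal |w x - f x| ∂μ ≤ ε := by
  have hε2 : ε / 2 ≠ 0 := by simpa using hε
  have hlt : totVarOn μ f W < totVarOn μ f W + ε / 2 := ENNReal.lt_add_right hfin hε2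
  simp only [totVarOn, iInf_lt_iff] at hlt
  obtain ⟨us, hus, hconv, hliminf⟩ := hlt
  have hclose := (hconv K hK.isClosed hK.isBounded hKW).eventually_lt_const (pos_iff_ne_zero.2 hε2)
  obtain ⟨i, hlip, hi⟩ :=
    ((frequently_lt_of_liminf_lt (by isBoundedDefault) hliminf).and_eventually hclose).exists
  obtain ⟨w, v, hwv, hv, hwu⟩ :=
    exists_gradPair_of_locallyLipschitz (μ := μ) hG hW hK hKW (hus i) hε2
  refine ⟨w, v, hwv, ?_, ?_⟩
  · calc _ ≤ totVarOn μ f W + ε / 2 + ε / 2 := hv.trans (by gcongr; exact hlip.le)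
      _ = totVarOn μ f W + ε := by rw [add_assoc, ENNReal.add_halves]
  · refine (lintegral_ofReal_abs_sub_le_add hwv.continuous_fun.measurable.aemeasurable
      (((hus i).continuousOn hW).mono hKW |>.aemeasurable hK.isClosed.measurableSet) f).trans ?_
    exact (add_le_add hwu hi.le).trans_eq (ENNReal.add_halves ε)

end LocalApproximation

section Tent

variable {X : Type u} [PseudoMetricSpace X]

/-- The tent function of height and radius one around `x`. -/
def tent (x y : X) : ℝ := max 0 (1 - dist x y)

theorem tent_nonneg (x y : X) : 0 ≤ tent x y := le_max_left _ _

theorem tent_le_one (x y : X) : tent x y ≤ 1 :=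
  max_le zero_le_one (by linarith [dist_nonneg (x := x) (y := y)])

theorem tent_eq_zero {x y : X} (h : 1 ≤ dist x y) : tent x y = 0 :=
  max_eq_left (by linarith)

theorem continuous_tent (x : X) : Continuous (tent x) := by
  unfold tent
  fun_prop

theorem abs_tent_sub_tent_le (x x' y : X) : |tent x' y - tent x y| ≤ dist x x' := by
  unfold tent
  rw [max_comm, max_comm 0]
  refine (abs_max_sub_max_le_abs _ _ _).trans ?_
  rw [show 1 - dist x' y - (1 - dist x y) = dist x y - dist x' y by ring]
  exact abs_dist_sub_le _ _ _

theorem tent_eq_zero_of_notMem_ball {x x' y : X} (hd : dist x x' ≤ 1 / 2)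
    (hy : y ∉ ball x (3 / 2)) : tent x' y = 0 := by
  rw [mem_ball', not_lt] at hy
  exact tent_eq_zero (by linarith [dist_triangle x x' y])

theorem abs_tent_sub_tent_le_indicator {x x' : X} (hd : dist x x' ≤ 1 / 2) (y : X) :
    |tent x' y - tent x y| ≤ (ball x (3 / 2)).indicator (fun _ ↦ dist x x') y := by
  by_cases hy : y ∈ ball x (3 / 2)
  · rw [indicator_of_mem hy]
    exact abs_tent_sub_tent_le x x' y
  · rw [indicator_of_notMem hy, tent_eq_zero_of_notMem_ball hd hy,
      tent_eq_zero_of_notMem_ball (by simp) hy, sub_self, abs_zero]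

variable [MeasurableSpace X] {μ : Measure X} {Cd : ℝ≥0}

theorem IsDoublingWith.measureReal_ball_pos (h : IsDoublingWith μ Cd) (x : X) {r : ℝ}
    (hr : 0 < r) : 0 < μ.real (ball x r) :=
  ENNReal.toReal_pos (h.measure_ball_pos x hr).ne' (h.measure_ball_lt_top x r).ne

variable [BorelSpace X]

theorem IsDoublingWith.integrable_indicator_ball (h : IsDoublingWith μ Cd) (x : X) (r c : ℝ) :
    Integrable ((ball x r).indicator fun _ ↦ c) μ :=
  (integrable_indicator_iff measurableSet_ball).2
    (integrableOn_const (h.measure_ball_lt_top x r).ne)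

theorem IsDoublingWith.integrable_tent (h : IsDoublingWith μ Cd) (x : X) :
    Integrable (tent x) μ := by
  refine (h.integrable_indicator_ball x 1 1).mono'
    (continuous_tent x).measurable.aestronglyMeasurable (ae_of_all _ fun y ↦ ?_)
  rw [Real.norm_of_nonneg (tent_nonneg x y)]
  by_cases hy : y ∈ ball x 1
  · rw [indicator_of_mem hy]
    exact tent_le_one x y
  · rw [indicator_of_notMem hy]
    exact (tent_eq_zero (not_lt.1 (mt mem_ball'.2 hy))).le

theorem IsDoublingWith.measureReal_ball_le_integral_tent (h : IsDoublingWith μ Cd) {x y : X} {s : ℝ}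
    (n : ℕ) (hs : s + dist x y ≤ 2 ^ n * (1 / 2)) :
    μ.real (ball x s) ≤ 2 * Cd ^ n * ∫ z, tent y z ∂μ := by
  have hdoubling : μ.real (ball x s) ≤ Cd ^ n * μ.real (ball y (1 / 2)) := by
    have := ENNReal.toReal_mono (ENNReal.mul_ne_top (by finiteness) (h.measure_ball_lt_top y _).ne)
      (h.measure_ball_le_of_add_dist_le one_half_pos n hs)
    simpa [Measure.real] using this
  have hhalf : μ.real (ball y (1 / 2)) * (1 / 2) ≤ ∫ z, tent y z ∂μ := by
    rw [← smul_eq_mul, ← setIntegral_const, ← integral_indicator measurableSet_ball]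
    refine integral_mono (h.integrable_indicator_ball _ _ _) (h.integrable_tent y) fun z ↦ ?_
    refine indicator_apply_le' (fun hz ↦ ?_) fun _ ↦ tent_nonneg y z
    exact le_max_of_le_right (by linarith [mem_ball'.1 hz])
  calc μ.real (ball x s) ≤ Cd ^ n * μ.real (ball y (1 / 2)) := hdoubling
    _ = 2 * Cd ^ n * (μ.real (ball y (1 / 2)) * (1 / 2)) := by ring
    _ ≤ 2 * Cd ^ n * ∫ z, tent y z ∂μ := by gcongr

theorem IsDoublingWith.integral_tent_pos (h : IsDoublingWith μ Cd) (x : X) :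
    0 < ∫ y, tent x y ∂μ := by
  have hle := h.measureReal_ball_le_integral_tent (x := x) (y := x) (s := 1 / 2) 0 (by simp)
  have hpos := h.measureReal_ball_pos x one_half_pos
  rw [pow_zero, mul_one] at hle
  linarith

theorem IsDoublingWith.abs_integral_tent_sub_le (h : IsDoublingWith μ Cd) {x x' : X}
    (hd : dist x x' ≤ 1 / 2) :
    |∫ y, tent x y ∂μ - ∫ y, tent x' y ∂μ| ≤ dist x x' * μ.real (ball x (3 / 2)) := by
  rw [abs_sub_comm, ← integral_sub (h.integrable_tent x') (h.integrable_tent x),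
    ← Real.norm_eq_abs]
  refine (norm_integral_le_of_norm_le (h.integrable_indicator_ball x (3 / 2) (dist x x'))
    (ae_of_all _ fun y ↦
      (Real.norm_eq_abs _).trans_le (abs_tent_sub_tent_le_indicator hd y))).trans_eq ?_
  rw [integral_indicator measurableSet_ball, setIntegral_const, smul_eq_mul, mul_comm]

end Tent

section AvgKernel

theorem abs_div_sub_div_le {a a' k k' m δ C : ℝ} (ha : 0 ≤ a) (ha1 : a ≤ 1) (hk : 0 < k)
    (hk' : 0 < k') (hm : 0 < m) (haa' : |a' - a| ≤ δ) (hkk' : |k - k'| ≤ δ * m)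
    (hmk : m ≤ C * k) (hmk' : m ≤ C * k') : |a' / k' - a / k| ≤ (C + C ^ 2) * δ / m := by
  have hC : 0 < C := pos_of_mul_pos_left (hm.trans_le hmk) hk.le
  have hδ : 0 ≤ δ := (abs_nonneg _).trans haa'
  have : 0 < m / C := div_pos hm hC
  have hdecomp : a' / k' - a / k = (a' - a) / k' + a * (k - k') / (k * k') := by
    field_simp
    ring
  calc |a' / k' - a / k| ≤ |a' - a| / k' + a * |k - k'| / (k * k') := by
        rw [hdecomp]
        refine (abs_add_le _ _).trans_eq ?_
        rw [abs_div, abs_div, abs_mul, abs_of_pos hk', abs_of_pos (mul_pos hk hk'),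
          abs_of_nonneg ha]
    _ ≤ δ / (m / C) + 1 * (δ * m) / ((m / C) * (m / C)) := by
        gcongr <;> rwa [div_le_iff₀' hC]
    _ = (C + C ^ 2) * δ / m := by field_simp

variable {X : Type u} [PseudoMetricSpace X] [MeasurableSpace X] {μ : Measure X} {Cd : ℝ≥0}

/-- The averaging kernel at scale one, obtained by normalizing the tent functions. -/
def avgKernel (μ : Measure X) (x y : X) : ℝ := tent x y / ∫ z, tent x z ∂μ

/-- The relative Lipschitz constant of `avgKernel` in its first variable, for a measure that is
doubling with constant `Cd`. -/
def avgKernelConst (Cd : ℝ≥0) : ℝ≥0 := 2 * Cd ^ 2 + (2 * Cd ^ 2) ^ 2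

theorem avgKernel_nonneg (x y : X) : 0 ≤ avgKernel μ x y :=
  div_nonneg (tent_nonneg _ _) (integral_nonneg fun z ↦ tent_nonneg x z)

theorem avgKernel_eq_zero {x y : X} (h : 1 ≤ dist x y) : avgKernel μ x y = 0 := by
  simp [avgKernel, tent_eq_zero h]

variable [BorelSpace X]

theorem IsDoublingWith.integrable_avgKernel (h : IsDoublingWith μ Cd) (x : X) :
    Integrable (avgKernel μ x) μ := (h.integrable_tent x).div_const _

theorem IsDoublingWith.integral_avgKernel (h : IsDoublingWith μ Cd) (x : X) :
    ∫ y, avgKernel μ x y ∂μ = 1 := by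
  unfold avgKernel
  rw [integral_div, div_self (h.integral_tent_pos x).ne']

theorem IsDoublingWith.abs_avgKernel_le (h : IsDoublingWith μ Cd) (x y : X) :
    |avgKernel μ x y| ≤ (ball x 1).indicator (fun _ ↦ 2 * Cd / μ.real (ball x 1)) y := by
  rw [abs_of_nonneg (avgKernel_nonneg x y)]
  by_cases hy : y ∈ ball x 1
  · have hball := h.measureReal_ball_le_integral_tent (x := x) (y := x) (s := 1) 1 (by norm_num)
    rw [indicator_of_mem hy, avgKernel, div_le_div_iff₀ (h.integral_tent_pos x)
      (h.measureReal_ball_pos x one_pos)]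
    rw [pow_one] at hball
    exact (mul_le_of_le_one_left measureReal_nonneg (tent_le_one x y)).trans hball
  · rw [indicator_of_notMem hy]
    exact (avgKernel_eq_zero (not_lt.1 (mt mem_ball'.2 hy))).le

theorem IsDoublingWith.abs_avgKernel_sub_le (h : IsDoublingWith μ Cd) {x x' : X}
    (hd : dist x x' ≤ 1 / 2) (y : X) :
    |avgKernel μ x' y - avgKernel μ x y| ≤ (ball x (3 / 2)).indicator
      (fun _ ↦ avgKernelConst Cd * dist x x' / μ.real (ball x (3 / 2))) y := by
  by_cases hy : y ∈ ball x (3 / 2)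
  · rw [indicator_of_mem hy]
    have hle {z : X} (hz : dist x z ≤ 1 / 2) :
        μ.real (ball x (3 / 2)) ≤ 2 * Cd ^ 2 * ∫ w, tent z w ∂μ :=
      h.measureReal_ball_le_integral_tent 2 (by linarith)
    exact_mod_cast abs_div_sub_div_le (tent_nonneg x y) (tent_le_one x y) (h.integral_tent_pos x)
      (h.integral_tent_pos x') (h.measureReal_ball_pos x (by norm_num))
      (abs_tent_sub_tent_le x x' y) (h.abs_integral_tent_sub_le hd) (hle (by simp)) (hle hd)
  · rw [indicator_of_notMem hy, avgKernel, avgKernel, tent_eq_zero_of_notMem_ball hd hy,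
      tent_eq_zero_of_notMem_ball (by simp) hy]
    simp

end AvgKernel

section LAverage

variable {α : Type*} [MeasurableSpace α] {μ : Measure α}

theorem laverage_le_of_forall_le {f : α → ℝ≥0∞} {c : ℝ≥0∞} (h : ∀ x, f x ≤ c) :
    ⨍⁻ x, f x ∂μ ≤ c := by
  rw [laverage_eq']
  exact (lintegral_mono h).trans
    ((lintegral_const c).trans_le (mul_le_of_le_one_right' prob_le_one))

theorem setLAverage_le_mul_of_subset {s t : Set α} {c : ℝ≥0} (hst : s ⊆ t)
    (h : μ t ≤ c * μ s) (ht : μ t ≠ ⊤) (f : α → ℝ≥0∞) :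
    ⨍⁻ x in s, f x ∂μ ≤ c * ⨍⁻ x in t, f x ∂μ := by
  rw [setLAverage_eq]
  refine ENNReal.div_le_of_le_mul ?_
  calc ∫⁻ x in s, f x ∂μ ≤ ∫⁻ x in t, f x ∂μ := lintegral_mono_set hst
    _ = μ t * ⨍⁻ x in t, f x ∂μ := (measure_mul_setLAverage f ht).symm
    _ ≤ c * μ s * ⨍⁻ x in t, f x ∂μ := by gcongr
    _ = c * (⨍⁻ x in t, f x ∂μ) * μ s := by ring

theorem ofReal_abs_integral_mul_le {s : Set α} (hs : MeasurableSet s) (hs₀ : μ s ≠ 0)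
    (hst : μ s ≠ ⊤) {k : α → ℝ} {c : ℝ} (hk : ∀ y, |k y| ≤ s.indicator (fun _ ↦ c / μ.real s) y)
    (g : α → ℝ) :
    ENNReal.ofReal |∫ y, k y * g y ∂μ| ≤
      ENNReal.ofReal c * ⨍⁻ y in s, ENNReal.ofReal |g y| ∂μ := by
  have hreal : 0 < μ.real s := ENNReal.toReal_pos hs₀ hst
  have hinv : ENNReal.ofReal (c / μ.real s) = ENNReal.ofReal c * (μ s)⁻¹ := by
    rw [ENNReal.ofReal_div_of_pos hreal, ofReal_measureReal hst, div_eq_mul_inv]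
  calc ENNReal.ofReal |∫ y, k y * g y ∂μ| ≤ ∫⁻ y, ENNReal.ofReal |k y * g y| ∂μ := by
        simp only [← Real.enorm_eq_ofReal_abs]
        exact enorm_integral_le_lintegral_enorm _
    _ ≤ ∫⁻ y in s, ENNReal.ofReal (c / μ.real s) * ENNReal.ofReal |g y| ∂μ := by
        rw [← lintegral_indicator hs]
        refine lintegral_mono fun y ↦ ?_
        rw [abs_mul, ENNReal.ofReal_mul (abs_nonneg _)]
        by_cases hy : y ∈ s
        · simp only [indicator_of_mem hy]
          gcongr
          exact (hk y).trans_eq (indicator_of_mem hy _)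
        · have hky : |k y| ≤ 0 := (hk y).trans_eq (indicator_of_notMem hy _)
          simp [ENNReal.ofReal_of_nonpos hky]
    _ = ENNReal.ofReal c * ⨍⁻ y in s, ENNReal.ofReal |g y| ∂μ := by
        rw [lintegral_const_mul' _ _ ENNReal.ofReal_ne_top, hinv, setLAverage_eq,
          ENNReal.div_eq_inv_mul, mul_assoc]

end LAverage

section Averaging

variable {X : Type u} [PseudoMetricSpace X] [MeasurableSpace X] {μ : Measure X} {Cd : ℝ≥0}
  {b : X → ℝ} {M : ℝ}

/-- The average of `f` at scale one, against the kernel `avgKernel`. -/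
def avg (μ : Measure X) (f : X → ℝ) (x : X) : ℝ := ∫ y, avgKernel μ x y * f y ∂μ

theorem avg_nonneg (hb : ∀ x, 0 ≤ b x) (x : X) : 0 ≤ avg μ b x :=
  integral_nonneg fun y ↦ mul_nonneg (avgKernel_nonneg x y) (hb y)

theorem avg_const_mul (c : ℝ) (f : X → ℝ) (x : X) :
    avg μ (fun y ↦ c * f y) x = c * avg μ f x := by
  simp only [avg, mul_left_comm _ c, integral_const_mul]

variable [BorelSpace X]

theorem IsDoublingWith.ofReal_abs_avg_le (h : IsDoublingWith μ Cd) (b : X → ℝ) (x : X) :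
    ENNReal.ofReal |avg μ b x| ≤ 2 * Cd * ⨍⁻ y in ball x 1, ENNReal.ofReal |b y| ∂μ := by
  have hle := ofReal_abs_integral_mul_le measurableSet_ball (h.measure_ball_pos x one_pos).ne'
    (h.measure_ball_lt_top x 1).ne (h.abs_avgKernel_le x) b
  rwa [ENNReal.ofReal_mul zero_le_two, ENNReal.ofReal_ofNat, ENNReal.ofReal_coe_nnreal] at hle

theorem IsDoublingWith.integrable_avgKernel_mul (h : IsDoublingWith μ Cd) (hb : Measurable b)
    (hM : ∀ x, |b x| ≤ M) (x : X) : Integrable (fun y ↦ avgKernel μ x y * b y) μ :=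
  (h.integrable_avgKernel x).mul_bdd hb.aestronglyMeasurable (ae_of_all _ hM)

theorem IsDoublingWith.avg_const (h : IsDoublingWith μ Cd) (c : ℝ) (x : X) :
    avg μ (fun _ ↦ c) x = c := by
  rw [avg, integral_mul_const, h.integral_avgKernel, one_mul]

theorem IsDoublingWith.avg_sub_const (h : IsDoublingWith μ Cd) (hb : Measurable b)
    (hM : ∀ x, |b x| ≤ M) (c : ℝ) (x : X) : avg μ (fun y ↦ b y - c) x = avg μ b x - c := by
  simp only [avg, mul_sub]
  exact (integral_sub (h.integrable_avgKernel_mul hb hM x)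
    ((h.integrable_avgKernel x).mul_const c)).trans (congrArg _ (h.avg_const c x))

theorem IsDoublingWith.avg_mono (h : IsDoublingWith μ Cd) {b' : X → ℝ} {M' : ℝ}
    (hb : Measurable b) (hM : ∀ x, |b x| ≤ M) (hb' : Measurable b') (hM' : ∀ x, |b' x| ≤ M')
    (x : X) (hle : ∀ y ∈ ball x 1, b y ≤ b' y) : avg μ b x ≤ avg μ b' x := by
  refine integral_mono (h.integrable_avgKernel_mul hb hM x) (h.integrable_avgKernel_mul hb' hM' x)
    fun y ↦ ?_
  by_cases hy : y ∈ ball x 1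
  · exact mul_le_mul_of_nonneg_left (hle y hy) (avgKernel_nonneg x y)
  · simp [avgKernel_eq_zero (not_lt.1 (mt mem_ball'.2 hy))]

theorem IsDoublingWith.abs_avg_le (h : IsDoublingWith μ Cd) (hb : Measurable b)
    (hM : ∀ x, |b x| ≤ M) (x : X) : |avg μ b x| ≤ M := by
  have hconst (c : ℝ) (y : X) : |(fun _ ↦ c) y| ≤ |c| := le_rfl
  refine abs_le.2 ⟨?_, ?_⟩
  · rw [← h.avg_const (-M) x]
    exact h.avg_mono measurable_const (hconst _) hb hM x fun y _ ↦ (abs_le.1 (hM y)).1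
  · rw [← h.avg_const M x]
    exact h.avg_mono hb hM measurable_const (hconst _) x fun y _ ↦ (abs_le.1 (hM y)).2

-- Both kernels have integral one, so an arbitrary constant `c` may be subtracted from `b`.
theorem IsDoublingWith.ofReal_abs_avg_sub_avg_le (h : IsDoublingWith μ Cd) (hb : Measurable b)
    (hM : ∀ x, |b x| ≤ M) {x x' : X} (hd : dist x x' ≤ 1 / 2) (c : ℝ) :
    ENNReal.ofReal |avg μ b x' - avg μ b x| ≤ ENNReal.ofReal (avgKernelConst Cd * dist x x') *
      ⨍⁻ y in ball x (3 / 2), ENNReal.ofReal |b y - c| ∂μ := by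
  have hbc : ∀ y, |b y - c| ≤ M + |c| := fun y ↦ (abs_sub _ _).trans (by gcongr; exact hM y)
  have hdiff : avg μ b x' - avg μ b x =
      ∫ y, (avgKernel μ x' y - avgKernel μ x y) * (b y - c) ∂μ := by
    simp only [sub_mul _ _ (b _ - c)]
    rw [integral_sub (h.integrable_avgKernel_mul (hb.sub_const c) hbc x')
      (h.integrable_avgKernel_mul (hb.sub_const c) hbc x)]
    exact (sub_sub_sub_cancel_right _ _ c).symm.trans
      (congrArg₂ (· - ·) (h.avg_sub_const hb hM c x').symm (h.avg_sub_const hb hM c x).symm)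
  rw [hdiff]
  exact ofReal_abs_integral_mul_le measurableSet_ball (h.measure_ball_pos x (by norm_num)).ne'
    (h.measure_ball_lt_top x _).ne (h.abs_avgKernel_sub_le hd) _

theorem IsDoublingWith.isBddLipschitz_avg (h : IsDoublingWith μ Cd) (hb : Measurable b)
    (hM : ∀ x, |b x| ≤ M) : IsBddLipschitz (avg μ b) := by
  refine ⟨⟨(max (avgKernelConst Cd * M) (4 * M)).toNNReal,
    LipschitzWith.of_dist_le' fun x x' ↦ ?_⟩, M, h.abs_avg_le hb hM⟩
  have hM0 : 0 ≤ M := (abs_nonneg _).trans (hM x)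
  rw [dist_comm, Real.dist_eq]
  rcases le_total (dist x x') (1 / 2) with hd | hd
  · have hnear : |avg μ b x' - avg μ b x| ≤ avgKernelConst Cd * dist x x' * M := by
      rw [← ENNReal.ofReal_le_ofReal_iff (by positivity), ENNReal.ofReal_mul (by positivity)]
      refine (h.ofReal_abs_avg_sub_avg_le hb hM hd 0).trans ?_
      gcongr
      exact laverage_le_of_forall_le fun y ↦ ENNReal.ofReal_le_ofReal (by simpa using hM y)
    calc |avg μ b x' - avg μ b x| ≤ avgKernelConst Cd * M * dist x x' := by linarith
      _ ≤ max (avgKernelConst Cd * M) (4 * M) * dist x x' := by gcongr; exact le_max_left _ _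
  · calc |avg μ b x' - avg μ b x| ≤ |avg μ b x'| + |avg μ b x| := abs_sub _ _
      _ ≤ M + M := add_le_add (h.abs_avg_le hb hM x') (h.abs_avg_le hb hM x)
      _ ≤ 4 * M * dist x x' := by nlinarith
      _ ≤ max (avgKernelConst Cd * M) (4 * M) * dist x x' := by gcongr; exact le_max_right _ _

end Averaging

section BallAverages

variable {X : Type u} [PseudoMetricSpace X] [MeasurableSpace X] {μ : Measure X} {Cd : ℝ≥0}
  {r : ℝ}

theorem IsDoublingWith.inv_measure_ball_le {x y : X} (h : IsDoublingWith μ Cd) (hr : 0 < r)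
    (hxy : dist x y < r) : (μ (ball y r))⁻¹ ≤ Cd * (μ (ball x r))⁻¹ := by
  have hle := h.measure_ball_le_of_add_dist_le hr 1 (s := r) (x := x) (y := y) (by linarith)
  rw [pow_one] at hle
  rw [← ENNReal.inv_mul_le_iff (h.const_ne_zero x) ENNReal.coe_ne_top,
    ← ENNReal.mul_inv (.inl (h.const_ne_zero x)) (.inl ENNReal.coe_ne_top)]
  exact ENNReal.inv_le_inv' hle

variable [BorelSpace X] [SecondCountableTopology X] [SFinite μ]

theorem measurableSet_setOf_dist_lt (r : ℝ) : MeasurableSet {p : X × X | dist p.2 p.1 < r} :=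
  measurableSet_lt (by fun_prop) measurable_const

theorem measurable_measure_ball (r : ℝ) : Measurable fun x ↦ μ (ball x r) :=
  measurable_measure_prodMk_left (measurableSet_setOf_dist_lt r)

theorem measurable_setLAverage_ball {α : Type*} [MeasurableSpace α] {c : α → X}
    (hc : Measurable c) {F : α × X → ℝ≥0∞} (hF : Measurable F) (r : ℝ) :
    Measurable fun a ↦ ⨍⁻ y in ball (c a) r, F (a, y) ∂μ := by
  have hs : MeasurableSet {p : α × X | dist p.2 (c p.1) < r} :=
    measurableSet_lt (measurable_snd.dist (hc.comp measurable_fst)) measurable_const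
  have hind (a : α) : (ball (c a) r).indicator (fun y ↦ F (a, y)) =
      fun y ↦ {p : α × X | dist p.2 (c p.1) < r}.indicator F (a, y) := rfl
  simp only [setLAverage_eq, ← lintegral_indicator measurableSet_ball, hind]
  exact (hF.indicator hs).lintegral_prod_right'.div ((measurable_measure_ball r).comp hc)

theorem lintegral_setLAverage_ball {F : X → ℝ≥0∞} (hF : Measurable F) (r : ℝ) :
    ∫⁻ x, ⨍⁻ y in ball x r, F y ∂μ ∂μ = ∫⁻ y, F y * ∫⁻ x in ball y r, (μ (ball x r))⁻¹ ∂μ ∂μ := by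
  have hm : Measurable fun p : X × X ↦ F p.2 * (μ (ball p.1 r))⁻¹ :=
    (hF.comp measurable_snd).mul ((measurable_measure_ball r).inv.comp measurable_fst)
  calc ∫⁻ x, ⨍⁻ y in ball x r, F y ∂μ ∂μ
      = ∫⁻ x, ∫⁻ y, (ball x r).indicator (fun y ↦ F y * (μ (ball x r))⁻¹) y ∂μ ∂μ := by
        simp only [lintegral_indicator measurableSet_ball, lintegral_mul_const _ hF,
          setLAverage_eq, div_eq_mul_inv]
    _ = ∫⁻ y, ∫⁻ x, (ball x r).indicator (fun y ↦ F y * (μ (ball x r))⁻¹) y ∂μ ∂μ :=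
        lintegral_lintegral_swap (hm.indicator (measurableSet_setOf_dist_lt r)).aemeasurable
    _ = ∫⁻ y, F y * ∫⁻ x in ball y r, (μ (ball x r))⁻¹ ∂μ ∂μ := by
        have hinv : Measurable fun x ↦ (μ (ball x r))⁻¹ := (measurable_measure_ball r).inv
        refine lintegral_congr fun y ↦ ?_
        rw [← lintegral_const_mul _ hinv, ← lintegral_indicator measurableSet_ball]
        refine lintegral_congr fun x ↦ ?_
        by_cases hx : x ∈ ball y r
        · rw [indicator_of_mem hx, indicator_of_mem (mem_ball_comm.1 hx)]
        · rw [indicator_of_notMem hx, indicator_of_notMem (mt mem_ball_comm.1 hx)]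

theorem IsDoublingWith.lintegral_setLAverage_ball_le (h : IsDoublingWith μ Cd) {F : X → ℝ≥0∞}
    (hF : Measurable F) (hr : 0 < r) :
    ∫⁻ x, ⨍⁻ y in ball x r, F y ∂μ ∂μ ≤ Cd * ∫⁻ y, F y ∂μ := by
  rw [lintegral_setLAverage_ball hF, mul_comm, ← lintegral_mul_const _ hF]
  refine lintegral_mono fun y ↦ ?_
  gcongr
  calc ∫⁻ x in ball y r, (μ (ball x r))⁻¹ ∂μ ≤ ∫⁻ _ in ball y r, Cd * (μ (ball y r))⁻¹ ∂μ :=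
        setLIntegral_mono' measurableSet_ball fun x hx ↦ h.inv_measure_ball_le hr (mem_ball'.1 hx)
    _ = Cd := by
        rw [setLIntegral_const, mul_assoc, ENNReal.inv_mul_cancel (h.measure_ball_pos y hr).ne'
          (h.measure_ball_lt_top y r).ne, mul_one]

theorem IsDoublingWith.lintegral_le_mul_lintegral_setLAverage_ball (h : IsDoublingWith μ Cd)
    {F : X → ℝ≥0∞} (hF : Measurable F) (hr : 0 < r) :
    ∫⁻ y, F y ∂μ ≤ Cd * ∫⁻ x, ⨍⁻ y in ball x r, F y ∂μ ∂μ := by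
  rw [lintegral_setLAverage_ball hF, ← lintegral_const_mul' _ _ ENNReal.coe_ne_top]
  refine lintegral_mono fun y ↦ ?_
  rw [mul_left_comm]
  refine le_mul_of_one_le_right' ?_
  calc 1 = ∫⁻ _ in ball y r, (μ (ball y r))⁻¹ ∂μ := by
        rw [setLIntegral_const, ENNReal.inv_mul_cancel (h.measure_ball_pos y hr).ne'
          (h.measure_ball_lt_top y r).ne]
    _ ≤ ∫⁻ x in ball y r, Cd * (μ (ball x r))⁻¹ ∂μ :=
        setLIntegral_mono' measurableSet_ball fun x hx ↦ h.inv_measure_ball_le hr hx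
    _ = Cd * ∫⁻ x in ball y r, (μ (ball x r))⁻¹ ∂μ :=
        lintegral_const_mul' _ _ ENNReal.coe_ne_top

end BallAverages

section MeanOsc

variable {α : Type*} [MeasurableSpace α] {ν : Measure α} {f : α → ℝ}

/-- The mean oscillation of `f` between two independent points of the measure `ν`, which is
normalised. For a ball `B` the measure `ν` is the restriction of `μ` to `B`. -/
def meanOsc (ν : Measure α) (f : α → ℝ) : ℝ≥0∞ :=
  ⨍⁻ y, ⨍⁻ w, ENNReal.ofReal |f y - f w| ∂ν ∂ν

theorem meanOsc_le_of_abs_le {T : ℝ} (hT : ∀ x, |f x| ≤ T) :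
    meanOsc ν f ≤ ENNReal.ofReal (2 * T) :=
  laverage_le_of_forall_le fun y ↦ laverage_le_of_forall_le fun w ↦
    ENNReal.ofReal_le_ofReal ((abs_sub _ _).trans (by linarith [hT y, hT w]))

theorem abs_toReal_meanOsc_le {T : ℝ} (hT : ∀ x, |f x| ≤ T) :
    |(meanOsc ν f).toReal| ≤ 2 * |T| := by
  rw [abs_of_nonneg ENNReal.toReal_nonneg]
  exact ENNReal.toReal_le_of_le_ofReal (by positivity)
    (meanOsc_le_of_abs_le fun x ↦ (hT x).trans (le_abs_self T))

theorem laverage_const_mul {c : ℝ≥0∞} (hc : c ≠ ⊤) (g : α → ℝ≥0∞) :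
    ⨍⁻ x, c * g x ∂ν = c * ⨍⁻ x, g x ∂ν := by
  simp only [laverage_eq', lintegral_const_mul' _ _ hc]

theorem meanOsc_restrict_le_of_subset {s t : Set α} {c : ℝ≥0} (hst : s ⊆ t)
    (h : ν t ≤ c * ν s) (ht : ν t ≠ ⊤) (f : α → ℝ) :
    meanOsc (ν.restrict s) f ≤ c ^ 2 * meanOsc (ν.restrict t) f :=
  calc meanOsc (ν.restrict s) f
      ≤ c * ⨍⁻ y in t, ⨍⁻ w in s, ENNReal.ofReal |f y - f w| ∂ν ∂ν :=
        setLAverage_le_mul_of_subset hst h ht _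
    _ ≤ c * ⨍⁻ y in t, c * ⨍⁻ w in t, ENNReal.ofReal |f y - f w| ∂ν ∂ν := by
        gcongr c * ?_
        exact laverage_mono_ae (ae_of_all _ fun y ↦ setLAverage_le_mul_of_subset hst h ht _)
    _ = c ^ 2 * meanOsc (ν.restrict t) f := by
        rw [laverage_const_mul ENNReal.coe_ne_top, sq, mul_assoc, meanOsc]

theorem meanOsc_le_add {u : α → ℝ} (hf : Measurable f) (hu : Measurable u) :
    meanOsc ν f ≤ meanOsc ν u + 2 * ⨍⁻ y, ENNReal.ofReal |u y - f y| ∂ν := by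
  have hd : Measurable fun y ↦ ENNReal.ofReal |u y - f y| := (hu.sub hf).abs.ennreal_ofReal
  have htri (y w : α) : ENNReal.ofReal |f y - f w| ≤
      ENNReal.ofReal |u y - f y| +
        (ENNReal.ofReal |u w - f w| + ENNReal.ofReal |u y - u w|) := by
    rw [← ENNReal.ofReal_add (abs_nonneg _) (abs_nonneg _),
      ← ENNReal.ofReal_add (abs_nonneg _) (by positivity), abs_sub_comm (u y) (f y)]
    refine ENNReal.ofReal_le_ofReal ?_
    calc |f y - f w| = |(f y - u y) + ((u w - f w) + (u y - u w))| := by ring_nf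
      _ ≤ |f y - u y| + (|u w - f w| + |u y - u w|) :=
        (abs_add_le _ _).trans (by gcongr; exact abs_add_le _ _)
  simp only [meanOsc, laverage_eq']
  set P := (ν univ)⁻¹ • ν
  have hconst (c : ℝ≥0∞) : ∫⁻ _, c ∂P ≤ c := by
    rw [lintegral_const]
    exact mul_le_of_le_one_right' prob_le_one
  set D := ∫⁻ y, ENNReal.ofReal |u y - f y| ∂P
  calc ∫⁻ y, ∫⁻ w, ENNReal.ofReal |f y - f w| ∂P ∂P
      ≤ ∫⁻ y, (ENNReal.ofReal |u y - f y| +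
          (D + ∫⁻ w, ENNReal.ofReal |u y - u w| ∂P)) ∂P := by
        refine lintegral_mono fun y ↦ (lintegral_mono (htri y)).trans ?_
        rw [lintegral_add_left measurable_const, lintegral_add_left hd]
        gcongr
        exact hconst _
    _ ≤ D + (D + ∫⁻ y, ∫⁻ w, ENNReal.ofReal |u y - u w| ∂P ∂P) := by
        rw [lintegral_add_left hd, lintegral_add_left measurable_const]
        gcongr
        exact hconst D
    _ = ∫⁻ y, ∫⁻ w, ENNReal.ofReal |u y - u w| ∂P ∂P + 2 * D := by ring

end MeanOsc

section AverageGradient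

variable {X : Type u} [PseudoMetricSpace X] [MeasurableSpace X] [BorelSpace X] {μ : Measure X}
  {Cd : ℝ≥0} {f : X → ℝ} {T : ℝ}

theorem IsDoublingWith.ofReal_abs_avg_sub_avg_le_meanOsc (h : IsDoublingWith μ Cd)
    (hf : Measurable f) (hT : ∀ x, |f x| ≤ T) {x x' z : X} (hd : dist x x' ≤ 1 / 2)
    (hz : dist x z < 1) :
    ENNReal.ofReal |avg μ f x' - avg μ f x| ≤ ENNReal.ofReal (avgKernelConst Cd * dist x x') *
      (Cd ^ 4 * meanOsc (μ.restrict (ball z 4)) f) := by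
  have hB : μ (ball z 4) ≤ (Cd ^ 2 : ℝ≥0) * μ (ball x (3 / 2)) := by
    rw [ENNReal.coe_pow]
    exact h.measure_ball_le_of_add_dist_le (by norm_num) 2 (by rw [dist_comm]; linarith)
  calc ENNReal.ofReal |avg μ f x' - avg μ f x|
      = ⨍⁻ _ in ball x (3 / 2), ENNReal.ofReal |avg μ f x' - avg μ f x| ∂μ :=
        (setLAverage_const (h.measure_ball_pos x (by norm_num)).ne'
          (h.measure_ball_lt_top x _).ne _).symm
    _ ≤ ⨍⁻ w in ball x (3 / 2), ENNReal.ofReal (avgKernelConst Cd * dist x x') *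
          ⨍⁻ y in ball x (3 / 2), ENNReal.ofReal |f w - f y| ∂μ ∂μ :=
        laverage_mono_ae (ae_of_all _ fun w ↦ by
          simpa only [abs_sub_comm] using h.ofReal_abs_avg_sub_avg_le hf hT hd (f w))
    _ = ENNReal.ofReal (avgKernelConst Cd * dist x x') *
          meanOsc (μ.restrict (ball x (3 / 2))) f := laverage_const_mul ENNReal.ofReal_ne_top _
    _ ≤ ENNReal.ofReal (avgKernelConst Cd * dist x x') *
          (Cd ^ 4 * meanOsc (μ.restrict (ball z 4)) f) := by
        gcongr
        refine (meanOsc_restrict_le_of_subset (ball_subset_ball' (by linarith)) hB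
          (h.measure_ball_lt_top z 4).ne f).trans_eq ?_
        rw [ENNReal.coe_pow, ← pow_mul]

theorem IsDoublingWith.setLAverage_abs_avg_sub_le (h : IsDoublingWith μ Cd) (hf : Measurable f)
    (hT : ∀ x, |f x| ≤ T) (z : X) :
    ⨍⁻ x in ball z 1, ENNReal.ofReal |avg μ f x - f x| ∂μ ≤
      2 * Cd ^ 6 * meanOsc (μ.restrict (ball z 4)) f := by
  have hpt (x : X) (hx : x ∈ ball z 1) : ENNReal.ofReal |avg μ f x - f x| ≤
      2 * Cd ^ 4 * ⨍⁻ y in ball z 4, ENNReal.ofReal |f x - f y| ∂μ := by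
    rw [mem_ball] at hx
    have hball : μ (ball z 4) ≤ (Cd ^ 3 : ℝ≥0) * μ (ball x 1) := by
      rw [ENNReal.coe_pow]
      exact h.measure_ball_le_of_add_dist_le one_pos 3 (by rw [dist_comm]; linarith)
    rw [← h.avg_sub_const hf hT]
    calc ENNReal.ofReal |avg μ (fun y ↦ f y - f x) x|
        ≤ 2 * Cd * ⨍⁻ y in ball x 1, ENNReal.ofReal |f y - f x| ∂μ := h.ofReal_abs_avg_le _ x
      _ ≤ 2 * Cd * ((Cd ^ 3 : ℝ≥0) * ⨍⁻ y in ball z 4, ENNReal.ofReal |f y - f x| ∂μ) := by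
          gcongr
          exact setLAverage_le_mul_of_subset (ball_subset_ball' (by linarith)) hball
            (h.measure_ball_lt_top z 4).ne _
      _ = 2 * Cd ^ 4 * ⨍⁻ y in ball z 4, ENNReal.ofReal |f x - f y| ∂μ := by
          simp only [abs_sub_comm (f x), ENNReal.coe_pow]
          ring
  have hball : μ (ball z 4) ≤ (Cd ^ 2 : ℝ≥0) * μ (ball z 1) := by
    rw [ENNReal.coe_pow]
    exact h.measure_ball_le_of_add_dist_le one_pos 2 (by rw [dist_self]; norm_num)
  calc ⨍⁻ x in ball z 1, ENNReal.ofReal |avg μ f x - f x| ∂μ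
      ≤ ⨍⁻ x in ball z 1, 2 * Cd ^ 4 * ⨍⁻ y in ball z 4, ENNReal.ofReal |f x - f y| ∂μ ∂μ :=
        laverage_mono_ae ((ae_restrict_mem measurableSet_ball).mono hpt)
    _ = 2 * Cd ^ 4 * ⨍⁻ x in ball z 1, ⨍⁻ y in ball z 4, ENNReal.ofReal |f x - f y| ∂μ ∂μ :=
        laverage_const_mul (by finiteness) _
    _ ≤ 2 * Cd ^ 4 * ((Cd ^ 2 : ℝ≥0) * meanOsc (μ.restrict (ball z 4)) f) := by
        gcongr
        exact setLAverage_le_mul_of_subset (ball_subset_ball (by norm_num)) hball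
          (h.measure_ball_lt_top z 4).ne _
    _ = 2 * Cd ^ 6 * meanOsc (μ.restrict (ball z 4)) f := by rw [ENNReal.coe_pow]; ring

variable [SecondCountableTopology X] [SFinite μ]

theorem measurable_meanOsc_ball (hf : Measurable f) (r : ℝ) :
    Measurable fun x ↦ meanOsc (μ.restrict (ball x r)) f := by
  have hdiff : Measurable fun p : (X × X) × X ↦ ENNReal.ofReal |f p.1.2 - f p.2| :=
    ((hf.comp (measurable_snd.comp measurable_fst)).sub
      (hf.comp measurable_snd)).abs.ennreal_ofReal
  exact measurable_setLAverage_ball measurable_id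
    (measurable_setLAverage_ball measurable_fst hdiff r) r

theorem IsDoublingWith.abs_avg_sub_avg_le_avg_meanOsc (h : IsDoublingWith μ Cd)
    (hf : Measurable f) (hT : ∀ x, |f x| ≤ T) {x x' : X} (hd : dist x x' ≤ 1 / 2) :
    |avg μ f x' - avg μ f x| ≤ avgKernelConst Cd * Cd ^ 4 *
      avg μ (fun y ↦ (meanOsc (μ.restrict (ball y 4)) f).toReal) x * dist x x' := by
  set osc : X → ℝ := fun y ↦ (meanOsc (μ.restrict (ball y 4)) f).toReal
  set C : ℝ := avgKernelConst Cd * Cd ^ 4 with hC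
  have hosc : Measurable osc := (measurable_meanOsc_ball hf 4).ennreal_toReal
  have hosc_le (y : X) : |C * dist x x' * osc y| ≤ C * dist x x' * (2 * |T|) := by
    rw [abs_mul, abs_of_nonneg (by positivity)]
    gcongr
    exact abs_toReal_meanOsc_le hT
  have hpt (z : X) (hz : z ∈ ball x 1) :
      |avg μ f x' - avg μ f x| ≤ C * dist x x' * osc z := by
    have hfin : meanOsc (μ.restrict (ball z 4)) f ≠ ⊤ :=
      ((meanOsc_le_of_abs_le hT).trans_lt ENNReal.ofReal_lt_top).ne
    rw [← ENNReal.ofReal_le_ofReal_iff (by positivity), ENNReal.ofReal_mul (by positivity),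
      ENNReal.ofReal_toReal hfin]
    refine (h.ofReal_abs_avg_sub_avg_le_meanOsc hf hT hd (mem_ball'.1 hz)).trans_eq ?_
    rw [hC, mul_right_comm, ENNReal.ofReal_mul (q := (Cd : ℝ) ^ 4) (by positivity),
      ENNReal.ofReal_pow Cd.coe_nonneg, ENNReal.ofReal_coe_nnreal, mul_assoc]
  calc |avg μ f x' - avg μ f x| = avg μ (fun _ ↦ |avg μ f x' - avg μ f x|) x :=
        (h.avg_const _ x).symm
    _ ≤ avg μ (fun z ↦ C * dist x x' * osc z) x :=
        h.avg_mono measurable_const (fun _ ↦ le_rfl) (hosc.const_mul _) hosc_le x hpt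
    _ = C * avg μ osc x * dist x x' := by rw [avg_const_mul, mul_right_comm]

theorem IsDoublingWith.gradPair_avg (h : IsDoublingWith μ Cd) (hf : Measurable f)
    (hT : ∀ x, |f x| ≤ T) :
    GradPair (avg μ f) fun x ↦ avgKernelConst Cd * Cd ^ 4 *
      avg μ (fun y ↦ (meanOsc (μ.restrict (ball y 4)) f).toReal) x := by
  refine ⟨h.isBddLipschitz_avg hf hT, (IsBddLipschitz.const _).mul (h.isBddLipschitz_avg
    (measurable_meanOsc_ball hf 4).ennreal_toReal fun _ ↦ abs_toReal_meanOsc_le hT),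
    fun x ↦ mul_nonneg (by positivity) (avg_nonneg (fun _ ↦ ENNReal.toReal_nonneg) x),
    fun x ε hε ↦ ?_⟩
  filter_upwards [closedBall_mem_nhds x one_half_pos] with x' hx'
  rw [dist_comm x' x]
  refine (h.abs_avg_sub_avg_le_avg_meanOsc hf hT (mem_closedBall'.1 hx')).trans ?_
  gcongr
  exact le_add_of_nonneg_right hε.le

theorem IsDoublingWith.lintegral_avg_toReal_le (h : IsDoublingWith μ Cd) {F : X → ℝ≥0∞}
    (hF : Measurable F) :
    ∫⁻ x, ENNReal.ofReal (avg μ (fun y ↦ (F y).toReal) x) ∂μ ≤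
      2 * Cd * (Cd * ∫⁻ x, F x ∂μ) :=
  calc ∫⁻ x, ENNReal.ofReal (avg μ (fun y ↦ (F y).toReal) x) ∂μ
      ≤ ∫⁻ x, 2 * Cd * ⨍⁻ y in ball x 1, F y ∂μ ∂μ := by
        refine lintegral_mono fun x ↦ (ENNReal.ofReal_le_ofReal (le_abs_self _)).trans
          ((h.ofReal_abs_avg_le _ x).trans ?_)
        gcongr 2 * Cd * ?_
        refine laverage_mono_ae (ae_of_all _ fun y ↦ ?_)
        simpa only [abs_of_nonneg ENNReal.toReal_nonneg] using ENNReal.ofReal_toReal_le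
    _ ≤ 2 * Cd * (Cd * ∫⁻ x, F x ∂μ) := by
        rw [lintegral_const_mul' _ _ (by finiteness)]
        gcongr
        exact h.lintegral_setLAverage_ball_le hF one_pos

theorem IsDoublingWith.lintegral_abs_avg_sub_le (h : IsDoublingWith μ Cd) (hf : Measurable f)
    (hT : ∀ x, |f x| ≤ T) :
    ∫⁻ x, ENNReal.ofReal |avg μ f x - f x| ∂μ ≤
      Cd * (2 * Cd ^ 6 * ∫⁻ x, meanOsc (μ.restrict (ball x 4)) f ∂μ) := by
  have hm : Measurable fun x ↦ ENNReal.ofReal |avg μ f x - f x| :=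
    ((h.isBddLipschitz_avg hf hT).continuous.measurable.sub hf).abs.ennreal_ofReal
  refine (h.lintegral_le_mul_lintegral_setLAverage_ball hm one_pos).trans ?_
  rw [← lintegral_const_mul' (2 * Cd ^ 6) _ (by finiteness)]
  gcongr Cd * ?_
  exact lintegral_mono fun z ↦ h.setLAverage_abs_avg_sub_le hf hT z

end AverageGradient

section LipConstGradient

variable {X : Type u} [PseudoMetricSpace X] {u : X → ℝ}

theorem lipConst_le_of_lipschitzOnWith {K : ℝ≥0} {s : Set X} (hu : LipschitzOnWith K u s) {x : X}
    (hs : s ∈ 𝓝 x) : lipConst u x ≤ K := by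
  rw [← ENNReal.ofReal_coe_nnreal]
  refine PtLipLE.lipConst_le (fun ε hε ↦ ?_) K.coe_nonneg
  filter_upwards [hs] with y hy
  calc |u y - u x| ≤ K * dist y x := hu.dist_le_mul y hy x (mem_of_mem_nhds hs)
    _ ≤ (K + ε) * dist y x := by gcongr; linarith

theorem LocallyLipschitzOnSet.exists_lipschitzOnWith_closedBall
    (hu : LocallyLipschitzOnSet u univ) (x : X) (r : ℝ) :
    ∃ K : ℝ≥0, LipschitzOnWith K u (closedBall x r) ∧ ∀ y ∈ closedBall x r, lipConst u y ≤ K := by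
  obtain ⟨K, hK⟩ := hu (closedBall x (r + 1)) isClosed_closedBall isBounded_closedBall
    (subset_univ _)
  refine ⟨K, hK.mono (closedBall_subset_closedBall (by linarith)), fun y hy ↦
    lipConst_le_of_lipschitzOnWith hK (mem_of_superset (ball_mem_nhds y one_pos) ?_)⟩
  exact ball_subset_closedBall.trans (closedBall_subset_closedBall' (by
    linarith [mem_closedBall.1 hy]))

theorem LocallyLipschitzOnSet.continuous (hu : LocallyLipschitzOnSet u univ) : Continuous u :=
  continuousOn_univ.1 (hu.continuousOn isOpen_univ)

variable [MeasurableSpace X] [BorelSpace X]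

theorem LocallyLipschitzOnSet.measurable_lipConst (hu : LocallyLipschitzOnSet u univ) :
    Measurable (lipConst u) := by
  obtain ⟨m, hm, hmu⟩ := exists_measurable_eqOn_lipConst isOpen_univ hu.continuous.continuousOn
  rwa [← (eqOn_univ _ _).1 hmu]

theorem LocallyLipschitzOnSet.isUpperGradientOf_lipConst (hu : LocallyLipschitzOnSet u univ) :
    IsUpperGradientOf (fun x ↦ (lipConst u x).toReal) u := by
  intro L hL γ hγ
  obtain ⟨K, hK, hKlip⟩ := hu.exists_lipschitzOnWith_closedBall (γ 0) L
  have himg : γ '' Icc 0 L ⊆ closedBall (γ 0) L := by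
    rintro _ ⟨t, ht, rfl⟩
    have hdist := hγ.dist_le_mul t ht 0 ⟨le_rfl, hL⟩
    rw [NNReal.coe_one, one_mul, Real.dist_eq, sub_zero, abs_of_nonneg ht.1] at hdist
    exact hdist.trans ht.2
  have hle (t : ℝ) (ht : t ∈ Ioc 0 L) : lipConst u (γ t) ≤ K :=
    hKlip _ (himg (mem_image_of_mem γ (Ioc_subset_Icc_self ht)))
  have hmeas : AEMeasurable (fun t ↦ lipConst u (γ t)) (volume.restrict (Ioc 0 L)) :=
    hu.measurable_lipConst.comp_aemeasurable
      ((hγ.continuousOn.mono Ioc_subset_Icc_self).aemeasurable measurableSet_Ioc)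
  have hfin : ∫⁻ t in Ioc 0 L, lipConst u (γ t) ≠ ⊤ := by
    refine ((setLIntegral_mono' measurableSet_Ioc hle).trans_lt ?_).ne
    rw [setLIntegral_const]
    exact ENNReal.mul_lt_top ENNReal.coe_lt_top measure_Ioc_lt_top
  rw [intervalIntegral.integral_of_le hL, integral_toReal hmeas ((ae_restrict_mem
    measurableSet_Ioc).mono fun t ht ↦ (hle t ht).trans_lt ENNReal.coe_lt_top),
    ← ENNReal.ofReal_le_iff_le_toReal hfin]
  exact ofReal_abs_sub_le_lintegral_lipConst hL hγ (hK.mono himg)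

end LipConstGradient

section Poincare

theorem meanOsc_le_liminf {α : Type*} [MeasurableSpace α] {ν : Measure α} {f : α → ℝ}
    {us : ℕ → α → ℝ} (hf : Measurable f) (hus : ∀ i, Measurable (us i))
    (hlim : Tendsto (fun i ↦ ⨍⁻ x, ENNReal.ofReal |us i x - f x| ∂ν) atTop (𝓝 0)) :
    meanOsc ν f ≤ liminf (fun i ↦ meanOsc ν (us i)) atTop := by
  have herr : Tendsto (fun i ↦ 2 * ⨍⁻ x, ENNReal.ofReal |us i x - f x| ∂ν) atTop (𝓝 0) := by
    simpa only [mul_zero] using ENNReal.Tendsto.const_mul hlim (.inr ENNReal.ofNat_ne_top)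
  rw [← ENNReal.liminf_add_of_right_tendsto_zero herr]
  exact le_liminf_of_le (by isBoundedDefault) (.of_forall fun i ↦ meanOsc_le_add hf (hus i))

theorem TendstoL1loc.tendsto_setLAverage_ball {X : Type u} [PseudoMetricSpace X]
    [MeasurableSpace X] {μ : Measure X} {us : ℕ → X → ℝ} {f : X → ℝ}
    (hlim : TendstoL1loc μ us f univ) {x : X} {r : ℝ} (hr : μ (ball x r) ≠ 0) :
    Tendsto (fun i ↦ ⨍⁻ y in ball x r, ENNReal.ofReal |us i y - f y| ∂μ) atTop (𝓝 0) := by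
  have hclosed := hlim (closedBall x r) isClosed_closedBall isBounded_closedBall (subset_univ _)
  have hball := tendsto_of_tendsto_of_tendsto_of_le_of_le tendsto_const_nhds hclosed
    (fun _ ↦ zero_le) fun i ↦ lintegral_mono_set ball_subset_closedBall
  simpa only [setLAverage_eq, ENNReal.zero_div] using ENNReal.Tendsto.div_const hball (.inr hr)

variable {X : Type u} [MetricSpace X] [MeasurableSpace X] [BorelSpace X] {μ : Measure X}
  {Cd : ℝ≥0} {CP : ℝ}

theorem SupportsPoincare.setLAverage_le (hP : SupportsPoincare μ CP)
    (h : IsDoublingWith μ Cd) {u : X → ℝ} (hu : LocallyLipschitzOnSet u univ)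
    (x : X) {r : ℝ} (hr : 0 < r) :
    ⨍⁻ y in ball x r, ENNReal.ofReal |u y - ⨍ z in ball x r, u z ∂μ| ∂μ ≤
      ENNReal.ofReal (CP * r) * ⨍⁻ y in ball x r, lipConst u y ∂μ := by
  obtain ⟨K, hK, hKlip⟩ := hu.exists_lipschitzOnWith_closedBall x r
  set c := ⨍ z in ball x r, u z ∂μ
  have hosc : IntegrableOn (fun y ↦ |u y - c|) (ball x r) μ := by
    refine Measure.integrableOn_of_bounded (M := K * r + |u x - c|) (h.measure_ball_lt_top x r).ne
      (hu.continuous.measurable.sub_const c).abs.aestronglyMeasurable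
      ((ae_restrict_mem measurableSet_ball).mono fun y hy ↦ ?_)
    have hux : |u y - u x| ≤ K * r :=
      (hK.dist_le_mul y (ball_subset_closedBall hy) x (mem_closedBall_self hr.le)).trans
        (mul_le_mul_of_nonneg_left (mem_ball.1 hy).le K.coe_nonneg)
    rw [Real.norm_eq_abs, abs_abs]
    exact (abs_sub_le _ (u x) _).trans (by gcongr)
  have hlip : ⨍ y in ball x r, (lipConst u y).toReal ∂μ =
      (⨍⁻ y in ball x r, lipConst u y ∂μ).toReal :=
    (toReal_setLAverage hu.measurable_lipConst.aemeasurable ((ae_restrict_mem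
      measurableSet_ball).mono fun y hy ↦ ((hKlip y (ball_subset_closedBall hy)).trans_lt
        ENNReal.coe_lt_top).ne)).symm
  have hpoinc := hP u hu _ (fun x ↦ ENNReal.toReal_nonneg)
    hu.measurable_lipConst.ennreal_toReal hu.isUpperGradientOf_lipConst x r hr
  calc ⨍⁻ y in ball x r, ENNReal.ofReal |u y - c| ∂μ
      = ENNReal.ofReal (⨍ y in ball x r, |u y - c| ∂μ) := by
        rw [ofReal_setAverage hosc (ae_of_all _ fun y ↦ abs_nonneg _), setLAverage_eq]
    _ ≤ ENNReal.ofReal (CP * r * ⨍ y in ball x r, (lipConst u y).toReal ∂μ) :=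
        ENNReal.ofReal_le_ofReal hpoinc
    _ ≤ ENNReal.ofReal (CP * r) * ⨍⁻ y in ball x r, lipConst u y ∂μ := by
        rw [hlip, ENNReal.ofReal_mul' ENNReal.toReal_nonneg]
        gcongr
        exact ENNReal.ofReal_toReal_le

theorem SupportsPoincare.meanOsc_le (hP : SupportsPoincare μ CP)
    (h : IsDoublingWith μ Cd) {u : X → ℝ} (hu : LocallyLipschitzOnSet u univ)
    (x : X) {r : ℝ} (hr : 0 < r) :
    meanOsc (μ.restrict (ball x r)) u ≤
      2 * ENNReal.ofReal (CP * r) * ⨍⁻ y in ball x r, lipConst u y ∂μ := by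
  set c := ⨍ z in ball x r, u z ∂μ
  have hconst : meanOsc (μ.restrict (ball x r)) (fun _ ↦ c) = 0 := by
    simp only [meanOsc, sub_self, abs_zero, ENNReal.ofReal_zero, laverage_zero]
  calc meanOsc (μ.restrict (ball x r)) u
      ≤ meanOsc (μ.restrict (ball x r)) (fun _ ↦ c) +
          2 * ⨍⁻ y in ball x r, ENNReal.ofReal |c - u y| ∂μ :=
        meanOsc_le_add hu.continuous.measurable measurable_const
    _ = 2 * ⨍⁻ y in ball x r, ENNReal.ofReal |u y - c| ∂μ := by
        simp only [hconst, zero_add, abs_sub_comm c]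
    _ ≤ 2 * ENNReal.ofReal (CP * r) * ⨍⁻ y in ball x r, lipConst u y ∂μ := by
        rw [mul_assoc]
        gcongr
        exact hP.setLAverage_le h hu x hr

variable [SecondCountableTopology X] [SFinite μ] {f : X → ℝ}

theorem SupportsPoincare.lintegral_meanOsc_le (hP : SupportsPoincare μ CP)
    (h : IsDoublingWith μ Cd) (hf : Measurable f) {us : ℕ → X → ℝ}
    (hus : ∀ i, LocallyLipschitzOnSet (us i) univ) (hlim : TendstoL1loc μ us f univ)
    {r : ℝ} (hr : 0 < r) :
    ∫⁻ x, meanOsc (μ.restrict (ball x r)) f ∂μ ≤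
      2 * ENNReal.ofReal (CP * r) * Cd * liminf (fun i ↦ ∫⁻ x, lipConst (us i) x ∂μ) atTop := by
  have hpt (x : X) : meanOsc (μ.restrict (ball x r)) f ≤
      liminf (fun i ↦ meanOsc (μ.restrict (ball x r)) (us i)) atTop :=
    meanOsc_le_liminf hf (fun i ↦ (hus i).continuous.measurable)
      (hlim.tendsto_setLAverage_ball (h.measure_ball_pos x hr).ne')
  calc ∫⁻ x, meanOsc (μ.restrict (ball x r)) f ∂μ
      ≤ ∫⁻ x, liminf (fun i ↦ meanOsc (μ.restrict (ball x r)) (us i)) atTop ∂μ :=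
        lintegral_mono hpt
    _ ≤ liminf (fun i ↦ ∫⁻ x, meanOsc (μ.restrict (ball x r)) (us i) ∂μ) atTop :=
        lintegral_liminf_le fun i ↦ measurable_meanOsc_ball (hus i).continuous.measurable r
    _ ≤ liminf (fun i ↦ 2 * ENNReal.ofReal (CP * r) * Cd * ∫⁻ x, lipConst (us i) x ∂μ) atTop := by
        refine liminf_le_liminf (.of_forall fun i ↦ ?_)
        refine (lintegral_mono fun x ↦ hP.meanOsc_le h (hus i) x hr).trans ?_
        rw [lintegral_const_mul' _ _ (by finiteness), mul_assoc _ (Cd : ℝ≥0∞)]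
        gcongr
        exact h.lintegral_setLAverage_ball_le (hus i).measurable_lipConst hr
    _ = 2 * ENNReal.ofReal (CP * r) * Cd * liminf (fun i ↦ ∫⁻ x, lipConst (us i) x ∂μ) atTop :=
        ENNReal.liminf_const_mul_of_ne_top (by finiteness)

theorem SupportsPoincare.exists_gradPair_lintegral_lt_top (hP : SupportsPoincare μ CP)
    (h : IsDoublingWith μ Cd) (hf : Measurable f) {T : ℝ} (hT : ∀ x, |f x| ≤ T)
    (hfin : totVarOn μ f univ < ⊤) :
    ∃ w v : X → ℝ, GradPair w v ∧ ∫⁻ x, ENNReal.ofReal (v x) ∂μ < ⊤ ∧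
      ∫⁻ x, ENNReal.ofReal |w x - f x| ∂μ < ⊤ := by
  simp only [totVarOn, iInf_lt_iff, Measure.restrict_univ] at hfin
  obtain ⟨us, hus, hlim, hfin⟩ := hfin
  have hosc : ∫⁻ x, meanOsc (μ.restrict (ball x 4)) f ∂μ < ⊤ :=
    (hP.lintegral_meanOsc_le h hf hus hlim four_pos).trans_lt (by finiteness)
  refine ⟨_, _, h.gradPair_avg hf hT, ?_, (h.lintegral_abs_avg_sub_le hf hT).trans_lt
    (by finiteness)⟩
  simp only [ENNReal.ofReal_mul (show (0 : ℝ) ≤ avgKernelConst Cd * Cd ^ 4 by positivity)]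
  rw [lintegral_const_mul' _ _ ENNReal.ofReal_ne_top]
  refine ENNReal.mul_lt_top ENNReal.ofReal_lt_top
    ((h.lintegral_avg_toReal_le (measurable_meanOsc_ball hf 4)).trans_lt (by finiteness))

end Poincare

section TotalVariation

variable {X : Type u} [PseudoMetricSpace X]

theorem LocallyLipschitzOnSet.mono {u : X → ℝ} {V W : Set X} (hu : LocallyLipschitzOnSet u W)
    (h : V ⊆ W) : LocallyLipschitzOnSet u V :=
  fun K hK hKb hKV ↦ hu K hK hKb (hKV.trans h)

theorem lipConst_comp_le {θ : ℝ → ℝ} (hθ : LipschitzWith 1 θ) (u : X → ℝ) (x : X) :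
    lipConst (θ ∘ u) x ≤ lipConst u x := by
  refine liminf_le_liminf ?_
  filter_upwards [self_mem_nhdsWithin] with r (hr : 0 < r)
  refine iSup₂_mono fun y _ ↦
    ENNReal.ofReal_le_ofReal (div_le_div_of_nonneg_right ?_ hr.le)
  simpa [Real.dist_eq] using hθ.dist_le_mul (u y) (u x)

variable [MeasurableSpace X] {μ : Measure X} {f g : X → ℝ} {V W : Set X}

theorem TendstoL1loc.mono {u : ℕ → X → ℝ} (hu : TendstoL1loc μ u f W) (h : V ⊆ W) :
    TendstoL1loc μ u f V :=
  fun K hK hKb hKV ↦ hu K hK hKb (hKV.trans h)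

theorem TendstoL1loc.congr_ae {u : ℕ → X → ℝ} (hu : TendstoL1loc μ u f W) (h : f =ᵐ[μ] g) :
    TendstoL1loc μ u g W := by
  intro K hK hKb hKW
  refine (hu K hK hKb hKW).congr fun i ↦ lintegral_congr_ae ?_
  filter_upwards [ae_restrict_of_ae h] with x hx
  rw [hx]

theorem totVarOn_le_liminf {us : ℕ → X → ℝ} (hus : ∀ i, LocallyLipschitzOnSet (us i) W)
    (hlim : TendstoL1loc μ us f W) :
    totVarOn μ f W ≤ liminf (fun i ↦ ∫⁻ x in W, lipConst (us i) x ∂μ) atTop :=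
  iInf_le_of_le us (iInf_le_of_le hus (iInf_le _ hlim))

theorem totVarOn_mono (μ : Measure X) (f : X → ℝ) (h : V ⊆ W) :
    totVarOn μ f V ≤ totVarOn μ f W :=
  le_iInf fun _ ↦ le_iInf fun hus ↦ le_iInf fun hlim ↦
    (totVarOn_le_liminf (fun i ↦ (hus i).mono h) (hlim.mono h)).trans
      (liminf_le_liminf (.of_forall fun _ ↦ lintegral_mono_set h))

theorem totVarOn_congr_ae (h : f =ᵐ[μ] g) (W : Set X) : totVarOn μ f W = totVarOn μ g W :=
  le_antisymm
    (le_iInf fun _ ↦ le_iInf fun hus ↦ le_iInf fun hlim ↦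
      totVarOn_le_liminf hus (hlim.congr_ae h.symm))
    (le_iInf fun _ ↦ le_iInf fun hus ↦ le_iInf fun hlim ↦
      totVarOn_le_liminf hus (hlim.congr_ae h))

theorem totVarOn_empty (μ : Measure X) (f : X → ℝ) : totVarOn μ f ∅ = 0 := by
  have hlip : LocallyLipschitzOnSet (0 : X → ℝ) ∅ := fun K _ _ hK ↦
    ⟨0, by simp [subset_empty_iff.1 hK]⟩
  have hlim : TendstoL1loc μ (fun _ ↦ 0) f ∅ := fun K _ _ hK ↦ by simp [subset_empty_iff.1 hK]
  exact le_antisymm ((totVarOn_le_liminf (fun _ ↦ hlip) hlim).trans_eq (by simp)) zero_le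

theorem totVarOn_comp_le {θ : ℝ → ℝ} (hθ : LipschitzWith 1 θ) (f : X → ℝ) (W : Set X) :
    totVarOn μ (θ ∘ f) W ≤ totVarOn μ f W := by
  refine le_iInf fun us ↦ le_iInf fun hus ↦ le_iInf fun hlim ↦ ?_
  have hlip (i : ℕ) : LocallyLipschitzOnSet (θ ∘ us i) W := fun K hK hKb hKW ↦
    let ⟨L, hL⟩ := hus i K hK hKb hKW
    ⟨1 * L, hθ.comp_lipschitzOnWith hL⟩
  have hconv : TendstoL1loc μ (fun i ↦ θ ∘ us i) (θ ∘ f) W := fun K hK hKb hKW ↦ by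
    refine tendsto_of_tendsto_of_tendsto_of_le_of_le tendsto_const_nhds (hlim K hK hKb hKW)
      (fun _ ↦ zero_le) fun i ↦ lintegral_mono fun x ↦ ENNReal.ofReal_le_ofReal ?_
    simpa [Real.dist_eq] using hθ.dist_le_mul (us i x) (f x)
  exact (totVarOn_le_liminf hlip hconv).trans (liminf_le_liminf (.of_forall fun i ↦
    lintegral_mono fun x ↦ lipConst_comp_le hθ (us i) x))

end TotalVariation

section Truncation

/-- Truncation of the real line to `[-T, T]`. -/
def symmClamp (T t : ℝ) : ℝ := max (-T) (min T t)

theorem lipschitzWith_symmClamp (T : ℝ) : LipschitzWith 1 (symmClamp T) :=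
  (LipschitzWith.id.const_min T).const_max (-T)

theorem symmClamp_of_abs_le {T t : ℝ} (h : |t| ≤ T) : symmClamp T t = t := by
  rw [symmClamp, min_eq_right (abs_le.1 h).2, max_eq_right (abs_le.1 h).1]

theorem abs_symmClamp_le {T : ℝ} (hT : 0 ≤ T) (t : ℝ) : |symmClamp T t| ≤ T :=
  abs_le.2 ⟨le_max_left _ _, max_le (by linarith) (min_le_left _ _)⟩

theorem abs_symmClamp_sub_le {T : ℝ} (hT : 0 ≤ T) (t : ℝ) : |symmClamp T t - t| ≤ |t| := by
  rcases le_total 0 t with ht | ht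
  · have hmin : 0 ≤ min T t := le_min hT ht
    rw [symmClamp, max_eq_right (by linarith), abs_sub_comm,
      abs_of_nonneg (sub_nonneg.2 (min_le_right _ _)), abs_of_nonneg ht]
    linarith
  · have hmax : max (-T) t ≤ 0 := max_le (by linarith) ht
    rw [symmClamp, min_eq_right (ht.trans hT),
      abs_of_nonneg (sub_nonneg.2 (le_max_right _ _)), abs_of_nonpos ht]
    linarith

theorem tendsto_lintegral_symmClamp_sub {α : Type*} [MeasurableSpace α] {μ : Measure α}
    {f : α → ℝ} (hf : Integrable f μ) :
    Tendsto (fun n : ℕ ↦ ∫⁻ x, ENNReal.ofReal |symmClamp n (f x) - f x| ∂μ) atTop (𝓝 0) := by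
  rw [← lintegral_zero (μ := μ)]
  refine tendsto_lintegral_of_dominated_convergence' (fun x ↦ ENNReal.ofReal |f x|)
    (fun n ↦ ?_) (fun n ↦ ae_of_all _ fun x ↦ ENNReal.ofReal_le_ofReal
      (abs_symmClamp_sub_le n.cast_nonneg (f x)))
    (by simpa only [← Real.enorm_eq_ofReal_abs] using hf.2.ne) (ae_of_all _ fun x ↦ ?_)
  · have hfm := hf.aestronglyMeasurable.aemeasurable
    exact (((lipschitzWith_symmClamp n).continuous.measurable.comp_aemeasurable hfm).sub
      hfm).abs.ennreal_ofReal
  · refine tendsto_const_nhds.congr' ?_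
    filter_upwards [eventually_ge_atTop ⌈|f x|⌉₊] with n hn
    rw [symmClamp_of_abs_le (Nat.ceil_le.1 hn), sub_self, abs_zero, ENNReal.ofReal_zero]

end Truncation

section Gluing

theorem exists_lipschitzWith_eqOn_const {X : Type u} [PseudoMetricSpace X] {s t : Set X}
    (hs : IsClosed s) (ht : IsCompact t) (hst : Disjoint s t) (a b : ℝ) :
    ∃ (L : ℝ≥0) (θ : X → ℝ), LipschitzWith L θ ∧ (∀ x ∈ s, θ x = a) ∧ ∀ x ∈ t, θ x = b := by
  obtain ⟨δ, hδ, hsub⟩ := ht.exists_thickening_subset_open hs.isOpen_compl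
    (disjoint_left.1 hst.symm)
  refine ⟨_, fun x ↦ a + (b - a) * thickenedIndicator hδ t x,
    LipschitzWith.of_dist_le_mul (K := ‖b - a‖₊ * δ.toNNReal⁻¹) fun x y ↦ ?_, fun x hx ↦ ?_,
    fun x hx ↦ ?_⟩
  · have hlip := (lipschitzWith_thickenedIndicator hδ t).dist_le_mul x y
    rw [NNReal.dist_eq] at hlip
    rw [Real.dist_eq, add_sub_add_left_eq_sub, ← mul_sub, abs_mul, NNReal.coe_mul, coe_nnnorm,
      Real.norm_eq_abs, mul_assoc]
    gcongr
  · simp only [thickenedIndicator_zero hδ t fun h ↦ hsub h hx, NNReal.coe_zero, mul_zero, add_zero]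
  · simp only [thickenedIndicator_one hδ t hx, NNReal.coe_one, mul_one, add_sub_cancel]

theorem unitClamp_mul_add_le {t a b : ℝ} (ha : 0 ≤ a) (hb : 0 ≤ b) :
    unitClamp t * a + (1 - unitClamp t) * b ≤
      (if -1 ≤ t then a else 0) + if t ≤ 2 then b else 0 := by
  have hφ0 := unitClamp_nonneg t
  have hφ1 := unitClamp_le_one t
  refine add_le_add ?_ ?_ <;> split_ifs with ht
  · exact mul_le_of_le_one_left ha hφ1
  · rw [unitClamp_of_nonpos (by linarith), zero_mul]
  · exact mul_le_of_le_one_left hb (by linarith)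
  · rw [unitClamp_of_one_le (by linarith), sub_self, zero_mul]

theorem transitionWeight_mul_add_le {t a b : ℝ} (ha : 0 ≤ a) (hb : 0 ≤ b) :
    transitionWeight t * (a + b) ≤ (if -1 ≤ t then a else 0) + if t ≤ 2 then b else 0 := by
  rw [mul_add]
  refine add_le_add ?_ ?_ <;> split_ifs with ht
  · exact mul_le_of_le_one_left ha (unitClamp_le_one _)
  · rw [transitionWeight_of_le (by linarith), zero_mul]
  · exact mul_le_of_le_one_left hb (unitClamp_le_one _)
  · rw [transitionWeight_of_ge (by linarith), zero_mul]

theorem abs_unitClamp_blend_sub_le (t u₁ u₂ c : ℝ) :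
    |unitClamp t * u₁ + (1 - unitClamp t) * u₂ - c| ≤
      (if -1 ≤ t then |u₁ - c| else 0) + if t ≤ 2 then |u₂ - c| else 0 := by
  refine le_trans ?_ (unitClamp_mul_add_le (abs_nonneg _) (abs_nonneg _))
  calc |unitClamp t * u₁ + (1 - unitClamp t) * u₂ - c|
      = |unitClamp t * (u₁ - c) + (1 - unitClamp t) * (u₂ - c)| := by ring_nf
    _ ≤ |unitClamp t * (u₁ - c)| + |(1 - unitClamp t) * (u₂ - c)| := abs_add_le _ _
    _ = unitClamp t * |u₁ - c| + (1 - unitClamp t) * |u₂ - c| := by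
        rw [abs_mul, abs_mul, abs_of_nonneg (unitClamp_nonneg t),
          abs_of_nonneg (sub_nonneg.2 (unitClamp_le_one t))]

theorem unitClamp_blend_grad_le {t L u₁ v₁ u₂ v₂ : ℝ} (hL : 0 ≤ L) (hv₁ : 0 ≤ v₁) (hv₂ : 0 ≤ v₂)
    (c : ℝ) :
    unitClamp t * v₁ + (1 - unitClamp t) * v₂ + L * transitionWeight t * |u₁ - u₂| ≤
      (if -1 ≤ t then v₁ + L * |u₁ - c| else 0) + if t ≤ 2 then v₂ + L * |u₂ - c| else 0 := by
  have htri : |u₁ - u₂| ≤ |u₁ - c| + |u₂ - c| := abs_sub_comm u₂ c ▸ abs_sub_le _ _ _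
  have hweight : 0 ≤ L * transitionWeight t := mul_nonneg hL (unitClamp_nonneg _)
  calc unitClamp t * v₁ + (1 - unitClamp t) * v₂ + L * transitionWeight t * |u₁ - u₂|
      ≤ unitClamp t * v₁ + (1 - unitClamp t) * v₂ +
          transitionWeight t * (L * |u₁ - c| + L * |u₂ - c|) := by
        linarith [mul_le_mul_of_nonneg_left htri hweight]
    _ ≤ ((if -1 ≤ t then v₁ else 0) + if t ≤ 2 then v₂ else 0) +
          ((if -1 ≤ t then L * |u₁ - c| else 0) + if t ≤ 2 then L * |u₂ - c| else 0) :=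
        add_le_add (unitClamp_mul_add_le hv₁ hv₂)
          (transitionWeight_mul_add_le (by positivity) (by positivity))
    _ = _ := by split_ifs <;> ring

theorem lintegral_ofReal_le_add_of_le_ite_add_ite {α : Type*} [MeasurableSpace α] {μ : Measure α}
    {θ F G₁ G₂ : α → ℝ} (hθ : Measurable θ) (hG₁ : Measurable G₁) {a b : ℝ}
    (h : ∀ x, F x ≤ (if a ≤ θ x then G₁ x else 0) + if θ x ≤ b then G₂ x else 0) :
    ∫⁻ x, ENNReal.ofReal (F x) ∂μ ≤ (∫⁻ x in {x | a ≤ θ x}, ENNReal.ofReal (G₁ x) ∂μ) +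
      ∫⁻ x in {x | θ x ≤ b}, ENNReal.ofReal (G₂ x) ∂μ := by
  have hS₁ : MeasurableSet {x | a ≤ θ x} := measurableSet_le measurable_const hθ
  have hS₂ : MeasurableSet {x | θ x ≤ b} := measurableSet_le hθ measurable_const
  rw [← lintegral_indicator hS₁, ← lintegral_indicator hS₂,
    ← lintegral_add_left (hG₁.ennreal_ofReal.indicator hS₁)]
  refine lintegral_mono fun x ↦ (ENNReal.ofReal_le_ofReal (h x)).trans
    (ENNReal.ofReal_add_le.trans_eq ?_)
  simp only [indicator_apply, mem_ofPred_eq, apply_ite ENNReal.ofReal, ENNReal.ofReal_zero]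

variable {X : Type u} [PseudoMetricSpace X] [MeasurableSpace X] [BorelSpace X] {μ : Measure X}

theorem GradPair.lintegral_add_mul_abs_sub {u v : X → ℝ} (h : GradPair u v) (L : ℝ≥0)
    (f : X → ℝ) :
    ∫⁻ x, ENNReal.ofReal (v x + L * |u x - f x|) ∂μ =
      (∫⁻ x, ENNReal.ofReal (v x) ∂μ) + L * ∫⁻ x, ENNReal.ofReal |u x - f x| ∂μ := by
  rw [← lintegral_const_mul' _ _ ENNReal.coe_ne_top,
    ← lintegral_add_left h.continuous_grad.measurable.ennreal_ofReal]
  refine lintegral_congr fun x ↦ ?_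
  rw [ENNReal.ofReal_add (h.grad_nonneg x) (by positivity), ENNReal.ofReal_mul L.coe_nonneg,
    ENNReal.ofReal_coe_nnreal]

/-- Interpolating between `u₁` and `u₂` with the Lipschitz cutoff `unitClamp ∘ θ` costs only
`L * |u₁ - u₂|`, which is small in `L¹` if both functions are close to the same `f`. -/
theorem GradPair.exists_glue {u₁ v₁ u₂ v₂ f θ : X → ℝ} {L : ℝ≥0} (h₁ : GradPair u₁ v₁)
    (h₂ : GradPair u₂ v₂) (hθ : LipschitzWith L θ) (hf : Measurable f) :
    ∃ u v : X → ℝ, GradPair u v ∧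
      (∀ Q : Set X, ∫⁻ x in Q, ENNReal.ofReal (v x) ∂μ ≤
        ((∫⁻ x in {x | -1 ≤ θ x} ∩ Q, ENNReal.ofReal (v₁ x) ∂μ) +
          L * ∫⁻ x in {x | -1 ≤ θ x} ∩ Q, ENNReal.ofReal |u₁ x - f x| ∂μ) +
        ((∫⁻ x in {x | θ x ≤ 2} ∩ Q, ENNReal.ofReal (v₂ x) ∂μ) +
          L * ∫⁻ x in {x | θ x ≤ 2} ∩ Q, ENNReal.ofReal |u₂ x - f x| ∂μ)) ∧
      ∀ Q : Set X, ∫⁻ x in Q, ENNReal.ofReal |u x - f x| ∂μ ≤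
        (∫⁻ x in {x | -1 ≤ θ x} ∩ Q, ENNReal.ofReal |u₁ x - f x| ∂μ) +
          ∫⁻ x in {x | θ x ≤ 2} ∩ Q, ENNReal.ofReal |u₂ x - f x| ∂μ := by
  have hθm : Measurable θ := hθ.continuous.measurable
  have hu₁ : Measurable fun x ↦ |u₁ x - f x| := (h₁.continuous_fun.measurable.sub hf).abs
  have hS₁ : MeasurableSet {x | -1 ≤ θ x} := measurableSet_le measurable_const hθm
  have hS₂ : MeasurableSet {x | θ x ≤ 2} := measurableSet_le hθm measurable_const
  refine ⟨_, _, (GradPair.unitClamp_comp hθ).blend (fun x ↦ unitClamp_nonneg _)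
    (fun x ↦ unitClamp_le_one _) h₁ h₂, fun Q ↦ ?_, fun Q ↦ ?_⟩ <;>
    simp only [← Measure.restrict_restrict hS₁, ← Measure.restrict_restrict hS₂]
  · rw [← h₁.lintegral_add_mul_abs_sub, ← h₂.lintegral_add_mul_abs_sub]
    exact lintegral_ofReal_le_add_of_le_ite_add_ite hθm
      (h₁.continuous_grad.measurable.add (hu₁.const_mul _)) fun x ↦
        unitClamp_blend_grad_le L.coe_nonneg (h₁.grad_nonneg x) (h₂.grad_nonneg x) (f x)
  · exact lintegral_ofReal_le_add_of_le_ite_add_ite hθm hu₁ fun x ↦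
      abs_unitClamp_blend_sub_le (θ x) (u₁ x) (u₂ x) (f x)

end Gluing

section GlobalApproximation

theorem exists_gradPair_of_totVarOn_union {X : Type u} [MetricSpace X] [MeasurableSpace X]
    [BorelSpace X] {μ : Measure X} [ProperSpace X] [IsLocallyFiniteMeasure μ] (hG : IsGeodesic X)
    {A B Q : Set X} (hA : IsOpen A) (hB : IsOpen B) (hQ : IsCompact Q) (hQAB : Q ⊆ A ∪ B)
    {f : X → ℝ} (hf : Measurable f) (hfA : totVarOn μ f A ≠ ⊤) (hfB : totVarOn μ f B ≠ ⊤)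
    {ε : ℝ≥0∞} (hε : ε ≠ 0) :
    ∃ u v : X → ℝ, GradPair u v ∧
      ∫⁻ x in Q, ENNReal.ofReal (v x) ∂μ ≤ totVarOn μ f A + totVarOn μ f B + ε ∧
      ∫⁻ x in Q, ENNReal.ofReal |u x - f x| ∂μ ≤ ε := by
  obtain ⟨L, θ, hθ, hθA, hθB⟩ := exists_lipschitzWith_eqOn_const (a := -2) (b := 3)
    (hQ.isClosed.sdiff hA) (hQ.diff hB)
    (disjoint_left.2 fun x hx hx' ↦ (hQAB hx.1).elim hx.2 hx'.2)
  have hK₁ : IsCompact ({x | -1 ≤ θ x} ∩ Q) :=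
    hQ.inter_left (isClosed_le continuous_const hθ.continuous)
  have hK₂ : IsCompact ({x | θ x ≤ 2} ∩ Q) :=
    hQ.inter_left (isClosed_le hθ.continuous continuous_const)
  have hK₁A : {x | -1 ≤ θ x} ∩ Q ⊆ A := fun x ⟨(hx : -1 ≤ θ x), hxQ⟩ ↦ by
    by_contra hxA
    linarith [hθA x ⟨hxQ, hxA⟩]
  have hK₂B : {x | θ x ≤ 2} ∩ Q ⊆ B := fun x ⟨(hx : θ x ≤ 2), hxQ⟩ ↦ by
    by_contra hxB
    linarith [hθB x ⟨hxQ, hxB⟩]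
  set δ : ℝ≥0∞ := ε / (2 + 2 * L)
  have hδ0 : δ ≠ 0 := ENNReal.div_ne_zero.2 ⟨hε, by finiteness⟩
  have hδε : (2 + 2 * L) * δ ≤ ε := ENNReal.mul_div_le
  obtain ⟨u₁, v₁, h₁, hv₁, hu₁⟩ := exists_gradPair_of_totVarOn (μ := μ) hG hA hK₁ hK₁A hfA hδ0
  obtain ⟨u₂, v₂, h₂, hv₂, hu₂⟩ := exists_gradPair_of_totVarOn (μ := μ) hG hB hK₂ hK₂B hfB hδ0
  obtain ⟨u, v, huv, hv, hu⟩ := h₁.exists_glue (μ := μ) h₂ hθ hf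
  refine ⟨u, v, huv, (hv Q).trans ?_, (hu Q).trans ?_⟩
  · calc _ ≤ (totVarOn μ f A + δ + L * δ) + (totVarOn μ f B + δ + L * δ) := by gcongr
      _ = totVarOn μ f A + totVarOn μ f B + (2 + 2 * L) * δ := by ring
      _ ≤ totVarOn μ f A + totVarOn μ f B + ε := by gcongr
  · calc _ ≤ δ + δ := by gcongr
      _ = 2 * δ := (two_mul δ).symm
      _ ≤ (2 + 2 * L) * δ := by gcongr; exact le_self_add
      _ ≤ ε := hδε

theorem exists_setLIntegral_le_dist_le {X : Type u} [PseudoMetricSpace X] [MeasurableSpace X]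
    [OpensMeasurableSpace X] {μ : Measure X} {g : X → ℝ≥0∞} (hg : ∫⁻ x, g x ∂μ ≠ ⊤)
    {ε : ℝ≥0∞} (hε : ε ≠ 0) (o : X) :
    ∃ R : ℝ, ∫⁻ x in {x | R ≤ dist x o}, g x ∂μ ≤ ε := by
  have hmeas (r : ℝ) : MeasurableSet {x | r ≤ dist x o} :=
    (isClosed_le continuous_const (continuous_id.dist continuous_const)).measurableSet
  have : IsFiniteMeasure (μ.withDensity g) := isFiniteMeasure_withDensity hg
  have hinter : (⋂ n : ℕ, {x : X | (n : ℝ) ≤ dist x o}) = ∅ := by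
    refine eq_empty_of_forall_notMem fun x hx ↦ ?_
    obtain ⟨n, hn⟩ := exists_nat_gt (dist x o)
    exact (mem_iInter.1 hx n).not_gt hn
  have hlim : Tendsto (fun n : ℕ ↦ μ.withDensity g {x | (n : ℝ) ≤ dist x o}) atTop (𝓝 0) := by
    rw [← measure_empty (μ := μ.withDensity g), ← hinter]
    exact tendsto_measure_iInter_atTop (fun n ↦ (hmeas n).nullMeasurableSet)
      (fun m n hmn x (hx : (n : ℝ) ≤ dist x o) ↦
        show (m : ℝ) ≤ dist x o from (Nat.cast_le.2 hmn).trans hx) ⟨0, measure_ne_top _ _⟩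
  obtain ⟨n, hn⟩ := (hlim.eventually_lt_const (pos_iff_ne_zero.2 hε)).exists
  rw [withDensity_apply _ (hmeas n)] at hn
  exact ⟨n, hn.le⟩

theorem GradPair.exists_glue_closedBall {X : Type u} [PseudoMetricSpace X] [MeasurableSpace X]
    [BorelSpace X] {μ : Measure X} {u₁ v₁ u₂ v₂ f : X → ℝ} (h₁ : GradPair u₁ v₁)
    (h₂ : GradPair u₂ v₂) (hf : Measurable f) (o : X) (R : ℝ) :
    ∃ u v : X → ℝ, GradPair u v ∧
      ∫⁻ x, ENNReal.ofReal (v x) ∂μ ≤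
        ((∫⁻ x in closedBall o (R + 3), ENNReal.ofReal (v₁ x) ∂μ) +
          ∫⁻ x in closedBall o (R + 3), ENNReal.ofReal |u₁ x - f x| ∂μ) +
        ((∫⁻ x in {x | R ≤ dist x o}, ENNReal.ofReal (v₂ x) ∂μ) +
          ∫⁻ x in {x | R ≤ dist x o}, ENNReal.ofReal |u₂ x - f x| ∂μ) ∧
      ∫⁻ x, ENNReal.ofReal |u x - f x| ∂μ ≤
        (∫⁻ x in closedBall o (R + 3), ENNReal.ofReal |u₁ x - f x| ∂μ) +
          ∫⁻ x in {x | R ≤ dist x o}, ENNReal.ofReal |u₂ x - f x| ∂μ := by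
  have hθ : LipschitzWith 1 fun x ↦ R + 2 - dist x o := by
    simpa using (LipschitzWith.const (R + 2)).sub (LipschitzWith.dist_left o)
  have hinner : {x | -1 ≤ R + 2 - dist x o} = closedBall o (R + 3) := by
    ext x
    rw [mem_ofPred_eq, mem_closedBall]
    constructor <;> intro <;> linarith
  have houter : {x | R + 2 - dist x o ≤ 2} = {x | R ≤ dist x o} := by
    ext x
    rw [mem_ofPred_eq, mem_ofPred_eq]
    constructor <;> intro <;> linarith
  obtain ⟨u, v, huv, hv, hu⟩ := h₁.exists_glue (μ := μ) h₂ hθ hf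
  simp only [hinner, houter, ENNReal.coe_one, one_mul] at hv hu
  exact ⟨u, v, huv, by simpa only [inter_univ, Measure.restrict_univ] using hv univ,
    by simpa only [inter_univ, Measure.restrict_univ] using hu univ⟩

variable {X : Type u} [MetricSpace X] [MeasurableSpace X] [BorelSpace X] {μ : Measure X}
  [ProperSpace X] [IsLocallyFiniteMeasure μ] {Cd : ℝ≥0} {CP : ℝ} {A B : Set X} {f : X → ℝ}
  {ε : ℝ≥0∞}

theorem exists_gradPair_lintegral_le_of_bounded (hG : IsGeodesic X) (hP : SupportsPoincare μ CP)
    (h : IsDoublingWith μ Cd) (hA : IsOpen A) (hB : IsOpen B) (hAB : A ∪ B = univ)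
    (hf : Measurable f) {T : ℝ} (hT : ∀ x, |f x| ≤ T) (hfin : totVarOn μ f univ < ⊤)
    (hε : ε ≠ 0) (o : X) :
    ∃ u v : X → ℝ, GradPair u v ∧
      ∫⁻ x, ENNReal.ofReal (v x) ∂μ ≤ totVarOn μ f A + totVarOn μ f B + ε ∧
      ∫⁻ x, ENNReal.ofReal |u x - f x| ∂μ ≤ ε := by
  obtain ⟨w, v₂, h₂, hv₂, hw⟩ := hP.exists_gradPair_lintegral_lt_top h hf hT hfin
  have hv₂m : Measurable fun x ↦ ENNReal.ofReal (v₂ x) :=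
    h₂.continuous_grad.measurable.ennreal_ofReal
  set δ : ℝ≥0∞ := ε / 3
  have hδ0 : δ ≠ 0 := ENNReal.div_ne_zero.2 ⟨hε, by finiteness⟩
  have hδε : 3 * δ ≤ ε := ENNReal.mul_div_le
  have hsum : ∫⁻ x, ENNReal.ofReal (v₂ x) + ENNReal.ofReal |w x - f x| ∂μ ≠ ⊤ := by
    rw [lintegral_add_left hv₂m]
    finiteness
  obtain ⟨R, htail⟩ := exists_setLIntegral_le_dist_le hsum hδ0 o
  rw [lintegral_add_left hv₂m] at htail
  have hne (W : Set X) : totVarOn μ f W ≠ ⊤ :=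
    ((totVarOn_mono μ f (subset_univ W)).trans_lt hfin).ne
  obtain ⟨u₁, v₁, h₁, hv₁, hu₁⟩ := exists_gradPair_of_totVarOn_union (μ := μ) hG hA hB
    (isCompact_closedBall o (R + 3)) (hAB ▸ subset_univ _) hf (hne A) (hne B) hδ0
  obtain ⟨u, v, huv, hv, hu⟩ := h₁.exists_glue_closedBall (μ := μ) h₂ hf o R
  refine ⟨u, v, huv, hv.trans ?_, hu.trans ?_⟩
  · calc _ ≤ (totVarOn μ f A + totVarOn μ f B + δ + δ) + δ := by gcongr
      _ = totVarOn μ f A + totVarOn μ f B + 3 * δ := by ring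
      _ ≤ totVarOn μ f A + totVarOn μ f B + ε := by gcongr
  · calc _ ≤ δ + δ := add_le_add hu₁ (le_add_self.trans htail)
      _ ≤ 3 * δ := by rw [← two_mul]; gcongr; norm_num
      _ ≤ ε := hδε

end GlobalApproximation

section StrictApproximation

theorem limsup_le_of_add_le_of_le_liminf {a b e : ℕ → ℝ≥0∞} {c d : ℝ≥0∞} (hc : c ≠ ⊤)
    (he : Tendsto e atTop (𝓝 0)) (hab : ∀ i, a i + b i ≤ d + c + e i)
    (hb : c ≤ liminf b atTop) : limsup a atTop ≤ d := by
  have hle (i : ℕ) : a i ≤ d + e i + (c - b i) := by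
    refine (ENNReal.add_le_add_iff_right hc).1 ?_
    calc a i + c ≤ a i + (b i + (c - b i)) := by gcongr; exact le_add_tsub
      _ = a i + b i + (c - b i) := (add_assoc _ _ _).symm
      _ ≤ d + c + e i + (c - b i) := add_le_add_left (hab i) _
      _ = d + e i + (c - b i) + c := by ring
  have hdeficit : Tendsto (fun i ↦ c - b i) atTop (𝓝 0) := by
    refine ENNReal.tendsto_nhds_zero.2 fun ε hε ↦ ?_
    rcases eq_or_ne c 0 with rfl | hc0
    · exact .of_forall fun _ ↦ by simp
    · filter_upwards [eventually_lt_of_lt_liminf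
        ((ENNReal.sub_lt_self hc hc0 hε.ne').trans_le hb)] with i hi
      exact tsub_le_iff_tsub_le.1 hi.le
  have hlim : Tendsto (fun i ↦ d + e i + (c - b i)) atTop (𝓝 d) := by
    simpa using (he.const_add d).add hdeficit
  exact (limsup_le_limsup (.of_forall hle)).trans_eq hlim.limsup_eq

variable {X : Type u} [MetricSpace X] [MeasurableSpace X] {μ : Measure X} {f : X → ℝ}
  {fi vi : ℕ → X → ℝ}

theorem totVarOn_le_liminf_of_gradPair (h : ∀ i, GradPair (fi i) (vi i))
    (hlim : TendstoL1loc μ fi f univ) (U : Set X) :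
    totVarOn μ f U ≤ liminf (fun i ↦ ∫⁻ x in U, ENNReal.ofReal (vi i x) ∂μ) atTop :=
  (totVarOn_le_liminf (fun i ↦ (h i).locallyLipschitzOnSet U) (hlim.mono (subset_univ U))).trans <|
    liminf_le_liminf <| .of_forall fun i ↦ lintegral_mono fun x ↦
      ((h i).ptLip x).lipConst_le ((h i).grad_nonneg x)

variable [BorelSpace X] [ProperSpace X] [IsLocallyFiniteMeasure μ] {Cd : ℝ≥0} {CP : ℝ}
  {A B : Set X}

/-- Truncation reduces the claim to bounded functions, since it decreases the variation. -/
theorem IsBV.exists_gradPair (hf : IsBV μ f) (hG : IsGeodesic X) (hP : SupportsPoincare μ CP)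
    (h : IsDoublingWith μ Cd) (hA : IsOpen A) (hB : IsOpen B) (hAB : A ∪ B = univ)
    {ε : ℝ≥0∞} (hε : ε ≠ 0) (o : X) (R : ℝ) :
    ∃ u v : X → ℝ, GradPair u v ∧
      ∫⁻ x, ENNReal.ofReal (v x) ∂μ ≤ totVarOn μ f A + totVarOn μ f B + ε ∧
      ∫⁻ x in closedBall o R, ENNReal.ofReal |u x - f x| ∂μ ≤ ε := by
  have hε2 : ε / 2 ≠ 0 := by simpa using hε
  obtain ⟨g, hgm, hfg⟩ := hf.1.aestronglyMeasurable.aemeasurable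
  have hfint : IntegrableOn f (closedBall o R) μ :=
    hf.1.integrableOn_isCompact (isCompact_closedBall o R)
  obtain ⟨n, hn⟩ := ((tendsto_lintegral_symmClamp_sub hfint).eventually_lt_const
    (pos_iff_ne_zero.2 hε2)).exists
  have hclamp : symmClamp n ∘ g =ᵐ[μ] symmClamp n ∘ f := hfg.symm.fun_comp (symmClamp n)
  have hle (W : Set X) : totVarOn μ (symmClamp n ∘ g) W ≤ totVarOn μ f W :=
    (totVarOn_congr_ae hclamp W).trans_le (totVarOn_comp_le (lipschitzWith_symmClamp n) f W)
  have hcm : Measurable (symmClamp n ∘ g) :=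
    (lipschitzWith_symmClamp n).continuous.measurable.comp hgm
  obtain ⟨u, v, huv, hv, hu⟩ := exists_gradPair_lintegral_le_of_bounded hG hP h hA hB hAB hcm
    (fun x ↦ abs_symmClamp_le n.cast_nonneg (g x)) ((hle univ).trans_lt hf.2) hε2 o
  refine ⟨u, v, huv, hv.trans ?_, ?_⟩
  · exact add_le_add (add_le_add (hle A) (hle B)) ENNReal.half_le_self
  · calc ∫⁻ x in closedBall o R, ENNReal.ofReal |u x - f x| ∂μ
        ≤ (∫⁻ x in closedBall o R, ENNReal.ofReal |u x - symmClamp n (g x)| ∂μ) +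
            ∫⁻ x in closedBall o R, ENNReal.ofReal |symmClamp n (g x) - f x| ∂μ :=
          lintegral_ofReal_abs_sub_le_add huv.continuous_fun.measurable.aemeasurable
            hcm.aemeasurable f
      _ ≤ ε / 2 + ε / 2 := by
          refine add_le_add ((setLIntegral_le_lintegral _ _).trans hu)
            ((lintegral_congr_ae ?_).trans_le hn.le)
          filter_upwards [ae_restrict_of_ae hfg] with x hx
          rw [hx]
      _ = ε := ENNReal.add_halves ε

theorem IsBV.exists_seq_gradPair [Nonempty X] (hf : IsBV μ f) (hG : IsGeodesic X)
    (hP : SupportsPoincare μ CP) (h : IsDoublingWith μ Cd) (hA : IsOpen A) (hB : IsOpen B)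
    (hAB : A ∪ B = univ) :
    ∃ fi vi : ℕ → X → ℝ, (∀ i, GradPair (fi i) (vi i)) ∧ TendstoL1loc μ fi f univ ∧
      ∀ i, ∫⁻ x, ENNReal.ofReal (vi i x) ∂μ ≤
        totVarOn μ f A + totVarOn μ f B + (i : ℝ≥0∞)⁻¹ := by
  obtain ⟨o⟩ := ‹Nonempty X›
  choose fi vi hGP hv hu using fun i : ℕ ↦
    hf.exists_gradPair hG hP h hA hB hAB (ENNReal.inv_ne_zero.2 (ENNReal.natCast_ne_top i)) o i
  refine ⟨fi, vi, hGP, fun K _ hK _ ↦ ?_, hv⟩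
  obtain ⟨R, hR⟩ := hK.subset_closedBall o
  refine tendsto_of_tendsto_of_tendsto_of_le_of_le' tendsto_const_nhds
    ENNReal.tendsto_inv_nat_nhds_zero (.of_forall fun _ ↦ zero_le) ?_
  filter_upwards [tendsto_natCast_atTop_atTop.eventually_ge_atTop R] with i hi
  exact (lintegral_mono_set (hR.trans (closedBall_subset_closedBall hi))).trans (hu i)

theorem IsBV.totVarOn_univ_le_add [Nonempty X] (hf : IsBV μ f) (hG : IsGeodesic X)
    (hP : SupportsPoincare μ CP) (h : IsDoublingWith μ Cd) (hA : IsOpen A) (hB : IsOpen B)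
    (hAB : A ∪ B = univ) : totVarOn μ f univ ≤ totVarOn μ f A + totVarOn μ f B := by
  obtain ⟨fi, vi, hGP, hlim, hv⟩ := hf.exists_seq_gradPair hG hP h hA hB hAB
  have hbound : Tendsto (fun i : ℕ ↦ totVarOn μ f A + totVarOn μ f B + (i : ℝ≥0∞)⁻¹) atTop
      (𝓝 (totVarOn μ f A + totVarOn μ f B)) := by
    simpa using ENNReal.tendsto_inv_nat_nhds_zero.const_add (totVarOn μ f A + totVarOn μ f B)
  refine (totVarOn_le_liminf_of_gradPair hGP hlim univ).trans ?_
  simp only [setLIntegral_univ]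
  exact (liminf_le_liminf (.of_forall hv)).trans_eq hbound.liminf_eq

/-- Convergence of the total masses and the lower bound on the open set `Fᶜ` leave at most
`totVarOn μ f W` of mass on the closed set `F ⊆ W`. -/
theorem IsBV.limsup_setLIntegral_le_totVarSet [Nonempty X] (hf : IsBV μ f) (hG : IsGeodesic X)
    (hP : SupportsPoincare μ CP) (h : IsDoublingWith μ Cd) (hGP : ∀ i, GradPair (fi i) (vi i))
    (hlim : TendstoL1loc μ fi f univ) {e : ℕ → ℝ≥0∞} (he : Tendsto e atTop (𝓝 0))
    (hv : ∀ i, ∫⁻ x, ENNReal.ofReal (vi i x) ∂μ ≤ totVarOn μ f univ + e i) {F : Set X}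
    (hF : IsClosed F) :
    limsup (fun i ↦ ∫⁻ x in F, ENNReal.ofReal (vi i x) ∂μ) atTop ≤ totVarSet μ f F := by
  refine le_iInf fun W ↦ le_iInf fun hW ↦ le_iInf fun hFW ↦ ?_
  have hcover : W ∪ Fᶜ = univ := eq_univ_of_forall fun x ↦ (em (x ∈ F)).imp (@hFW x) id
  refine limsup_le_of_add_le_of_le_liminf
    ((totVarOn_mono μ f (subset_univ _)).trans_lt hf.2).ne he (fun i ↦ ?_)
    (totVarOn_le_liminf_of_gradPair hGP hlim Fᶜ)
  rw [lintegral_add_compl _ hF.measurableSet]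
  exact (hv i).trans (add_le_add_left
    (hf.totVarOn_univ_le_add hG hP h hW hF.isOpen_compl hcover) _)

end StrictApproximation

theorem statement14 {X : Type u} [MetricSpace X] [MeasurableSpace X] [BorelSpace X]
    (μ : Measure X) (Cd : ℝ≥0) (CP : ℝ) (hCd : 1 ≤ Cd) (hCP : 0 < CP)
    (hX : GoodSpace X μ Cd CP)
    (f : X → ℝ) (hf : IsBV μ f) :
    ∃ (fi : ℕ → X → ℝ) (vi : ℕ → X → ℝ),
      (∀ i, ∃ L : ℝ≥0, LipschitzWith L (fi i)) ∧
      (∀ i, ∃ L : ℝ≥0, LipschitzWith L (vi i)) ∧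
      (∀ i x, 0 ≤ vi i x) ∧
      (∀ i, ∃ M : ℝ, ∀ x, vi i x ≤ M) ∧
      (∀ i, IsUpperGradientOf (vi i) (fi i)) ∧
      TendstoL1loc μ fi f Set.univ ∧
      (∀ U : Set X, IsOpen U →
        totVarOn μ f U ≤
          Filter.liminf (fun i => ∫⁻ x in U, ENNReal.ofReal (vi i x) ∂μ) atTop) ∧
      (∀ F : Set X, IsClosed F →
        Filter.limsup (fun i => ∫⁻ x in F, ENNReal.ofReal (vi i x) ∂μ) atTop ≤
          totVarSet μ f F) := by
  obtain ⟨_, _, hG, hD, hP⟩ := hX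
  have := hD.properSpace
  have := hD.isLocallyFiniteMeasure
  obtain ⟨fi, vi, hGP, hlim, hv⟩ :=
    hf.exists_seq_gradPair hG hP hD isOpen_univ isOpen_empty (union_empty _)
  simp only [totVarOn_empty, add_zero] at hv
  refine ⟨fi, vi, fun i ↦ (hGP i).bddLipschitz_fun.lipschitz,
    fun i ↦ (hGP i).bddLipschitz_grad.lipschitz, fun i ↦ (hGP i).grad_nonneg, fun i ↦ ?_,
    fun i ↦ (hGP i).isUpperGradientOf, hlim,
    fun U _ ↦ totVarOn_le_liminf_of_gradPair hGP hlim U,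
    fun F hF ↦ hf.limsup_setLIntegral_le_totVarSet hG hP hD hGP hlim
      ENNReal.tendsto_inv_nat_nhds_zero hv hF⟩
  obtain ⟨M, hM⟩ := (hGP i).bddLipschitz_grad.bdd
  exact ⟨M, fun x ↦ (abs_le.1 (hM x)).2⟩

end
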